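/- Let E be a G-invariant Lebesgue-measurable subset of ℝ^d, a > 0, and Ω = ∪_{x⁰∈E} Γ_a^1(x⁰). Then there exists a nonnegative κ-harmonic function H on ℝ^{d+1}₊ such that: (i) H(σ(x),y) = H(x,y) for all σ ∈ G and (x,y) ∈ ℝ^{d+1}₊, and H(x,y) ≥ 2 for every (x,y) ∈ ℝ^{d+1}₊ ∩ ∂Ω; (ii) for almost every x ∈ E and every b > 0, H(t,y) → 0 as (t,y) ∈ Γ_b(x) tends to (x,0). -/

import Mathlib

/-!
Let `O` be the complement of `closure E`, an invariant open set, and let `p` be the classical Poisson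
integral of the indicator function of `O`. On functions invariant under the reflection group the Dunkl
Laplacian reduces to the differential operator `LK`, and `H` is built as a limit of invariant solutions
of `LK u = 0` whose boundary values on large balls inside the half-space are a multiple `C p`.

*Solving the Dirichlet problem.* An invariant polynomial on `ℝ^d × ℝ` has a Fischer decomposition into
terms `|z|^{2j} h` with `h` harmonic (`dec_of_hpoly`), so on a sphere centred on the vertical axis it
agrees with an invariant harmonic polynomial (`dirichlet`). Stone–Weierstrass and averaging over the
group extend this, up to an error `ε`, to continuous invariant data (`approx_dirichlet`).

*Comparison.* If a function touches an invariant harmonic polynomial from below, it is a supersolution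
there, also on the reflecting hyperplanes, where `2 ∂_α u / ⟨α, x⟩` is read as `∂_α² u` (`touch`).
This gives the maximum principle and comparison with two explicit barriers. The lower one is
`e^{-μy} (1 - |x - w|²/s²)_+^{d+2}`; since it is dominated by a multiple of `p` when `ball w s ⊆ O`, the
solutions are at least `2 - ε` at `(w, r)` as soon as `ball w (a r) ⊆ O` (`lower_bound`). The upper one is
`2 C p - (C/D) p² + K (|x - x₀|² + A y (1 - y))` near a regular point `x₀`; the term `-(C/D) p²` absorbs
the first-order part of `LK p`, and the solutions are bounded by `2 C p` plus terms that vanish at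
`(x₀, 0)` (`upper_bound`).

*Passing to the limit.* Homogeneous invariant harmonic polynomials of different degrees are orthogonal
in a weighted `L²` space (`orthogonal`), and a Markov inequality bounds their supremum by the `L²` norm
with a loss polynomial in the degree (`sup_le_l2`). Hence the derivatives of bounded invariant harmonic
polynomials are bounded in the interior (`interior_est`), and limits along an ultrafilter are
`κ`-harmonic (`limit_harm`).

*Conclusion.* Adding `2y` gives `H ≥ 2` on the part `y = 1` of `∂Ω`; at the other boundary points
`(x, y)` of `Ω` in the half-space `ball x (a y) ⊆ O`, so the lower bound applies. Almost every point of `E` is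
regular and outside `O`, and there `p` tends to zero nontangentially by Lebesgue's density theorem
(`pint_fatou`); the upper bound then gives `H → 0`.
-/

open MeasureTheory Filter Metric
open scoped RealInnerProductSpace Topology

noncomputable section

/-- Euclidean space `ℝ^d`. -/
abbrev Ed (d : ℕ) : Type := EuclideanSpace ℝ (Fin d)

/-- The reflection `σ_α(x) = x - ⟨α,x⟩α` (for roots normalized by `⟨α,α⟩ = 2`). -/
def reflAt {d : ℕ} (α x : Ed d) : Ed d := x - ⟪α, x⟫ • α

/-- The reflection group `G` generated by the reflections `σ_α`, `α ∈ R`, realized as the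
submonoid of self-maps of `ℝ^d` generated by the reflections (each reflection is an
involution, so this is in fact a group of transformations). -/
def dunklGroup {d : ℕ} (R : Finset (Ed d)) : Submonoid (Function.End (Ed d)) :=
  Submonoid.closure {f : Function.End (Ed d) | ∃ α ∈ R, f = reflAt α}

/-- A (normalized) root system `R` with positive subsystem `Rp` and
`G`-invariant nonnegative multiplicity function `κ`. -/
structure IsRootSystem {d : ℕ} (R Rp : Finset (Ed d)) (κ : Ed d → ℝ) : Prop where
  nonzero : ∀ α ∈ R, α ≠ (0 : Ed d)
  norm_two : ∀ α ∈ R, ⟪α, α⟫ = (2 : ℝ)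
  refl_mem : ∀ α ∈ R, ∀ β ∈ R, reflAt α β ∈ R
  pos_sub : Rp ⊆ R
  pos_split : ∀ α ∈ R, (α ∈ Rp ∧ ¬(-α ∈ Rp)) ∨ (¬(α ∈ Rp) ∧ -α ∈ Rp)
  kappa_nonneg : ∀ α ∈ R, 0 ≤ κ α
  kappa_inv : ∀ σ ∈ dunklGroup R, ∀ α ∈ R, κ (σ α) = κ α

/-- `x ∈ ℝ^d` is regular if `⟨α,x⟩ ≠ 0` for all roots `α ∈ R`. -/
def isRegular {d : ℕ} (R : Finset (Ed d)) (x : Ed d) : Prop :=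
  ∀ α ∈ R, ⟪α, x⟫ ≠ (0 : ℝ)

/-- Second directional derivative of `u` at `p` in direction `v`. -/
def pd2 {d : ℕ} (u : Ed d × ℝ → ℝ) (p v : Ed d × ℝ) : ℝ :=
  fderiv ℝ (fun q => fderiv ℝ u q v) p v

/-- The Euclidean Laplacian on `ℝ^{d+1} = ℝ^d × ℝ`. -/
def lapE {d : ℕ} (u : Ed d × ℝ → ℝ) (p : Ed d × ℝ) : ℝ :=
  (∑ i : Fin d, pd2 u p (EuclideanSpace.single i 1, 0)) + pd2 u p (0, 1)

/-- The Dunkl Laplacian `Δ_κ` on `ℝ^{d+1}` (the Dunkl operators act in the `x`-variables). -/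
def dunklLap {d : ℕ} (Rp : Finset (Ed d)) (κ : Ed d → ℝ) (u : Ed d × ℝ → ℝ)
    (p : Ed d × ℝ) : ℝ :=
  lapE u p + 2 * ∑ α ∈ Rp, κ α *
    (fderiv ℝ u p (α, 0) / ⟪α, p.1⟫ - (u p - u (reflAt α p.1, p.2)) / ⟪α, p.1⟫ ^ 2)

/-- The open upper half-space `ℝ^{d+1}₊`. -/
def upperHS (d : ℕ) : Set (Ed d × ℝ) := {p | 0 < p.2}

/-- `u` is `κ`-harmonic on `Ω`: `u` is `C²` on `Ω` and `Δ_κ u = 0` at every point of `Ω`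
whose `x`-coordinate is regular. -/
def KHarmonicOn {d : ℕ} (R Rp : Finset (Ed d)) (κ : Ed d → ℝ) (u : Ed d × ℝ → ℝ)
    (Ω : Set (Ed d × ℝ)) : Prop :=
  ContDiffOn ℝ 2 u Ω ∧ ∀ p ∈ Ω, isRegular R p.1 → dunklLap Rp κ u p = 0

/-- The cone `Γ_a(x)` of aperture `a` with vertex `(x,0)`. -/
def cone {d : ℕ} (a : ℝ) (x : Ed d) : Set (Ed d × ℝ) :=
  {p | 0 < p.2 ∧ dist p.1 x < a * p.2}

/-- The truncated cone `Γ_a^h(x)`. -/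
def coneT {d : ℕ} (a h : ℝ) (x : Ed d) : Set (Ed d × ℝ) :=
  {p | 0 < p.2 ∧ p.2 < h ∧ dist p.1 x < a * p.2}

/-- `u` has a finite non-tangential limit at `(x,0)`. -/
def HasNTLimit {d : ℕ} (u : Ed d × ℝ → ℝ) (x : Ed d) : Prop :=
  ∀ a > (0 : ℝ), ∃ L : ℝ, Tendsto u (𝓝[cone a x] (x, (0 : ℝ))) (𝓝 L)

/-- `u` is non-tangentially bounded at `(x,0)`. -/
def NTBounded {d : ℕ} (u : Ed d × ℝ → ℝ) (x : Ed d) : Prop :=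
  ∃ a > (0 : ℝ), ∃ h > (0 : ℝ), ∃ M : ℝ, ∀ p ∈ coneT a h x, |u p| ≤ M

/-- A subset of `ℝ^d` is `G`-invariant. -/
def GInvSet {d : ℕ} (R : Finset (Ed d)) (E : Set (Ed d)) : Prop :=
  ∀ σ ∈ dunklGroup R, σ '' E = E

section Aux

/-! ### Homogeneous polynomials as functions -/

/-- `HPoly n f`: the function `f` is a homogeneous polynomial of degree `n`, i.e. a finite sum of
products of `n` continuous linear forms (and constants). -/
inductive HPoly {V : Type*} [NormedAddCommGroup V] [NormedSpace ℝ V] : ℕ → (V → ℝ) → Prop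
  | const (c : ℝ) : HPoly 0 (fun _ => c)
  | mul {n : ℕ} {f : V → ℝ} (l : V →L[ℝ] ℝ) (hf : HPoly n f) : HPoly (n + 1) (fun z => l z * f z)
  | add {n : ℕ} {f g : V → ℝ} (hf : HPoly n f) (hg : HPoly n g) : HPoly n (fun z => f z + g z)

namespace HPoly

variable {V W : Type*} [NormedAddCommGroup V] [NormedSpace ℝ V]
  [NormedAddCommGroup W] [NormedSpace ℝ W]

theorem zero (n : ℕ) : HPoly n (fun _ : V => (0 : ℝ)) := by
  induction n with
  | zero => exact .const 0
  | succ n ih => simpa using HPoly.mul (0 : V →L[ℝ] ℝ) ih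

theorem congr {n : ℕ} {f g : V → ℝ} (hf : HPoly n f) (h : ∀ z, g z = f z) : HPoly n g := by
  have : g = f := funext h
  rw [this]; exact hf

theorem smul {n : ℕ} {f : V → ℝ} (hf : HPoly n f) (c : ℝ) : HPoly n (fun z => c * f z) := by
  induction hf with
  | const c' => exact .const _
  | mul l _ ih => exact (HPoly.mul l ih).congr fun z => by ring
  | add _ _ ih1 ih2 => exact (ih1.add ih2).congr fun z => by ring

theorem neg {n : ℕ} {f : V → ℝ} (hf : HPoly n f) : HPoly n (fun z => - f z) :=
  (hf.smul (-1)).congr fun z => by ring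

theorem sub {n : ℕ} {f g : V → ℝ} (hf : HPoly n f) (hg : HPoly n g) :
    HPoly n (fun z => f z - g z) :=
  (hf.add hg.neg).congr fun z => by ring

theorem sum {ι : Type*} (s : Finset ι) {n : ℕ} {f : ι → V → ℝ} (hf : ∀ i ∈ s, HPoly n (f i)) :
    HPoly n (fun z => ∑ i ∈ s, f i z) := by
  classical
  induction s using Finset.induction_on with
  | empty => simpa using zero n
  | insert a s ha ih =>
    have h1 := hf a (Finset.mem_insert_self _ _)
    have h2 := ih fun i hi => hf i (Finset.mem_insert_of_mem hi)
    exact (h1.add h2).congr fun z => by rw [Finset.sum_insert ha]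

theorem linear (l : V →L[ℝ] ℝ) : HPoly 1 (fun z => l z) :=
  (HPoly.mul l (.const 1)).congr fun z => by simp

theorem hmul {m n : ℕ} {f g : V → ℝ} (hf : HPoly m f) (hg : HPoly n g) :
    HPoly (m + n) (fun z => f z * g z) := by
  induction hf with
  | const c => simpa using hg.smul c
  | @mul k f l _ ih =>
    have := HPoly.mul l ih
    rw [show k + 1 + n = k + n + 1 by ring]
    exact this.congr fun z => by ring
  | add _ _ ih1 ih2 => exact (ih1.add ih2).congr fun z => by ring

theorem comp {n : ℕ} {f : W → ℝ} (hf : HPoly n f) (A : V →L[ℝ] W) :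
    HPoly n (fun z => f (A z)) := by
  induction hf with
  | const c => exact .const c
  | mul l _ ih => exact HPoly.mul (l.comp A) ih
  | add _ _ ih1 ih2 => exact ih1.add ih2

theorem contDiff {n : ℕ} {f : V → ℝ} (hf : HPoly n f) {k : WithTop ℕ∞} : ContDiff ℝ k f := by
  induction hf with
  | const c => exact contDiff_const
  | mul l _ ih => exact l.contDiff.mul ih
  | add _ _ ih1 ih2 => exact ih1.add ih2

theorem hom {n : ℕ} {f : V → ℝ} (hf : HPoly n f) (t : ℝ) (z : V) : f (t • z) = t ^ n * f z := by
  induction hf with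
  | const c => simp
  | mul l _ ih => simp only [map_smul, smul_eq_mul, ih]; ring
  | add _ _ ih1 ih2 => simp only [ih1, ih2]; ring

theorem eq_const {f : V → ℝ} (hf : HPoly 0 f) (z : V) : f z = f 0 := by
  have := hf.hom 0 z
  simpa using this.symm

theorem differentiable {n : ℕ} {f : V → ℝ} (hf : HPoly n f) : Differentiable ℝ f :=
  (hf.contDiff (k := 1)).differentiable (by norm_num)

theorem deriv_aux {n : ℕ} {f : V → ℝ} (hf : HPoly n f) (v : V) :
    ∃ g, HPoly (n - 1) g ∧ (n = 0 → g = fun _ => 0) ∧ ∀ z, fderiv ℝ f z v = g z := by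
  induction hf with
  | const c => exact ⟨fun _ => 0, zero _, fun _ => rfl, fun z => by simp⟩
  | @mul k f l hf ih =>
    obtain ⟨g, hg, hg0, hgz⟩ := ih
    refine ⟨fun z => l v * f z + l z * g z, ?_, by simp, fun z => ?_⟩
    · rcases k with _ | k
      · rw [hg0 rfl]; simpa using hf.smul (l v)
      · exact (hf.smul (l v)).add (HPoly.mul l hg)
    · rw [fderiv_fun_mul l.differentiableAt (hf.differentiable z)]
      simp [hgz]; ring
  | add hf1 hf2 ih1 ih2 =>
    obtain ⟨g, hg, hg0, hgz⟩ := ih1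
    obtain ⟨g', hg', hg0', hgz'⟩ := ih2
    refine ⟨_, hg.add hg', fun h => by simp [hg0 h, hg0' h], fun z => ?_⟩
    rw [fderiv_fun_add (hf1.differentiable z) (hf2.differentiable z)]
    simp [hgz, hgz']

theorem fderiv_succ {n : ℕ} {f : V → ℝ} (hf : HPoly (n + 1) f) (v : V) :
    HPoly n (fun z => fderiv ℝ f z v) := by
  obtain ⟨g, hg, -, h⟩ := hf.deriv_aux v
  exact hg.congr h

theorem fderiv_zero {f : V → ℝ} (hf : HPoly 0 f) (v z : V) : fderiv ℝ f z v = 0 := by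
  obtain ⟨g, hg, h0, h⟩ := hf.deriv_aux v
  rw [h, h0 rfl]

/-- Euler's identity. -/
theorem euler {n : ℕ} {f : V → ℝ} (hf : HPoly n f) (z : V) : fderiv ℝ f z z = n * f z := by
  induction hf with
  | const c => simp
  | mul l hf ih =>
    rw [fderiv_fun_mul l.differentiableAt (hf.differentiable z)]
    simp [ih]; ring
  | add hf1 hf2 ih1 ih2 =>
    rw [fderiv_fun_add (hf1.differentiable z) (hf2.differentiable z)]
    simp [ih1, ih2]; ring

/-- Division of `f - f ∘ σ` by the linear form `s` when `σ` is a reflection-like linear map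
`z - σ z = s z • a`. -/
theorem div_refl {n : ℕ} {f : V → ℝ} (hf : HPoly n f) (S : V →L[ℝ] V) (s : V →L[ℝ] ℝ) (a : V)
    (hS : ∀ z, z - S z = s z • a) :
    ∃ q, HPoly (n - 1) q ∧ (n = 0 → q = fun _ => 0) ∧ ∀ z, f z - f (S z) = s z * q z := by
  induction hf with
  | const c => exact ⟨fun _ => 0, zero _, fun _ => rfl, fun z => by simp⟩
  | @mul k f l hf ih =>
    obtain ⟨g, hg, hg0, hgz⟩ := ih
    refine ⟨fun z => l a * f z + l (S z) * g z, ?_, by simp, fun z => ?_⟩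
    · rcases k with _ | k
      · rw [hg0 rfl]; simpa using hf.smul (l a)
      · exact (hf.smul (l a)).add (HPoly.mul (l.comp S) hg)
    · have h1 : l z - l (S z) = s z * l a := by
        rw [← map_sub, hS]; simp
      have : f (S z) = f z - s z * g z := by linarith [hgz z]
      beta_reduce
      rw [this]
      linear_combination (f z) * h1
  | add hf1 hf2 ih1 ih2 =>
    obtain ⟨g, hg, hg0, hgz⟩ := ih1
    obtain ⟨g', hg', hg0', hgz'⟩ := ih2
    refine ⟨_, hg.add hg', fun h => by simp [hg0 h, hg0' h], fun z => ?_⟩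
    linear_combination hgz z + hgz' z

theorem line {n : ℕ} {f : V → ℝ} (hf : HPoly n f) (z v : V) :
    ∃ P : Polynomial ℝ, P.natDegree ≤ n ∧ ∀ t : ℝ, f (z + t • v) = P.eval t := by
  induction hf with
  | const c => exact ⟨Polynomial.C c, by simp, fun t => by simp⟩
  | mul l hf ih =>
    obtain ⟨P, hP, hPt⟩ := ih
    refine ⟨(Polynomial.C (l z) + Polynomial.C (l v) * Polynomial.X) * P, ?_, fun t => ?_⟩
    · refine Polynomial.natDegree_mul_le.trans ?_
      have : (Polynomial.C (l z) + Polynomial.C (l v) * Polynomial.X).natDegree ≤ 1 := by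
        compute_degree
      omega
    · simp [hPt]; left; ring
  | add hf1 hf2 ih1 ih2 =>
    obtain ⟨P, hP, hPt⟩ := ih1
    obtain ⟨Q, hQ, hQt⟩ := ih2
    exact ⟨P + Q, (Polynomial.natDegree_add_le _ _).trans (max_le hP hQ), fun t => by
      simp [hPt, hQt]⟩

end HPoly

/-- `u` is a polynomial function, presented as a finite sum of homogeneous components. -/
def PolySum {V : Type*} [NormedAddCommGroup V] [NormedSpace ℝ V] (u : V → ℝ) : Prop :=
  ∃ (N : ℕ) (p : ℕ → V → ℝ), (∀ n, HPoly n (p n)) ∧ ∀ z, u z = ∑ n ∈ Finset.range N, p n z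

namespace PolySum

variable {V W : Type*} [NormedAddCommGroup V] [NormedSpace ℝ V]
  [NormedAddCommGroup W] [NormedSpace ℝ W]

theorem congr {f g : V → ℝ} (hf : PolySum f) (h : ∀ z, g z = f z) : PolySum g := by
  have : g = f := funext h
  rw [this]; exact hf

theorem of_hpoly {n : ℕ} {f : V → ℝ} (hf : HPoly n f) : PolySum f := by
  classical
  refine ⟨n + 1, fun k => if k = n then f else fun _ => 0, fun k => ?_, fun z => ?_⟩
  · by_cases h : k = n
    · subst h; simpa using hf
    · simpa [h] using HPoly.zero k
  · rw [Finset.sum_eq_single n]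
    · simp
    · intro b _ hb; simp [hb]
    · simp

theorem const (c : ℝ) : PolySum (fun _ : V => c) := of_hpoly (.const c)

theorem linear (l : V →L[ℝ] ℝ) : PolySum (fun z => l z) := of_hpoly (HPoly.linear l)

theorem exists_large {u : V → ℝ} (hu : PolySum u) :
    ∃ N : ℕ, ∃ p : ℕ → V → ℝ, (∀ n, HPoly n (p n)) ∧
      ∀ M, N ≤ M → ∀ z, u z = ∑ n ∈ Finset.range M, p n z := by
  classical
  obtain ⟨N, p, hp, h⟩ := hu
  refine ⟨N, fun n => if n < N then p n else fun _ => 0, fun n => ?_, fun M hM z => ?_⟩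
  · by_cases hn : n < N
    · simpa [hn] using hp n
    · simpa [hn] using HPoly.zero n
  · rw [h, ← Finset.sum_subset (Finset.range_mono hM)]
    · refine Finset.sum_congr rfl fun n hn => ?_
      simp [Finset.mem_range.1 hn]
    · intro n _ hn
      have : ¬ n < N := by simpa using hn
      simp [this]

theorem add {f g : V → ℝ} (hf : PolySum f) (hg : PolySum g) : PolySum (fun z => f z + g z) := by
  obtain ⟨N, p, hp, h⟩ := hf.exists_large
  obtain ⟨N', p', hp', h'⟩ := hg.exists_large
  refine ⟨max N N', fun n z => p n z + p' n z, fun n => (hp n).add (hp' n), fun z => ?_⟩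
  beta_reduce
  rw [h _ (le_max_left N N'), h' _ (le_max_right N N'), Finset.sum_add_distrib]

theorem smul {f : V → ℝ} (hf : PolySum f) (c : ℝ) : PolySum (fun z => c * f z) := by
  obtain ⟨N, p, hp, h⟩ := hf
  exact ⟨N, fun n z => c * p n z, fun n => (hp n).smul c, fun z => by
    beta_reduce; rw [h, Finset.mul_sum]⟩

theorem sub {f g : V → ℝ} (hf : PolySum f) (hg : PolySum g) : PolySum (fun z => f z - g z) :=
  (hf.add (hg.smul (-1))).congr fun z => by ring

theorem sum {ι : Type*} (s : Finset ι) {f : ι → V → ℝ} (hf : ∀ i ∈ s, PolySum (f i)) :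
    PolySum (fun z => ∑ i ∈ s, f i z) := by
  classical
  induction s using Finset.induction_on with
  | empty => simpa using const 0
  | insert a s ha ih =>
    have h1 := hf a (Finset.mem_insert_self _ _)
    have h2 := ih fun i hi => hf i (Finset.mem_insert_of_mem hi)
    exact (h1.add h2).congr fun z => by rw [Finset.sum_insert ha]

theorem mul {f g : V → ℝ} (hf : PolySum f) (hg : PolySum g) : PolySum (fun z => f z * g z) := by
  obtain ⟨N, p, hp, h⟩ := hf
  obtain ⟨N', p', hp', h'⟩ := hg
  refine (sum (Finset.range N) (f := fun i z => ∑ j ∈ Finset.range N', p i z * p' j z)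
    fun i _ => sum _ fun j _ => of_hpoly ((hp i).hmul (hp' j))).congr fun z => ?_
  rw [h, h', Finset.sum_mul_sum]

theorem comp {f : W → ℝ} (hf : PolySum f) (A : V →L[ℝ] W) : PolySum (fun z => f (A z)) := by
  obtain ⟨N, p, hp, h⟩ := hf
  exact ⟨N, fun n z => p n (A z), fun n => (hp n).comp A, fun z => h _⟩

theorem translate {f : V → ℝ} (hf : PolySum f) (c : V) : PolySum (fun z => f (z + c)) := by
  have key : ∀ n (f : V → ℝ), HPoly n f → PolySum (fun z => f (z + c)) := by
    intro n f hf
    induction hf with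
    | const a => exact const a
    | mul l _ ih =>
      exact (((linear l).add (const (l c))).mul ih).congr fun z => by simp
    | add _ _ ih1 ih2 => exact ih1.add ih2
  obtain ⟨N, p, hp, h⟩ := hf
  exact (sum (Finset.range N) fun n _ => key n _ (hp n)).congr fun z => h _

theorem contDiff {f : V → ℝ} (hf : PolySum f) {k : WithTop ℕ∞} : ContDiff ℝ k f := by
  obtain ⟨N, p, hp, h⟩ := hf
  have : f = fun z => ∑ n ∈ Finset.range N, p n z := funext h
  rw [this]
  exact ContDiff.sum fun n _ => (hp n).contDiff

theorem fderiv_apply {f : V → ℝ} (hf : PolySum f) (v : V) : PolySum (fun z => fderiv ℝ f z v) := by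
  obtain ⟨N, p, hp, h⟩ := hf
  have hfe : f = fun z => ∑ n ∈ Finset.range N, p n z := funext h
  refine (sum (Finset.range N) (f := fun n z => fderiv ℝ (p n) z v) fun n _ => ?_).congr
    fun z => ?_
  · obtain ⟨g, hg, -, hz⟩ := (hp n).deriv_aux v
    exact (of_hpoly hg).congr hz
  · rw [hfe, fderiv_fun_sum fun n _ => (hp n).differentiable z]
    simp

end PolySum

/-! ### Coordinates, reflections and the invariant part of the Dunkl Laplacian -/

/-- The standard basis of `ℝ^d × ℝ`; `none` is the vertical direction. -/
def ebas (d : ℕ) : Option (Fin d) → Ed d × ℝ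
  | none => (0, 1)
  | some i => (EuclideanSpace.single i 1, 0)

/-- The coordinate functionals dual to `ebas`. -/
def crd (d : ℕ) : Option (Fin d) → (Ed d × ℝ →L[ℝ] ℝ)
  | none => ContinuousLinearMap.snd ℝ (Ed d) ℝ
  | some i => (EuclideanSpace.proj i : Ed d →L[ℝ] ℝ).comp (ContinuousLinearMap.fst ℝ (Ed d) ℝ)

/-- The squared Euclidean norm on `ℝ^d × ℝ` (whose Mathlib norm is the sup norm). -/
def nsq {d : ℕ} (z : Ed d × ℝ) : ℝ := ‖z.1‖ ^ 2 + z.2 ^ 2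

/-- The reflection `σ_α` acting on the first factor of `ℝ^d × ℝ`. -/
def SV {d : ℕ} (α : Ed d) : Ed d × ℝ →L[ℝ] Ed d × ℝ :=
  ((ContinuousLinearMap.id ℝ (Ed d) - (innerSL ℝ α).smulRight α).comp
    (ContinuousLinearMap.fst ℝ (Ed d) ℝ)).prod (ContinuousLinearMap.snd ℝ (Ed d) ℝ)

/-- The linear form `(x, y) ↦ ⟨α, x⟩`. -/
def sL {d : ℕ} (α : Ed d) : Ed d × ℝ →L[ℝ] ℝ :=
  (innerSL ℝ α).comp (ContinuousLinearMap.fst ℝ (Ed d) ℝ)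

/-- Invariance under all reflections. -/
def GInv {d : ℕ} (R : Finset (Ed d)) (f : Ed d × ℝ → ℝ) : Prop :=
  ∀ α ∈ R, ∀ z, f (SV α z) = f z

/-- The differential part of the Dunkl Laplacian; it agrees with `dunklLap` on invariant
functions. -/
def LK {d : ℕ} (Rp : Finset (Ed d)) (κ : Ed d → ℝ) (f : Ed d × ℝ → ℝ) (p : Ed d × ℝ) : ℝ :=
  lapE f p + 2 * ∑ α ∈ Rp, κ α * (fderiv ℝ f p (α, 0) / ⟪α, p.1⟫)

section basics

variable {d : ℕ}

@[simp] theorem SV_apply (α : Ed d) (z : Ed d × ℝ) : SV α z = (reflAt α z.1, z.2) := by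
  simp [SV, reflAt]

@[simp] theorem sL_apply (α : Ed d) (z : Ed d × ℝ) : sL α z = ⟪α, z.1⟫ := by
  simp [sL]

theorem lapE_eq (f : Ed d × ℝ → ℝ) (p : Ed d × ℝ) : lapE f p = ∑ i, pd2 f p (ebas d i) := by
  rw [Fintype.sum_option, lapE, add_comm]; rfl

theorem sum_crd (z : Ed d × ℝ) : ∑ i, crd d i z • ebas d i = z := by
  rw [Fintype.sum_option]
  have h : ∑ i : Fin d, z.1 i • (EuclideanSpace.single i (1 : ℝ) : Ed d) = z.1 := by
    have := (EuclideanSpace.basisFun (Fin d) ℝ).sum_repr z.1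
    simpa using this
  ext1
  · simp only [Prod.fst_add, Prod.fst_sum]
    simpa [crd, ebas] using h
  · simp only [Prod.snd_add, Prod.snd_sum]
    simp [crd, ebas]

theorem nsq_eq (z : Ed d × ℝ) : nsq z = ∑ i, crd d i z ^ 2 := by
  rw [Fintype.sum_option, nsq, EuclideanSpace.norm_sq_eq]
  simp [crd, add_comm]

theorem nsq_nonneg (z : Ed d × ℝ) : 0 ≤ nsq z := by unfold nsq; positivity

theorem nsq_ebas (i : Option (Fin d)) : nsq (ebas d i) = 1 := by
  cases i <;> simp [nsq, ebas]

theorem crd_root (α : Ed d) (z : Ed d × ℝ) : ∑ i, crd d i (α, 0) * crd d i z = ⟪α, z.1⟫ := by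
  rw [Fintype.sum_option, PiLp.inner_apply]
  simp [crd, mul_comm]

theorem sum_crd_mul (v z : Ed d × ℝ) : ∑ i, crd d i v * crd d i z = ⟪v.1, z.1⟫ + v.2 * z.2 := by
  rw [Fintype.sum_option, PiLp.inner_apply]
  simp [crd, mul_comm, add_comm]

theorem hpoly_nsq : HPoly 2 (nsq : Ed d × ℝ → ℝ) := by
  refine (HPoly.sum Finset.univ fun i _ => HPoly.mul (crd d i) (HPoly.linear (crd d i))).congr
    fun z => ?_
  rw [nsq_eq]
  simp [sq]

theorem refl_invol {α : Ed d} (h : ⟪α, α⟫ = (2 : ℝ)) (x : Ed d) : reflAt α (reflAt α x) = x := by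
  simp only [reflAt, inner_sub_right, inner_smul_right, h]
  module

theorem refl_self {α : Ed d} (h : ⟪α, α⟫ = (2 : ℝ)) : reflAt α α = -α := by
  simp only [reflAt, h]; module

theorem inner_refl {α : Ed d} (h : ⟪α, α⟫ = (2 : ℝ)) (x y : Ed d) :
    ⟪reflAt α x, reflAt α y⟫ = ⟪x, y⟫ := by
  simp only [reflAt, inner_sub_right, inner_smul_right, inner_sub_left, inner_smul_left, h]
  simp only [real_inner_comm α x, conj_trivial]
  ring

theorem norm_refl {α : Ed d} (h : ⟪α, α⟫ = (2 : ℝ)) (x : Ed d) : ‖reflAt α x‖ = ‖x‖ := by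
  have := inner_refl h x x
  rw [real_inner_self_eq_norm_sq, real_inner_self_eq_norm_sq] at this
  exact (sq_eq_sq₀ (norm_nonneg _) (norm_nonneg _)).1 this

theorem inner_refl_comm {α : Ed d} (h : ⟪α, α⟫ = (2 : ℝ)) (x y : Ed d) :
    ⟪reflAt α x, y⟫ = ⟪x, reflAt α y⟫ := by
  rw [← inner_refl h, refl_invol h]

theorem nsq_SV {α : Ed d} (h : ⟪α, α⟫ = (2 : ℝ)) (z : Ed d × ℝ) : nsq (SV α z) = nsq z := by
  simp [nsq, norm_refl h]

theorem SV_invol {α : Ed d} (h : ⟪α, α⟫ = (2 : ℝ)) (z : Ed d × ℝ) : SV α (SV α z) = z := by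
  simp [refl_invol h]

theorem dunklLap_eq_LK {R Rp : Finset (Ed d)} {κ : Ed d → ℝ} (hsub : Rp ⊆ R) {f : Ed d × ℝ → ℝ}
    (hf : GInv R f) (p : Ed d × ℝ) : dunklLap Rp κ f p = LK Rp κ f p := by
  unfold dunklLap LK
  congr 2
  refine Finset.sum_congr rfl fun α hα => ?_
  have := hf α (hsub hα) p
  rw [SV_apply] at this
  rw [this]; simp

theorem pd2_eq {f : Ed d × ℝ → ℝ} {p : Ed d × ℝ} (hf : ContDiffAt ℝ 2 f p) (v : Ed d × ℝ) :
    pd2 f p v = fderiv ℝ (fderiv ℝ f) p v v := by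
  have h : DifferentiableAt ℝ (fderiv ℝ f) p :=
    (hf.fderiv_right (m := 1) (by norm_num)).differentiableAt (by norm_num)
  unfold pd2
  rw [fderiv_clm_apply h (differentiableAt_const v)]
  simp

theorem fderiv_SV {R : Finset (Ed d)} {f : Ed d × ℝ → ℝ} (hf : GInv R f) (hd : Differentiable ℝ f)
    {α : Ed d} (hα : α ∈ R) (h2 : ⟪α, α⟫ = (2 : ℝ)) (p w : Ed d × ℝ) :
    fderiv ℝ f (SV α p) w = fderiv ℝ f p (SV α w) := by
  have h : f = f ∘ SV α := funext fun z => (hf α hα z).symm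
  conv_rhs => rw [h]
  rw [fderiv_comp p (hd _) (SV α).differentiableAt, ContinuousLinearMap.fderiv,
    ContinuousLinearMap.comp_apply, SV_invol h2]

theorem pd2_SV {R : Finset (Ed d)} {f : Ed d × ℝ → ℝ} (hf : GInv R f) (hd : ContDiff ℝ 2 f)
    {α : Ed d} (hα : α ∈ R) (h2 : ⟪α, α⟫ = (2 : ℝ)) (p w : Ed d × ℝ) :
    pd2 f (SV α p) w = pd2 f p (SV α w) := by
  have hd1 : Differentiable ℝ f := hd.differentiable (by norm_num)
  have h : (fun q => fderiv ℝ f q (SV α w)) = (fun q => fderiv ℝ f q w) ∘ SV α :=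
    funext fun z => (fderiv_SV hf hd1 hα h2 z w).symm
  have hd2 : Differentiable ℝ (fun q => fderiv ℝ f q w) :=
    ((hd.fderiv_right (m := 1) (by norm_num)).differentiable (by norm_num)).clm_apply
      (differentiable_const w)
  unfold pd2
  rw [h, fderiv_comp p (hd2 _) (SV α).differentiableAt, ContinuousLinearMap.fderiv,
    ContinuousLinearMap.comp_apply, SV_invol h2]

theorem lapE_SV {R : Finset (Ed d)} {f : Ed d × ℝ → ℝ} (hf : GInv R f) (hd : ContDiff ℝ 2 f)
    {α : Ed d} (hα : α ∈ R) (h2 : ⟪α, α⟫ = (2 : ℝ)) (p : Ed d × ℝ) :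
    lapE f (SV α p) = lapE f p := by
  rw [lapE_eq, lapE_eq]
  simp_rw [pd2_SV hf hd hα h2 p, pd2_eq hd.contDiffAt]
  set B := fderiv ℝ (fderiv ℝ f) p
  set A : Ed d × ℝ := (α, 0)
  have hS : ∀ w, SV α w = w - ⟪α, w.1⟫ • A := by
    intro w; ext1 <;> simp [A, reflAt]
  have hc : ∀ i, ⟪α, (ebas d i).1⟫ = crd d i A := by
    intro i
    cases i <;> simp [ebas, crd, A, EuclideanSpace.inner_single_right]
  have hA : ∑ i, crd d i A • ebas d i = A := sum_crd A
  have hAA : ∑ i, crd d i A * crd d i A = 2 := by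
    rw [crd_root α A]; exact h2
  have e1 : ∑ i, crd d i A * B (ebas d i) A = B A A := by
    have := congrArg (fun w => B w A) hA.symm
    refine Eq.trans ?_ this.symm
    beta_reduce
    rw [map_sum, sum_apply]
    simp [-Fintype.sum_option]
  have e2 : ∑ i, crd d i A * B A (ebas d i) = B A A := by
    conv_rhs => rw [← hA]
    rw [map_sum, hA]
    simp [-Fintype.sum_option]
  have : ∀ i, B (SV α (ebas d i)) (SV α (ebas d i)) = B (ebas d i) (ebas d i)
      - crd d i A * B (ebas d i) A - crd d i A * B A (ebas d i)
      + crd d i A * crd d i A * B A A := by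
    intro i
    rw [hS, hc]
    simp
    ring
  simp_rw [this, Finset.sum_add_distrib, Finset.sum_sub_distrib, e1, e2, ← Finset.sum_mul, hAA]
  ring

end basics

section roots

variable {d : ℕ} {R Rp : Finset (Ed d)} {κ : Ed d → ℝ}

theorem IsRootSystem.two (h : IsRootSystem R Rp κ) {α : Ed d} (hα : α ∈ Rp) :
    ⟪α, α⟫ = (2 : ℝ) := h.norm_two α (h.pos_sub hα)

theorem IsRootSystem.refl_in (_h : IsRootSystem R Rp κ) {α : Ed d} (hα : α ∈ R) :
    (reflAt α : Function.End (Ed d)) ∈ dunklGroup R :=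
  Submonoid.subset_closure ⟨α, hα, rfl⟩

theorem IsRootSystem.neg_mem (h : IsRootSystem R Rp κ) {α : Ed d} (hα : α ∈ R) : -α ∈ R := by
  have := h.refl_mem α hα α hα
  rwa [refl_self (h.norm_two α hα)] at this

theorem IsRootSystem.kappa_refl (h : IsRootSystem R Rp κ) {α β : Ed d} (hα : α ∈ R) (hβ : β ∈ R) :
    κ (reflAt α β) = κ β := h.kappa_inv _ (h.refl_in hα) β hβ

theorem IsRootSystem.kappa_neg (h : IsRootSystem R Rp κ) {α : Ed d} (hα : α ∈ R) :
    κ (-α) = κ α := by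
  have := h.kappa_refl hα hα
  rwa [refl_self (h.norm_two α hα)] at this

/-- A sum over all roots of an even function is twice the sum over positive roots. -/
theorem IsRootSystem.sum_even (h : IsRootSystem R Rp κ) (F : Ed d → ℝ) (hF : ∀ α, F (-α) = F α) :
    ∑ α ∈ R, F α = 2 * ∑ α ∈ Rp, F α := by
  classical
  have hR : R = Rp ∪ Rp.image (fun α => -α) := by
    ext α
    simp only [Finset.mem_union, Finset.mem_image]
    constructor
    · intro hα
      rcases h.pos_split α hα with ⟨h1, _⟩ | ⟨_, h1⟩
      · exact Or.inl h1
      · exact Or.inr ⟨-α, h1, neg_neg α⟩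
    · rintro (h1 | ⟨β, hβ, rfl⟩)
      · exact h.pos_sub h1
      · exact h.neg_mem (h.pos_sub hβ)
  have hdis : Disjoint Rp (Rp.image (fun α => -α)) := by
    rw [Finset.disjoint_left]
    intro α hα h2
    simp only [Finset.mem_image] at h2
    obtain ⟨β, hβ, rfl⟩ := h2
    rcases h.pos_split β (h.pos_sub hβ) with ⟨_, h1⟩ | ⟨h1, _⟩
    · exact h1 hα
    · exact h1 hβ
  rw [hR, Finset.sum_union hdis, Finset.sum_image (fun a _ b _ hab => neg_injective hab)]
  simp_rw [hF]; ring

theorem IsRootSystem.sum_refl (h : IsRootSystem R Rp κ) (F : Ed d → ℝ) {β : Ed d} (hβ : β ∈ R) :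
    ∑ α ∈ R, F (reflAt β α) = ∑ α ∈ R, F α := by
  have h2 := h.norm_two β hβ
  exact Finset.sum_nbij' (reflAt β) (reflAt β) (fun α hα => h.refl_mem β hβ α hα)
    (fun α hα => h.refl_mem β hβ α hα) (fun α _ => refl_invol h2 α) (fun α _ => refl_invol h2 α)
    (fun α _ => rfl)

theorem LK_SV (h : IsRootSystem R Rp κ) {f : Ed d × ℝ → ℝ} (hf : GInv R f) (hd : ContDiff ℝ 2 f)
    {β : Ed d} (hβ : β ∈ R) (p : Ed d × ℝ) :
    LK Rp κ f (SV β p) = LK Rp κ f p := by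
  have h2 := h.norm_two β hβ
  unfold LK
  rw [lapE_SV hf hd hβ h2]
  congr 1
  have key : ∀ q : Ed d × ℝ, 2 * ∑ α ∈ Rp, κ α * (fderiv ℝ f q (α, 0) / ⟪α, q.1⟫)
      = ∑ α ∈ R, κ α * (fderiv ℝ f q (α, 0) / ⟪α, q.1⟫) := by
    intro q
    have := h.sum_even (fun α => (if α ∈ R then κ α else 0) *
      (fderiv ℝ f q (α, 0) / ⟪α, q.1⟫)) (fun α => by
        have e1 : ((-α, 0) : Ed d × ℝ) = -(α, 0) := by simp
        have e2 : (-α ∈ R) ↔ α ∈ R := ⟨fun hh => by simpa using h.neg_mem hh, h.neg_mem⟩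
        rw [e1, map_neg, inner_neg_left, neg_div_neg_eq]
        by_cases hα : α ∈ R
        · simp [hα, e2, h.kappa_neg hα]
        · simp [hα, e2])
    have a1 : ∑ α ∈ R, (if α ∈ R then κ α else 0) * (fderiv ℝ f q (α, 0) / ⟪α, q.1⟫)
        = ∑ α ∈ R, κ α * (fderiv ℝ f q (α, 0) / ⟪α, q.1⟫) :=
      Finset.sum_congr rfl fun α hα => by simp [hα]
    have a2 : ∑ α ∈ Rp, (if α ∈ R then κ α else 0) * (fderiv ℝ f q (α, 0) / ⟪α, q.1⟫)
        = ∑ α ∈ Rp, κ α * (fderiv ℝ f q (α, 0) / ⟪α, q.1⟫) :=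
      Finset.sum_congr rfl fun α hα => by simp [h.pos_sub hα]
    rw [← a2, ← this, a1]
  rw [key, key]
  rw [← h.sum_refl (fun α => κ α * (fderiv ℝ f p (α, 0) / ⟪α, p.1⟫)) hβ]
  refine Finset.sum_congr rfl fun α hα => ?_
  rw [fderiv_SV hf (hd.differentiable (by norm_num)) hβ h2, h.kappa_refl hβ hα,
    inner_refl_comm h2]
  simp

theorem ae_regular (h : IsRootSystem R Rp κ) : ∀ᵐ x : Ed d, isRegular R x := by
  unfold isRegular
  rw [Finset.eventually_all]
  intro α hα
  have hne : (LinearMap.ker (innerSL ℝ α : Ed d →L[ℝ] ℝ).toLinearMap) ≠ ⊤ := by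
    intro ht
    have h1 : α ∈ LinearMap.ker (innerSL ℝ α : Ed d →L[ℝ] ℝ).toLinearMap := by
      rw [ht]; trivial
    have h3 := h.norm_two α hα
    have h4 : ⟪α, α⟫ = (0 : ℝ) := by simpa using h1
    rw [h4] at h3; norm_num at h3
  have := Measure.addHaar_submodule (volume : Measure (Ed d)) _ hne
  rw [ae_iff]
  convert this using 2
  ext x
  simp

theorem dense_regular (h : IsRootSystem R Rp κ) : Dense {x : Ed d | isRegular R x} :=
  Measure.dense_of_ae (ae_regular h)

theorem dense_regularV (h : IsRootSystem R Rp κ) : Dense {p : Ed d × ℝ | isRegular R p.1} :=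
  (dense_regular h).preimage isOpenMap_fst

theorem eq_of_regular (h : IsRootSystem R Rp κ) {f g : Ed d × ℝ → ℝ} (hf : Continuous f)
    (hg : Continuous g) (hfg : ∀ p : Ed d × ℝ, isRegular R p.1 → f p = g p) : f = g :=
  hf.ext_on (dense_regularV h) hg fun p hp => hfg p hp

theorem regular_SV (h : IsRootSystem R Rp κ) {β : Ed d} (hβ : β ∈ R) {p : Ed d × ℝ}
    (hp : isRegular R p.1) : isRegular R (SV β p).1 := by
  intro α hα
  have h2 := h.norm_two β hβ
  rw [SV_apply]
  show ⟪α, reflAt β p.1⟫ ≠ 0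
  rw [← inner_refl_comm h2]
  exact hp _ (h.refl_mem β hβ α hα)

/-! ### The operator on polynomials -/

theorem LK_add {f g : Ed d × ℝ → ℝ} {p : Ed d × ℝ} (hf : ContDiff ℝ 2 f) (hg : ContDiff ℝ 2 g) :
    LK Rp κ (fun z => f z + g z) p = LK Rp κ f p + LK Rp κ g p := by
  have h1 : fderiv ℝ (fun z => f z + g z) = fun z => fderiv ℝ f z + fderiv ℝ g z := by
    funext z
    exact fderiv_fun_add (hf.differentiable (by norm_num) z) (hg.differentiable (by norm_num) z)
  have h2 : ∀ (f : Ed d × ℝ → ℝ), ContDiff ℝ 2 f → DifferentiableAt ℝ (fderiv ℝ f) p :=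
    fun f hf => (hf.fderiv_right (m := 1) (by norm_num)).differentiable (by norm_num) p
  unfold LK
  simp_rw [lapE_eq, pd2_eq (hf.add hg).contDiffAt, pd2_eq hf.contDiffAt, pd2_eq hg.contDiffAt, h1]
  rw [fderiv_fun_add (h2 f hf) (h2 g hg)]
  simp only [add_apply, Finset.sum_add_distrib, add_div, mul_add]
  ring

theorem LK_smul {f : Ed d × ℝ → ℝ} {p : Ed d × ℝ} (hf : ContDiff ℝ 2 f) (c : ℝ) :
    LK Rp κ (fun z => c * f z) p = c * LK Rp κ f p := by
  have h1 : fderiv ℝ (fun z => c * f z) = fun z => c • fderiv ℝ f z := by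
    funext z
    exact fderiv_const_mul (hf.differentiable (by norm_num) z) c
  have h2 : DifferentiableAt ℝ (fderiv ℝ f) p :=
    (hf.fderiv_right (m := 1) (by norm_num)).differentiable (by norm_num) p
  unfold LK
  have h3 : ContDiff ℝ 2 (fun z => c * f z) := contDiff_const.mul hf
  simp_rw [lapE_eq, pd2_eq h3.contDiffAt, pd2_eq hf.contDiffAt, h1]
  rw [fderiv_fun_const_smul h2]
  simp only [smul_apply, smul_eq_mul]
  rw [mul_add, Finset.mul_sum, Finset.mul_sum, Finset.mul_sum, Finset.mul_sum]
  congr 1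
  refine Finset.sum_congr rfl fun α _ => by ring

theorem LK_sub {f g : Ed d × ℝ → ℝ} {p : Ed d × ℝ} (hf : ContDiff ℝ 2 f) (hg : ContDiff ℝ 2 g) :
    LK Rp κ (fun z => f z - g z) p = LK Rp κ f p - LK Rp κ g p := by
  have := LK_add (Rp := Rp) (κ := κ) (p := p) hf (contDiff_const.mul hg : ContDiff ℝ 2
    (fun z => (-1) * g z))
  rw [LK_smul hg] at this
  have e : (fun z => f z - g z) = fun z => f z + -1 * g z := by funext z; ring
  rw [e, this]; ring

theorem LK_sum {ι : Type*} (s : Finset ι) {f : ι → Ed d × ℝ → ℝ} {p : Ed d × ℝ}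
    (hf : ∀ i ∈ s, ContDiff ℝ 2 (f i)) :
    LK Rp κ (fun z => ∑ i ∈ s, f i z) p = ∑ i ∈ s, LK Rp κ (f i) p := by
  classical
  induction s using Finset.induction_on with
  | empty =>
    have := LK_smul (Rp := Rp) (κ := κ) (p := p) (f := fun _ => (0 : ℝ)) contDiff_const 0
    simpa using this
  | insert a s ha ih =>
    have h1 := hf a (Finset.mem_insert_self _ _)
    have h2 := fun i hi => hf i (Finset.mem_insert_of_mem hi)
    simp_rw [Finset.sum_insert ha]
    rw [← ih h2, ← LK_add h1 (ContDiff.sum h2)]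

theorem LK_mul {f g : Ed d × ℝ → ℝ} {p : Ed d × ℝ} (hf : ContDiff ℝ 2 f) (hg : ContDiff ℝ 2 g) :
    LK Rp κ (fun z => f z * g z) p = f p * LK Rp κ g p + g p * LK Rp κ f p
      + 2 * ∑ i, fderiv ℝ f p (ebas d i) * fderiv ℝ g p (ebas d i) := by
  have df : Differentiable ℝ f := hf.differentiable (by norm_num)
  have dg : Differentiable ℝ g := hg.differentiable (by norm_num)
  have h1 : fderiv ℝ (fun z => f z * g z) = fun z => f z • fderiv ℝ g z + g z • fderiv ℝ f z := by
    funext z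
    exact fderiv_fun_mul (df z) (dg z)
  have h2 : ∀ (f : Ed d × ℝ → ℝ), ContDiff ℝ 2 f → DifferentiableAt ℝ (fderiv ℝ f) p :=
    fun f hf => (hf.fderiv_right (m := 1) (by norm_num)).differentiable (by norm_num) p
  unfold LK
  have h3 : ContDiff ℝ 2 (fun z => f z * g z) := hf.mul hg
  simp_rw [lapE_eq, pd2_eq h3.contDiffAt, pd2_eq hf.contDiffAt, pd2_eq hg.contDiffAt, h1]
  rw [fderiv_fun_add ((df p).fun_smul (h2 g hg)) ((dg p).fun_smul (h2 f hf)),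
    fderiv_fun_smul (df p) (h2 g hg), fderiv_fun_smul (dg p) (h2 f hf)]
  simp only [smul_apply, add_apply, smul_eq_mul,
    ContinuousLinearMap.smulRight_apply, Finset.sum_add_distrib, ← Finset.mul_sum]
  have e1 : ∑ α ∈ Rp, κ α * ((f p * fderiv ℝ g p (α, 0) + g p * fderiv ℝ f p (α, 0)) / ⟪α, p.1⟫)
      = f p * ∑ α ∈ Rp, κ α * (fderiv ℝ g p (α, 0) / ⟪α, p.1⟫)
        + g p * ∑ α ∈ Rp, κ α * (fderiv ℝ f p (α, 0) / ⟪α, p.1⟫) := by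
    rw [Finset.mul_sum, Finset.mul_sum, ← Finset.sum_add_distrib]
    exact Finset.sum_congr rfl fun α _ => by ring
  rw [e1]
  have e2 : ∑ i, fderiv ℝ g p (ebas d i) * fderiv ℝ f p (ebas d i)
    = ∑ i, fderiv ℝ f p (ebas d i) * fderiv ℝ g p (ebas d i) :=
    Finset.sum_congr rfl fun α _ => by ring
  rw [e2]
  ring

theorem fderiv_nsq (p v : Ed d × ℝ) : fderiv ℝ nsq p v = 2 * ∑ i, crd d i p * crd d i v := by
  have : (nsq : Ed d × ℝ → ℝ) = fun z => ∑ i, crd d i z * crd d i z := by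
    funext z; rw [nsq_eq]; simp [sq]
  rw [this, fderiv_fun_sum fun i _ => ((crd d i).differentiableAt.fun_mul (crd d i).differentiableAt),
    sum_apply, Finset.mul_sum]
  refine Finset.sum_congr rfl fun i _ => ?_
  rw [fderiv_fun_mul (crd d i).differentiableAt (crd d i).differentiableAt]
  simp; ring

theorem pd2_nsq (p v : Ed d × ℝ) : pd2 nsq p v = 2 * nsq v := by
  unfold pd2
  simp_rw [fderiv_nsq]
  have e : (fun q : Ed d × ℝ => 2 * ∑ i, crd d i q * crd d i v)
      = ((2 : ℝ) • ∑ i, crd d i v • crd d i : Ed d × ℝ →L[ℝ] ℝ) := by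
    funext q
    simp [-Fintype.sum_option, mul_comm]
  rw [e, ContinuousLinearMap.fderiv]
  simp [-Fintype.sum_option, nsq_eq, sq]

/-- The effective dimension `d + 1 + 2γ`. -/
def effDim (d : ℕ) (Rp : Finset (Ed d)) (κ : Ed d → ℝ) : ℝ := d + 1 + 2 * ∑ α ∈ Rp, κ α

theorem effDim_pos (h : IsRootSystem R Rp κ) : 0 < effDim d Rp κ := by
  have : 0 ≤ ∑ α ∈ Rp, κ α := Finset.sum_nonneg fun α hα => h.kappa_nonneg α (h.pos_sub hα)
  unfold effDim; positivity

theorem LK_nsq (hsub : Rp ⊆ R) {p : Ed d × ℝ} (hp : isRegular R p.1) :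
    LK Rp κ nsq p = 2 * effDim d Rp κ := by
  unfold LK
  have : ∀ α ∈ Rp, κ α * (fderiv ℝ nsq p (α, 0) / ⟪α, p.1⟫) = 2 * κ α := by
    intro α hα
    have e : ∑ i, crd d i p * crd d i (α, 0) = ⟪α, p.1⟫ := by
      rw [← crd_root]; exact Finset.sum_congr rfl fun i _ => mul_comm _ _
    rw [fderiv_nsq, e]
    have := hp α (hsub hα)
    field_simp
  rw [Finset.sum_congr rfl this, lapE_eq]
  simp_rw [pd2_nsq, nsq_ebas]
  rw [← Finset.mul_sum, ← Finset.mul_sum]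
  simp [effDim]
  ring

theorem LK_nsq_mul (hsub : Rp ⊆ R) {n : ℕ} {f : Ed d × ℝ → ℝ} (hf : HPoly n f) {p : Ed d × ℝ}
    (hp : isRegular R p.1) :
    LK Rp κ (fun z => nsq z * f z) p
      = nsq p * LK Rp κ f p + (2 * effDim d Rp κ + 4 * n) * f p := by
  rw [LK_mul hpoly_nsq.contDiff hf.contDiff, LK_nsq hsub hp]
  have e : ∑ i, fderiv ℝ nsq p (ebas d i) * fderiv ℝ f p (ebas d i) = 2 * (n * f p) := by
    rw [← hf.euler p]
    conv_rhs => rw [← sum_crd p, map_sum, sum_crd p, Finset.mul_sum]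
    refine Finset.sum_congr rfl fun i _ => ?_
    have e1 : ∑ j, crd d j p * crd d j (ebas d i) = crd d i p := by
      rw [sum_crd_mul]
      cases i <;> simp [ebas, crd, EuclideanSpace.inner_single_right]
    rw [fderiv_nsq, map_smul, smul_eq_mul, e1]
    ring
  rw [e]; ring

end roots

/-! ### Fischer decomposition and the Dirichlet problem for polynomial data -/

/-- `LK f = 0` at all regular points. -/
def Harm {d : ℕ} (R Rp : Finset (Ed d)) (κ : Ed d → ℝ) (f : Ed d × ℝ → ℝ) : Prop :=
  ∀ p : Ed d × ℝ, isRegular R p.1 → LK Rp κ f p = 0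

/-- Finite sums of `|z|^{2j} h` with `h` an invariant harmonic homogeneous polynomial and
total degree `n`. -/
inductive Dec {d : ℕ} (R Rp : Finset (Ed d)) (κ : Ed d → ℝ) : ℕ → (Ed d × ℝ → ℝ) → Prop
  | base {k : ℕ} (j : ℕ) {h : Ed d × ℝ → ℝ} (hp : HPoly k h) (hi : GInv R h)
      (hh : Harm R Rp κ h) : Dec R Rp κ (k + 2 * j) (fun z => nsq z ^ j * h z)
  | add {n : ℕ} {f g : Ed d × ℝ → ℝ} (hf : Dec R Rp κ n f) (hg : Dec R Rp κ n g) :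
      Dec R Rp κ n (fun z => f z + g z)

variable {d : ℕ} {R Rp : Finset (Ed d)} {κ : Ed d → ℝ}

theorem GInv.add {f g : Ed d × ℝ → ℝ} (hf : GInv R f) (hg : GInv R g) :
    GInv R (fun z => f z + g z) := fun α hα z => by
  show f _ + g _ = _
  rw [hf α hα, hg α hα]

theorem GInv.sub {f g : Ed d × ℝ → ℝ} (hf : GInv R f) (hg : GInv R g) :
    GInv R (fun z => f z - g z) := fun α hα z => by
  show f _ - g _ = _
  rw [hf α hα, hg α hα]

theorem GInv.mul {f g : Ed d × ℝ → ℝ} (hf : GInv R f) (hg : GInv R g) :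
    GInv R (fun z => f z * g z) := fun α hα z => by
  show f _ * g _ = _
  rw [hf α hα, hg α hα]

theorem GInv.const (c : ℝ) : GInv R (fun _ : Ed d × ℝ => c) := fun _ _ _ => rfl

theorem ginv_nsq (h : IsRootSystem R Rp κ) : GInv R (nsq : Ed d × ℝ → ℝ) :=
  fun α hα z => nsq_SV (h.norm_two α hα) z

theorem GInv.nsq_pow_mul (h : IsRootSystem R Rp κ) {f : Ed d × ℝ → ℝ} (hf : GInv R f) (j : ℕ) :
    GInv R (fun z => nsq z ^ j * f z) := fun α hα z => by
  show nsq _ ^ j * f _ = _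
  rw [hf α hα, ginv_nsq h α hα]

theorem hpoly_nsq_pow_mul {k : ℕ} {f : Ed d × ℝ → ℝ} (hf : HPoly k f) (j : ℕ) :
    HPoly (k + 2 * j) (fun z => nsq z ^ j * f z) := by
  induction j with
  | zero => simpa using hf
  | succ j ih =>
    have := hpoly_nsq.hmul ih
    rw [show k + 2 * (j + 1) = 2 + (k + 2 * j) by ring]
    exact this.congr fun z => by ring

theorem Harm.add {f g : Ed d × ℝ → ℝ} (hf : Harm R Rp κ f) (hg : Harm R Rp κ g)
    (cf : ContDiff ℝ 2 f) (cg : ContDiff ℝ 2 g) : Harm R Rp κ (fun z => f z + g z) :=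
  fun p hp => by rw [LK_add cf cg, hf p hp, hg p hp, add_zero]

theorem Harm.sub {f g : Ed d × ℝ → ℝ} (hf : Harm R Rp κ f) (hg : Harm R Rp κ g)
    (cf : ContDiff ℝ 2 f) (cg : ContDiff ℝ 2 g) : Harm R Rp κ (fun z => f z - g z) :=
  fun p hp => by rw [LK_sub cf cg, hf p hp, hg p hp, sub_zero]

theorem Harm.smul {f : Ed d × ℝ → ℝ} (hf : Harm R Rp κ f) (cf : ContDiff ℝ 2 f) (c : ℝ) :
    Harm R Rp κ (fun z => c * f z) :=
  fun p hp => by rw [LK_smul cf, hf p hp, mul_zero]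

theorem Harm.zero : Harm R Rp κ (fun _ => 0) := fun p _ => by
  have := LK_sum (Rp := Rp) (κ := κ) (p := p) (∅ : Finset ℕ) (f := fun _ _ => 0) (by simp)
  simpa using this

/-- On an invariant homogeneous polynomial the operator acts as a polynomial map: since
`∂_α f` is odd under `σ_α`, it is divisible by `⟨α, ·⟩`. -/
theorem LK_hpoly (h : IsRootSystem R Rp κ) {n : ℕ} {f : Ed d × ℝ → ℝ} (hf : HPoly n f)
    (hi : GInv R f) : ∃ g, HPoly (n - 1 - 1) g ∧ (n - 1 = 0 → g = fun _ => 0) ∧ GInv R g ∧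
      ∀ p : Ed d × ℝ, isRegular R p.1 → LK Rp κ f p = g p := by
  have h2 : ∀ v, ∃ g, HPoly (n - 1 - 1) g ∧ (n - 1 = 0 → g = fun _ => 0) ∧
      ∀ p, pd2 f p v = g p := by
    intro v
    obtain ⟨g, hg, -, hgz⟩ := hf.deriv_aux v
    obtain ⟨g', hg', h0', hgz'⟩ := hg.deriv_aux v
    refine ⟨g', hg', h0', fun p => ?_⟩
    rw [pd2, ← hgz' p]
    congr 2
    funext z; exact hgz z
  have h1 : ∀ α : Ed d, ∃ q, HPoly (n - 1 - 1) q ∧ (n - 1 = 0 → q = fun _ => 0) ∧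
      (α ∈ Rp → ∀ p, 2 * fderiv ℝ f p (α, 0) = ⟪α, p.1⟫ * q p) := by
    intro α
    obtain ⟨g, hg, -, hgz⟩ := hf.deriv_aux ((α, 0) : Ed d × ℝ)
    obtain ⟨q, hq, hq0, hqz⟩ := hg.div_refl (SV α) (sL α) (α, 0) (fun z => by
      ext1 <;> simp [reflAt])
    refine ⟨q, hq, hq0, fun hα p => ?_⟩
    have := hqz p
    rw [← hgz, ← hgz, fderiv_SV hi hf.differentiable (h.pos_sub hα) (h.two hα)] at this
    have e : SV α (α, 0) = -((α, 0) : Ed d × ℝ) := by simp [refl_self (h.two hα)]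
    rw [e, map_neg, sL_apply] at this
    linarith
  choose G hG hG0 hGz using h2
  choose Q hQ hQ0 hQz using h1
  set g : Ed d × ℝ → ℝ := fun z => ∑ i, G (ebas d i) z + ∑ α ∈ Rp, κ α * Q α z with hg
  have hgp : HPoly (n - 1 - 1) g :=
    (HPoly.sum _ fun i _ => hG _).add (HPoly.sum _ fun α _ => (hQ α).smul _)
  have hreg : ∀ p : Ed d × ℝ, isRegular R p.1 → LK Rp κ f p = g p := by
    intro p hp
    rw [LK, lapE_eq, hg]
    simp only [hGz]
    congr 1
    rw [Finset.mul_sum]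
    refine Finset.sum_congr rfl fun α hα => ?_
    have h3 := hQz α hα p
    have h4 := hp α (h.pos_sub hα)
    field_simp
    linear_combination κ α * h3
  refine ⟨g, hgp, fun h0 => ?_, fun α hα => ?_, hreg⟩
  · funext z; simp [hg, hG0 _ h0, hQ0 _ h0]
  · refine congrFun (eq_of_regular h (f := fun z => g (SV α z)) (g := g)
      ((hgp.comp (SV α)).contDiff (k := 0)).continuous (hgp.contDiff (k := 0)).continuous
      fun p hp => ?_)
    show g (SV α p) = _
    rw [← hreg p hp, ← hreg _ (regular_SV h hα hp), LK_SV h hi hf.contDiff hα]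

theorem Dec.hpoly {n : ℕ} {f : Ed d × ℝ → ℝ} (hf : Dec R Rp κ n f) : HPoly n f := by
  induction hf with
  | base j hp hi hh => exact hpoly_nsq_pow_mul hp j
  | add _ _ ih1 ih2 => exact ih1.add ih2

theorem Dec.ginv (h : IsRootSystem R Rp κ) {n : ℕ} {f : Ed d × ℝ → ℝ} (hf : Dec R Rp κ n f) :
    GInv R f := by
  induction hf with
  | base j hp hi hh => exact hi.nsq_pow_mul h j
  | add _ _ ih1 ih2 => exact ih1.add ih2

theorem LK_nsq_pow (h : IsRootSystem R Rp κ) {k : ℕ} {f : Ed d × ℝ → ℝ} (hf : HPoly k f)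
    (hh : Harm R Rp κ f) (j : ℕ) : ∃ c > 0, ∀ p : Ed d × ℝ, isRegular R p.1 →
      LK Rp κ (fun z => nsq z ^ (j + 1) * f z) p = c * (nsq p ^ j * f p) := by
  have hD := effDim_pos h
  induction j with
  | zero =>
    refine ⟨2 * effDim d Rp κ + 4 * k, by positivity, fun p hp => ?_⟩
    simp only [zero_add, pow_one, pow_zero, one_mul]
    rw [LK_nsq_mul h.pos_sub hf hp, hh p hp]; ring
  | succ j ih =>
    obtain ⟨c, hc, ih⟩ := ih
    refine ⟨c + (2 * effDim d Rp κ + 4 * (k + 2 * (j + 1) : ℕ)), by positivity, fun p hp => ?_⟩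
    have e : (fun z : Ed d × ℝ => nsq z ^ (j + 1 + 1) * f z)
        = fun z => nsq z * (nsq z ^ (j + 1) * f z) := by funext z; ring
    rw [e, LK_nsq_mul h.pos_sub (hpoly_nsq_pow_mul hf (j + 1)) hp, ih p hp]
    ring

theorem Dec.solve (h : IsRootSystem R Rp κ) {n : ℕ} {g : Ed d × ℝ → ℝ} (hg : Dec R Rp κ n g) :
    ∃ q, Dec R Rp κ (n + 2) q ∧ ∀ p : Ed d × ℝ, isRegular R p.1 → LK Rp κ q p = g p := by
  induction hg with
  | @base k j f hp hi hh =>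
    obtain ⟨c, hc, hcp⟩ := LK_nsq_pow h hp hh j
    have hd := Dec.base (j + 1) (hp.smul c⁻¹) ((GInv.const c⁻¹).mul hi) (hh.smul hp.contDiff c⁻¹)
    refine ⟨_, hd, fun p hp' => ?_⟩
    have e : (fun z : Ed d × ℝ => nsq z ^ (j + 1) * (c⁻¹ * f z))
        = fun z => c⁻¹ * (nsq z ^ (j + 1) * f z) := by funext z; ring
    rw [e, LK_smul (hpoly_nsq_pow_mul hp (j + 1)).contDiff, hcp p hp']
    field_simp
  | add hf hg ih1 ih2 =>
    obtain ⟨q1, hq1, h1⟩ := ih1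
    obtain ⟨q2, hq2, h2⟩ := ih2
    exact ⟨_, hq1.add hq2, fun p hp => by
      rw [LK_add hq1.hpoly.contDiff hq2.hpoly.contDiff, h1 p hp, h2 p hp]⟩

/-- Every invariant homogeneous polynomial has a Fischer decomposition: if `q` is a decomposable solution
of `LK q = LK f`, then `f - q` is harmonic. -/
theorem dec_of_hpoly (h : IsRootSystem R Rp κ) (n : ℕ) : ∀ f : Ed d × ℝ → ℝ, HPoly n f → GInv R f →
    Dec R Rp κ n f := by
  induction n using Nat.strong_induction_on with
  | _ n ih =>
    intro f hf hi
    obtain ⟨g, hg, hg0, hgi, hgz⟩ := LK_hpoly h hf hi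
    by_cases hn : n - 1 = 0
    · have hh : Harm R Rp κ f := fun p hp => by rw [hgz p hp, hg0 hn]
      have := Dec.base 0 hf hi hh
      simpa using this
    · obtain ⟨m, rfl⟩ : ∃ m, n = m + 2 := ⟨n - 2, by omega⟩
      obtain ⟨q, hq, hqz⟩ := (ih m (by omega) g hg hgi).solve h
      have hh : Harm R Rp κ (fun z => f z - q z) := fun p hp => by
        rw [LK_sub hf.contDiff hq.hpoly.contDiff, hgz p hp, hqz p hp, sub_self]
      have h1 := Dec.base 0 (hf.sub hq.hpoly) (hi.sub (hq.ginv h)) hh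
      have h2 := Dec.add h1 hq
      simpa using h2

theorem Dec.dirichlet {n : ℕ} {f : Ed d × ℝ → ℝ} (hf : Dec R Rp κ n f) (ρ : ℝ) :
    ∃ u, PolySum u ∧ GInv R u ∧ Harm R Rp κ u ∧ ∀ z, nsq z = ρ ^ 2 → u z = f z := by
  induction hf with
  | @base k j f hp hi hh =>
    refine ⟨fun z => (ρ ^ 2) ^ j * f z, PolySum.of_hpoly (hp.smul _), (GInv.const _).mul hi,
      hh.smul hp.contDiff _, fun z hz => by simp [hz]⟩
  | add _ _ ih1 ih2 =>
    obtain ⟨u, hu, hui, huh, huz⟩ := ih1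
    obtain ⟨v, hv, hvi, hvh, hvz⟩ := ih2
    exact ⟨_, hu.add hv, hui.add hvi, huh.add hvh hu.contDiff hv.contDiff, fun z hz => by
      simp only [huz z hz, hvz z hz]⟩

theorem coeff_unique {N : ℕ} {a b : ℕ → ℝ}
    (h : ∀ t : ℝ, 0 < t → ∑ n ∈ Finset.range N, t ^ n * a n = ∑ n ∈ Finset.range N, t ^ n * b n) :
    ∀ n < N, a n = b n := by
  intro n hn
  set P : (ℕ → ℝ) → Polynomial ℝ := fun a =>
    ∑ n ∈ Finset.range N, Polynomial.C (a n) * Polynomial.X ^ n with hP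
  have hc : ∀ a, (P a).coeff n = a n := by
    intro a
    simp only [hP, Polynomial.finsetSum_coeff, Polynomial.coeff_C_mul_X_pow]
    rw [Finset.sum_eq_single n]
    · simp
    · intro b _ hb; simp [hb.symm]
    · simp [hn]
  have : P a = P b := by
    refine Polynomial.eq_of_infinite_eval_eq _ _ ((Set.Ioi_infinite (0 : ℝ)).mono fun t ht => ?_)
    have := h t ht
    simp only [Set.mem_ofPred_eq, hP, Polynomial.eval_finsetSum, Polynomial.eval_mul,
      Polynomial.eval_C, Polynomial.eval_pow, Polynomial.eval_X]
    simpa [mul_comm] using this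
  rw [← hc a, ← hc b, this]

theorem PolySum.comp_ginv {N : ℕ} {p : ℕ → Ed d × ℝ → ℝ} (hp : ∀ n, HPoly n (p n))
    (hi : GInv R (fun z => ∑ n ∈ Finset.range N, p n z)) : ∀ n < N, GInv R (p n) := by
  intro n hn α hα z
  refine coeff_unique (N := N) (a := fun n => p n (SV α z)) (b := fun n => p n z)
    (fun t ht => ?_) n hn
  have := hi α hα (t • z)
  simp only [map_smul, (hp _).hom] at this
  exact this

theorem fderiv_hom {n : ℕ} {f : Ed d × ℝ → ℝ} (hf : HPoly n f) {t : ℝ} (ht : t ≠ 0)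
    (p v : Ed d × ℝ) : fderiv ℝ f (t • p) v = t ^ n * t⁻¹ * fderiv ℝ f p v := by
  rcases n with _ | n
  · simp [hf.fderiv_zero]
  · rw [(hf.fderiv_succ v).hom t p]
    field_simp
    ring

theorem PolySum.comp_harm {N : ℕ} {p : ℕ → Ed d × ℝ → ℝ} (hp : ∀ n, HPoly n (p n))
    (hh : Harm R Rp κ (fun z => ∑ n ∈ Finset.range N, p n z)) : ∀ n < N, Harm R Rp κ (p n) := by
  intro n hn z hz
  refine coeff_unique (N := N) (a := fun n => LK Rp κ (p n) z) (b := fun _ => 0)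
    (fun t ht => ?_) n hn
  have hr : isRegular R (t • z).1 := by
    intro α hα
    simp only [Prod.smul_fst, inner_smul_right]
    exact mul_ne_zero ht.ne' (hz α hα)
  have h1 := hh (t • z) hr
  rw [LK_sum _ fun n _ => (hp n).contDiff] at h1
  have key : ∀ n, LK Rp κ (p n) (t • z) = t ^ n * (t⁻¹ * t⁻¹) * LK Rp κ (p n) z := by
    intro n
    have hpd : ∀ v, pd2 (p n) (t • z) v = t ^ n * (t⁻¹ * t⁻¹) * pd2 (p n) z v := by
      intro v
      unfold pd2
      rcases n with _ | n
      · simp [(hp 0).fderiv_zero]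
      · rw [fderiv_hom ((hp (n + 1)).fderiv_succ v) ht.ne' z v]
        field_simp
        ring
    unfold LK
    simp_rw [lapE_eq, hpd, fderiv_hom (hp n) ht.ne']
    rw [← Finset.mul_sum, mul_add]
    congr 1
    rw [mul_left_comm]
    congr 1
    rw [Finset.mul_sum]
    refine Finset.sum_congr rfl fun α _ => ?_
    simp only [Prod.smul_fst, inner_smul_right]
    rw [div_eq_mul_inv, mul_inv, div_eq_mul_inv]
    ring
  simp_rw [key] at h1
  have h2 : ∑ n ∈ Finset.range N, t ^ n * (t⁻¹ * t⁻¹) * LK Rp κ (p n) z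
    = (t⁻¹ * t⁻¹) * ∑ n ∈ Finset.range N, t ^ n * LK Rp κ (p n) z := by
    rw [Finset.mul_sum]; exact Finset.sum_congr rfl fun n _ => by ring
  rw [h2] at h1
  have h3 : (t⁻¹ * t⁻¹) ≠ 0 := by positivity
  simpa using (mul_eq_zero.1 h1).resolve_left h3

/-- Dirichlet problem on the ball `nsq ≤ ρ²` with polynomial invariant data. -/
theorem dirichlet (h : IsRootSystem R Rp κ) {f : Ed d × ℝ → ℝ} (hf : PolySum f) (hi : GInv R f)
    (ρ : ℝ) : ∃ u, PolySum u ∧ GInv R u ∧ Harm R Rp κ u ∧ ∀ z, nsq z = ρ ^ 2 → u z = f z := by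
  obtain ⟨N, p, hp, hfp⟩ := hf
  have hfe : f = fun z => ∑ n ∈ Finset.range N, p n z := funext hfp
  rw [hfe] at hi
  have hpi := PolySum.comp_ginv hp hi
  have : ∀ M ≤ N, ∃ u, PolySum u ∧ GInv R u ∧ Harm R Rp κ u ∧
      ∀ z, nsq z = ρ ^ 2 → u z = ∑ n ∈ Finset.range M, p n z := by
    intro M
    induction M with
    | zero =>
      intro _
      exact ⟨fun _ => 0, PolySum.const 0, GInv.const 0, Harm.zero, by simp⟩
    | succ M ih =>
      intro hM
      obtain ⟨u, hu, hui, huh, huz⟩ := ih (by omega)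
      obtain ⟨v, hv, hvi, hvh, hvz⟩ :=
        (dec_of_hpoly h M (p M) (hp M) (hpi M (by omega))).dirichlet ρ
      exact ⟨_, hu.add hv, hui.add hvi, huh.add hvh hu.contDiff hv.contDiff, fun z hz => by
        simp only [huz z hz, hvz z hz, Finset.sum_range_succ]⟩
  obtain ⟨u, hu, hui, huh, huz⟩ := this N le_rfl
  exact ⟨u, hu, hui, huh, fun z hz => by rw [huz z hz, hfp]⟩

/-! ### Comparison principle -/

/-- `φ` has first and second directional derivatives `a`, `b` at `z` in the direction `v`. -/
def HasD2 {d : ℕ} (φ : Ed d × ℝ → ℝ) (z v : Ed d × ℝ) (a b : ℝ) : Prop :=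
  ∃ D : ℝ → ℝ, (∀ᶠ t in 𝓝 (0 : ℝ), HasDerivAt (fun t : ℝ => φ (z + t • v)) (D t) t) ∧ D 0 = a ∧
    HasDerivAt D b 0

namespace HasD2

variable {φ ψ : Ed d × ℝ → ℝ} {z v : Ed d × ℝ} {a b a' b' : ℝ}

theorem add (h : HasD2 φ z v a b) (h' : HasD2 ψ z v a' b') :
    HasD2 (fun z => φ z + ψ z) z v (a + a') (b + b') := by
  obtain ⟨D, h1, h2, h3⟩ := h
  obtain ⟨D', h1', h2', h3'⟩ := h'
  refine ⟨fun t => D t + D' t, ?_, by simp [h2, h2'], h3.fun_add h3'⟩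
  filter_upwards [h1, h1'] with t ht ht' using ht.fun_add ht'

theorem mul (h : HasD2 φ z v a b) (h' : HasD2 ψ z v a' b') :
    HasD2 (fun z => φ z * ψ z) z v (a * ψ z + φ z * a') (b * ψ z + 2 * (a * a') + φ z * b') := by
  obtain ⟨D, h1, h2, h3⟩ := h
  obtain ⟨D', h1', h2', h3'⟩ := h'
  refine ⟨fun t => D t * ψ (z + t • v) + φ (z + t • v) * D' t, ?_, by simp [h2, h2'], ?_⟩
  · filter_upwards [h1, h1'] with t ht ht' using ht.fun_mul ht'
  · have e1 := h1.self_of_nhds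
    have e2 := h1'.self_of_nhds
    have := (h3.fun_mul e2).fun_add (e1.fun_mul h3')
    refine this.congr_deriv ?_
    simp only [zero_smul, add_zero, h2, h2']
    ring

theorem const (c : ℝ) : HasD2 (fun _ => c) z v 0 0 :=
  ⟨fun _ => 0, Eventually.of_forall fun t => hasDerivAt_const t c, rfl, hasDerivAt_const 0 0⟩

theorem congr (h : HasD2 φ z v a b) (ha : a' = a) (hb : b' = b) : HasD2 φ z v a' b' := by
  subst ha; subst hb; exact h

theorem congr_fun (h : HasD2 φ z v a b) (hf : ∀ z, ψ z = φ z) : HasD2 ψ z v a b := by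
  have : ψ = φ := funext hf
  rw [this]; exact h

theorem smul (h : HasD2 φ z v a b) (c : ℝ) : HasD2 (fun z => c * φ z) z v (c * a) (c * b) :=
  ((const c).mul h).congr (by ring) (by ring)

theorem neg (h : HasD2 φ z v a b) : HasD2 (fun z => - φ z) z v (-a) (-b) :=
  ((h.smul (-1)).congr (by ring) (by ring)).congr_fun fun z => by ring

theorem sub (h : HasD2 φ z v a b) (h' : HasD2 ψ z v a' b') :
    HasD2 (fun z => φ z - ψ z) z v (a - a') (b - b') :=
  ((h.add h'.neg).congr (by ring) (by ring)).congr_fun fun z => by ring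

theorem comp {f f1 : ℝ → ℝ} {c : ℝ} (h : HasD2 φ z v a b) (hf : ∀ s, HasDerivAt f (f1 s) s)
    (hf1 : HasDerivAt f1 c (φ z)) :
    HasD2 (fun z => f (φ z)) z v (f1 (φ z) * a) (c * a ^ 2 + f1 (φ z) * b) := by
  obtain ⟨D, h1, h2, h3⟩ := h
  refine ⟨fun t => f1 (φ (z + t • v)) * D t, ?_, by simp [h2], ?_⟩
  · filter_upwards [h1] with t ht using (hf _).comp t ht
  · have e1 := h1.self_of_nhds
    have e2 : HasDerivAt (fun t : ℝ => f1 (φ (z + t • v))) (c * D 0) 0 :=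
      HasDerivAt.comp (h₂ := f1) (0 : ℝ) (by simpa using hf1) e1
    refine (e2.fun_mul h3).congr_deriv ?_
    simp only [zero_smul, add_zero, h2]
    ring

theorem of_clm (l : Ed d × ℝ →L[ℝ] ℝ) : HasD2 (fun z => l z) z v (l v) 0 := by
  refine ⟨fun _ => l v, Eventually.of_forall fun t => ?_, rfl, hasDerivAt_const _ _⟩
  simp only [map_add, map_smul, smul_eq_mul]
  simpa using ((hasDerivAt_id t).mul_const (l v)).const_add (l z)

theorem of_contDiff {f : Ed d × ℝ → ℝ} (hf : ContDiff ℝ 2 f) :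
    HasD2 f z v (fderiv ℝ f z v) (pd2 f z v) := by
  have key : ∀ g : Ed d × ℝ → ℝ, Differentiable ℝ g → ∀ t : ℝ,
      HasDerivAt (fun t : ℝ => g (z + t • v)) (fderiv ℝ g (z + t • v) v) t := by
    intro g hg t
    have h1 : HasDerivAt (fun t : ℝ => z + t • v) v t := by
      simpa using ((hasDerivAt_id t).smul_const v).const_add z
    exact (hg _).hasFDerivAt.comp_hasDerivAt t h1
  refine ⟨fun t => fderiv ℝ f (z + t • v) v, Eventually.of_forall fun t =>
    key f (hf.differentiable (by norm_num)) t, by simp, ?_⟩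
  have hd2 : Differentiable ℝ (fun q => fderiv ℝ f q v) :=
    ((hf.fderiv_right (m := 1) (by norm_num)).differentiable (by norm_num)).clm_apply
      (differentiable_const v)
  simpa [pd2] using key _ hd2 0

/-- The one-dimensional second order necessary condition at a local minimum. -/
theorem of_isLocalMin (h : HasD2 φ z v a b) (hm : IsLocalMin φ z) : a = 0 ∧ 0 ≤ b := by
  obtain ⟨D, h1, h2, h3⟩ := h
  set g : ℝ → ℝ := fun t => φ (z + t • v) with hg
  have hgm : IsLocalMin g 0 := by
    have hc : Tendsto (fun t : ℝ => z + t • v) (𝓝 0) (𝓝 z) := by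
      have : Continuous (fun t : ℝ => z + t • v) := by fun_prop
      simpa using this.tendsto 0
    have := hc.eventually hm
    filter_upwards [this] with t ht
    simpa [hg] using ht
  have ha : a = 0 := by
    rw [← h2, ← h1.self_of_nhds.deriv]; exact hgm.deriv_eq_zero
  refine ⟨ha, ?_⟩
  by_contra hb
  push Not at hb
  have hde : deriv g =ᶠ[𝓝 0] D := by
    filter_upwards [h1] with t ht using ht.deriv
  have hdd : deriv (deriv g) 0 = b := by
    rw [hde.deriv_eq]; exact h3.deriv
  have hmax := isLocalMax_of_deriv_deriv_neg (f := g) (x₀ := 0) (by rw [hdd]; exact hb)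
    (by rw [h1.self_of_nhds.deriv, h2, ha]) h1.self_of_nhds.continuousAt
  have hconst : g =ᶠ[𝓝 0] fun _ => g 0 := by
    filter_upwards [hmax, hgm] with t ht ht' using le_antisymm ht ht'
  have : deriv (deriv g) 0 = 0 := by
    rw [hconst.deriv.deriv_eq]; simp
  rw [hdd] at this
  linarith

end HasD2

theorem hasD2_nsq_sub (c z v : Ed d × ℝ) :
    HasD2 (fun z => nsq (z - c)) z v (2 * (⟪z.1 - c.1, v.1⟫ + (z.2 - c.2) * v.2)) (2 * nsq v) := by
  have h1 : HasD2 (fun w : Ed d × ℝ => nsq w) (z - c) v (fderiv ℝ nsq (z - c) v)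
    (pd2 nsq (z - c) v) := HasD2.of_contDiff hpoly_nsq.contDiff
  rw [fderiv_nsq, pd2_nsq, sum_crd_mul] at h1
  obtain ⟨D, h2, h3, h4⟩ := h1
  refine ⟨D, ?_, h3, h4⟩
  have : ∀ t : ℝ, z + t • v - c = z - c + t • v := fun t => by abel
  simpa only [this] using h2

theorem PolySum.div_refl {f : Ed d × ℝ → ℝ} (hf : PolySum f) (α : Ed d) :
    ∃ q, PolySum q ∧ ∀ z, f z - f (SV α z) = ⟪α, z.1⟫ * q z := by
  obtain ⟨N, p, hp, h⟩ := hf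
  have : ∀ n, ∃ q, PolySum q ∧ ∀ z, p n z - p n (SV α z) = ⟪α, z.1⟫ * q z := by
    intro n
    obtain ⟨q, hq, -, hqz⟩ := (hp n).div_refl (SV α) (sL α) (α, 0) (fun z => by
      ext1 <;> simp [reflAt])
    exact ⟨q, PolySum.of_hpoly hq, fun z => by rw [hqz, sL_apply]⟩
  choose q hq hqz using this
  refine ⟨_, PolySum.sum (Finset.range N) fun n _ => hq n, fun z => ?_⟩
  rw [h, h, ← Finset.sum_sub_distrib, Finset.mul_sum]
  exact Finset.sum_congr rfl fun n _ => hqz n z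

/-- The equation for an invariant harmonic polynomial at an arbitrary point: where `⟨α, x⟩ = 0`,
the quotient `2 ∂_α u / ⟨α, x⟩` is replaced by its limit `∂_α² u`. -/
theorem harm_everywhere (h : IsRootSystem R Rp κ) {u : Ed d × ℝ → ℝ} (hu : PolySum u)
    (hi : GInv R u) (hh : Harm R Rp κ u) (p : Ed d × ℝ) :
    ∑ i, pd2 u p (ebas d i) + ∑ α ∈ Rp, κ α *
      (if ⟪α, p.1⟫ = 0 then pd2 u p (α, 0) else 2 * fderiv ℝ u p (α, 0) / ⟪α, p.1⟫) = 0 := by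
  have h1 : ∀ α : Ed d, ∃ q, PolySum q ∧
      (α ∈ Rp → ∀ p, 2 * fderiv ℝ u p (α, 0) = ⟪α, p.1⟫ * q p) := by
    intro α
    obtain ⟨q, hq, hqz⟩ := (hu.fderiv_apply (α, 0)).div_refl α
    refine ⟨q, hq, fun hα p => ?_⟩
    have := hqz p
    rw [fderiv_SV hi (hu.contDiff.differentiable (n := 1) (by norm_num)) (h.pos_sub hα)
      (h.two hα)] at this
    have e : SV α (α, 0) = -((α, 0) : Ed d × ℝ) := by simp [refl_self (h.two hα)]
    rw [e, map_neg] at this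
    linarith
  choose Q hQ hQz using h1
  have hpd : ∀ v, PolySum (fun p => pd2 u p v) := fun v => (hu.fderiv_apply v).fderiv_apply v
  have hG : PolySum (fun p => ∑ i, pd2 u p (ebas d i) + ∑ α ∈ Rp, κ α * Q α p) :=
    (PolySum.sum _ fun i _ => hpd _).add (PolySum.sum _ fun α _ => (hQ α).smul _)
  have hzero := congrFun (eq_of_regular h (g := fun _ => 0) (hG.contDiff (k := 0)).continuous
    continuous_const fun p hp => by
      have := hh p hp
      rw [LK, lapE_eq, Finset.mul_sum] at this
      rw [← this]
      congr 1
      refine Finset.sum_congr rfl fun α hα => ?_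
      have h3 := hQz α hα p
      have h4 := hp α (h.pos_sub hα)
      field_simp
      linear_combination - κ α * h3) p
  refine Eq.trans ?_ hzero
  beta_reduce
  congr 1
  refine Finset.sum_congr rfl fun α hα => ?_
  congr 1
  have h3 := hQz α hα
  split_ifs with hs
  · have e : (fun p => fderiv ℝ u p (α, 0)) = fun p => (1 / 2 : ℝ) * (sL α p * Q α p) := by
      funext p; rw [sL_apply]; linarith [h3 p]
    have dQ : DifferentiableAt ℝ (Q α) p := (hQ α).contDiff.differentiable (n := 1) (by norm_num) p
    rw [pd2, e, fderiv_const_mul ((sL α).differentiableAt.fun_mul dQ),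
      fderiv_fun_mul (sL α).differentiableAt dQ]
    simp only [smul_apply, add_apply, ContinuousLinearMap.fderiv, smul_eq_mul, sL_apply,
      hs, h.two hα]
    ring
  · field_simp
    linarith [h3 p]

/-- If `φ` touches the invariant harmonic polynomial `u` from below at `z`, then `φ` is a
supersolution at `z`. -/
theorem touch (h : IsRootSystem R Rp κ) {u φ : Ed d × ℝ → ℝ} (hu : PolySum u)
    (hi : GInv R u) (hh : Harm R Rp κ u) {z : Ed d × ℝ} (hm : IsLocalMin (fun z => u z - φ z) z)
    (a b : Ed d × ℝ → ℝ) (hφ : ∀ v, HasD2 φ z v (a v) (b v)) :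
    ∑ i, b (ebas d i) + ∑ α ∈ Rp, κ α *
      (if ⟪α, z.1⟫ = 0 then b (α, 0) else 2 * a (α, 0) / ⟪α, z.1⟫) ≤ 0 := by
  have key : ∀ v, fderiv ℝ u z v = a v ∧ b v ≤ pd2 u z v := by
    intro v
    have := ((HasD2.of_contDiff hu.contDiff).sub (hφ v)).of_isLocalMin hm
    exact ⟨by linarith [this.1], by linarith [this.2]⟩
  refine le_trans ?_ (harm_everywhere h hu hi hh z).le
  refine add_le_add (Finset.sum_le_sum fun i _ => (key _).2) (Finset.sum_le_sum fun α hα => ?_)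
  refine mul_le_mul_of_nonneg_left ?_ (h.kappa_nonneg α (h.pos_sub hα))
  split_ifs with hs
  · exact (key _).2
  · rw [(key _).1]

theorem touch_above (h : IsRootSystem R Rp κ) {u φ : Ed d × ℝ → ℝ} (hu : PolySum u)
    (hi : GInv R u) (hh : Harm R Rp κ u) {z : Ed d × ℝ} (hm : IsLocalMin (fun z => φ z - u z) z)
    (a b : Ed d × ℝ → ℝ) (hφ : ∀ v, HasD2 φ z v (a v) (b v)) :
    0 ≤ ∑ i, b (ebas d i) + ∑ α ∈ Rp, κ α *
      (if ⟪α, z.1⟫ = 0 then b (α, 0) else 2 * a (α, 0) / ⟪α, z.1⟫) := by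
  have hm' : IsLocalMin (fun z => (-1 * u z) - (-φ z)) z := by
    have e : (fun z => (-1 * u z) - (-φ z)) = fun z => φ z - u z := by funext z; ring
    rw [e]; exact hm
  have := touch h (hu.smul (-1)) ((GInv.const (-1)).mul hi) (hh.smul hu.contDiff (-1)) hm'
    (fun v => - a v) (fun v => - b v) fun v => (hφ v).neg
  have e2 : ∑ α ∈ Rp, κ α * (if ⟪α, z.1⟫ = 0 then - b (α, 0) else 2 * (- a (α, 0)) / ⟪α, z.1⟫)
    = - ∑ α ∈ Rp, κ α * (if ⟪α, z.1⟫ = 0 then b (α, 0) else 2 * a (α, 0) / ⟪α, z.1⟫) := by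
    rw [← Finset.sum_neg_distrib]
    refine Finset.sum_congr rfl fun α _ => ?_
    split_ifs <;> ring
  rw [e2, Finset.sum_neg_distrib] at this
  linarith

/-! ### Balls and the maximum principle -/

theorem continuous_nsq : Continuous (nsq : Ed d × ℝ → ℝ) := by
  unfold nsq; fun_prop

theorem isCompact_nsq (c : Ed d × ℝ) (ρ : ℝ) : IsCompact {z : Ed d × ℝ | nsq (z - c) ≤ ρ ^ 2} := by
  refine Metric.isCompact_of_isClosed_isBounded ?_ ?_
  · exact isClosed_le (continuous_nsq.comp (continuous_id.sub continuous_const)) continuous_const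
  · refine (Metric.isBounded_closedBall (x := c) (r := |ρ|)).subset fun z hz => ?_
    rw [mem_closedBall, dist_eq_norm, Prod.norm_def, max_le_iff]
    have hz' : ‖(z - c).1‖ ^ 2 + (z - c).2 ^ 2 ≤ ρ ^ 2 := hz
    constructor
    · refine abs_le_of_sq_le_sq' ?_ (abs_nonneg _) |>.2
      rw [sq_abs]; nlinarith [sq_nonneg (z - c).2]
    · rw [Real.norm_eq_abs]
      refine sq_le_sq.1 ?_
      nlinarith [sq_nonneg ‖(z - c).1‖]

theorem Harm.max_principle (h : IsRootSystem R Rp κ) {u : Ed d × ℝ → ℝ} (hu : PolySum u)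
    (hi : GInv R u) (hh : Harm R Rp κ u) (c ρ M : ℝ)
    (hb : ∀ z : Ed d × ℝ, nsq (z - (0, c)) = ρ ^ 2 → u z ≤ M) :
    ∀ z : Ed d × ℝ, nsq (z - (0, c)) ≤ ρ ^ 2 → u z ≤ M := by
  have key : ∀ η > 0, ∀ z : Ed d × ℝ, nsq (z - (0, c)) ≤ ρ ^ 2 → u z ≤ M + η * ρ ^ 2 := by
    intro η hη z hz
    have hcont : Continuous (fun z : Ed d × ℝ => u z + η * nsq (z - (0, c))) :=
      (hu.contDiff (k := 0)).continuous.add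
        (continuous_const.mul (continuous_nsq.comp (continuous_id.sub continuous_const)))
    obtain ⟨z0, hz0, hmax⟩ := (isCompact_nsq ((0, c) : Ed d × ℝ) ρ).exists_isMaxOn ⟨z, hz⟩
      hcont.continuousOn
    have hle : u z0 ≤ M := by
      rcases eq_or_lt_of_le (show nsq (z0 - (0, c)) ≤ ρ ^ 2 from hz0) with he | hlt
      · exact hb z0 he
      · exfalso
        have hopen : {z : Ed d × ℝ | nsq (z - (0, c)) ≤ ρ ^ 2} ∈ 𝓝 z0 := by
          refine mem_of_superset ((isOpen_lt (continuous_nsq.comp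
            (continuous_id.sub continuous_const)) continuous_const).mem_nhds hlt) fun w hw => ?_
          exact le_of_lt (show nsq (w - (0, c)) < ρ ^ 2 from hw)
        have hloc := hmax.isLocalMax hopen
        have hm : IsLocalMin (fun z => (-η) * nsq (z - (0, c)) - u z) z0 := by
          filter_upwards [hloc] with w hw
          linarith
        have := touch_above h hu hi hh hm _ _ fun v => (hasD2_nsq_sub (0, c) z0 v).smul (-η)
        have e1 : ∑ i, (-η) * (2 * nsq (ebas d i)) < 0 := by
          simp only [nsq_ebas]
          simp
          nlinarith [Nat.cast_nonneg (α := ℝ) d]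
        have e2 : ∑ α ∈ Rp, κ α * (if ⟪α, z0.1⟫ = 0 then (-η) * (2 * nsq ((α, 0) : Ed d × ℝ)) else
            2 * ((-η) * (2 * (⟪z0.1 - 0, α⟫ + (z0.2 - c) * 0))) / ⟪α, z0.1⟫) ≤ 0 := by
          refine Finset.sum_nonpos fun α hα => ?_
          refine mul_nonpos_of_nonneg_of_nonpos (h.kappa_nonneg α (h.pos_sub hα)) ?_
          split_ifs with hs
          · nlinarith [nsq_nonneg ((α, 0) : Ed d × ℝ)]
          · rw [sub_zero, mul_zero, add_zero, real_inner_comm]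
            field_simp
            linarith
        linarith
    have := hmax hz
    simp only [Set.mem_ofPred_eq] at this
    have h0 := nsq_nonneg (z - (0, c))
    have h1 : nsq (z0 - (0, c)) ≤ ρ ^ 2 := hz0
    nlinarith
  intro z hz
  refine le_of_forall_pos_le_add fun ε hε => ?_
  have := key (ε / (ρ ^ 2 + 1)) (by positivity) z hz
  have h2 : ε / (ρ ^ 2 + 1) * ρ ^ 2 ≤ ε := by
    rw [div_mul_eq_mul_div, div_le_iff₀ (by positivity)]
    nlinarith
  linarith

theorem GInv.translate {f : Ed d × ℝ → ℝ} (hf : GInv R f) (c : ℝ) :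
    GInv R (fun z => f (z + (0, c))) := fun α hα z => by
  have := hf α hα (z + (0, c))
  simpa using this

theorem pd2_translate (f : Ed d × ℝ → ℝ) (c p v : Ed d × ℝ) :
    pd2 (fun z => f (z + c)) p v = pd2 f (p + c) v := by
  unfold pd2
  simp_rw [fderiv_comp_add_right c]
  rw [fderiv_comp_add_right (f := fun q => fderiv ℝ f q v) c]

theorem Harm.translate {f : Ed d × ℝ → ℝ} (hf : Harm R Rp κ f) (c : ℝ) :
    Harm R Rp κ (fun z => f (z + (0, c))) := fun p hp => by
  have h1 := hf (p + (0, c)) (by simpa using hp)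
  rw [← h1, LK, LK, lapE_eq, lapE_eq]
  simp_rw [pd2_translate, fderiv_comp_add_right]
  simp

/-! ### The reflection group -/

/-- The reflection `σ_α` as an endomorphism. -/
def rE (α : Ed d) : Function.End (Ed d) := reflAt α

theorem reflAt_mem_group {α : Ed d} (hα : α ∈ R) : rE α ∈ dunklGroup R :=
  Submonoid.subset_closure ⟨α, hα, rfl⟩

/-- Elements of the group are linear isometries that permute the roots and fix the orthogonal
complement of the roots. -/
theorem group_linear (h : IsRootSystem R Rp κ) {σ : Function.End (Ed d)} (hσ : σ ∈ dunklGroup R) :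
    ∃ L : Ed d →L[ℝ] Ed d, (∀ x, σ x = L x) ∧ (∀ α ∈ R, L α ∈ R) ∧
      (∀ x, (∀ α ∈ R, ⟪α, x⟫ = (0 : ℝ)) → L x = x) ∧ ∀ x, ‖L x‖ = ‖x‖ := by
  induction hσ using Submonoid.closure_induction with
  | mem f hf =>
    obtain ⟨α, hα, rfl⟩ := hf
    refine ⟨ContinuousLinearMap.id ℝ (Ed d) - (innerSL ℝ α).smulRight α, fun x => by simp [reflAt],
      fun β hβ => ?_, fun x hx => ?_, fun x => ?_⟩
    · simpa [reflAt] using h.refl_mem α hα β hβ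
    · simp [hx α hα]
    · simpa [reflAt] using norm_refl (h.norm_two α hα) x
  | one => exact ⟨ContinuousLinearMap.id ℝ _, fun x => rfl, fun α hα => hα, fun x _ => rfl,
      fun x => rfl⟩
  | mul f g _ _ hf hg =>
    obtain ⟨L, h1, h2, h3, h4⟩ := hf
    obtain ⟨L', h1', h2', h3', h4'⟩ := hg
    refine ⟨L.comp L', fun x => ?_, fun α hα => h2 _ (h2' _ hα), fun x hx => ?_, fun x => ?_⟩
    · rw [ContinuousLinearMap.comp_apply, ← h1, ← h1']; rfl
    · rw [ContinuousLinearMap.comp_apply, h3' x hx, h3 x hx]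
    · rw [ContinuousLinearMap.comp_apply, h4, h4']

theorem group_finite (h : IsRootSystem R Rp κ) : (dunklGroup R : Set (Function.End (Ed d))).Finite := by
  have hfin : (Set.univ.pi fun _ : R => (R : Set (Ed d))).Finite :=
    Set.Finite.pi fun _ => R.finite_toSet
  refine Set.Finite.of_finite_image (f := fun σ : Function.End (Ed d) => fun r : R => σ (r : Ed d))
    (hfin.subset ?_) ?_
  · rintro _ ⟨σ, hσ, rfl⟩ r -
    obtain ⟨L, h1, h2, -⟩ := group_linear h hσ
    simpa [h1] using h2 r r.2
  · intro σ hσ τ hτ hst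
    obtain ⟨L, h1, h2, h3, -⟩ := group_linear h hσ
    obtain ⟨M, h1', h2', h3', -⟩ := group_linear h hτ
    have hag : ∀ y ∈ Submodule.span ℝ (R : Set (Ed d)), L y = M y := by
      intro y hy
      have : Set.EqOn L M (R : Set (Ed d)) := fun r hr => by
        have := congrFun hst ⟨r, hr⟩
        simpa [h1, h1'] using this
      exact LinearMap.eqOn_span (f := L.toLinearMap) (g := M.toLinearMap) this hy
    funext x
    rw [h1, h1']
    obtain ⟨y, hy, z, hz, rfl⟩ :=
      (Submodule.span ℝ (R : Set (Ed d))).exists_add_mem_mem_orthogonal x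
    have hz' : ∀ α ∈ R, ⟪α, z⟫ = (0 : ℝ) := fun α hα =>
      (Submodule.mem_orthogonal _ _).1 hz α (Submodule.subset_span hα)
    rw [map_add, map_add, hag y hy, h3 z hz', h3' z hz']

/-- The group as a finite set of maps. -/
def grp (h : IsRootSystem R Rp κ) : Finset (Function.End (Ed d)) := (group_finite h).toFinset

theorem mem_grp (h : IsRootSystem R Rp κ) {σ : Function.End (Ed d)} :
    σ ∈ grp h ↔ σ ∈ dunklGroup R := by simp [grp]

theorem one_mem_grp (h : IsRootSystem R Rp κ) : (1 : Function.End (Ed d)) ∈ grp h :=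
  (mem_grp h).2 (one_mem _)

theorem GInv.group {f : Ed d × ℝ → ℝ} (hf : GInv R f) {σ : Function.End (Ed d)}
    (hσ : σ ∈ dunklGroup R) (p : Ed d × ℝ) : f (σ p.1, p.2) = f p := by
  induction hσ using Submonoid.closure_induction generalizing p with
  | mem g hg =>
    obtain ⟨α, hα, rfl⟩ := hg
    simpa using hf α hα p
  | one => rfl
  | mul s t _ _ hs ht =>
    have := hs (t p.1, p.2)
    exact this.trans (ht p)

theorem sum_grp_right (h : IsRootSystem R Rp κ) {β : Ed d} (hβ : β ∈ R)
    (F : Function.End (Ed d) → ℝ) :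
    ∑ σ ∈ grp h, F (σ * rE β) = ∑ σ ∈ grp h, F σ := by
  have hinv : rE β * rE β = 1 :=
    funext fun x => refl_invol (h.norm_two β hβ) x
  have hm : ∀ σ ∈ grp h, σ * rE β ∈ grp h := fun σ hσ =>
    (mem_grp h).2 (mul_mem ((mem_grp h).1 hσ) (reflAt_mem_group hβ))
  refine Finset.sum_bij' (fun σ _ => σ * rE β)
    (fun σ _ => σ * rE β) hm hm ?_ ?_ (fun _ _ => rfl)
  · intro σ _; rw [mul_assoc, hinv, mul_one]
  · intro σ _; rw [mul_assoc, hinv, mul_one]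

/-- Averaging a polynomial over the group. -/
theorem average (h : IsRootSystem R Rp κ) {f : Ed d × ℝ → ℝ} (hf : PolySum f) :
    ∃ g : Ed d × ℝ → ℝ, PolySum g ∧ GInv R g ∧
      ∀ z, g z = ((grp h).card : ℝ)⁻¹ * ∑ σ ∈ grp h, f (σ z.1, z.2) := by
  refine ⟨fun z => ((grp h).card : ℝ)⁻¹ * ∑ σ ∈ grp h, f (σ z.1, z.2), ?_, ?_, fun z => rfl⟩
  · refine PolySum.smul (PolySum.sum _ fun σ hσ => ?_) _
    obtain ⟨L, h1, -⟩ := group_linear h ((mem_grp h).1 hσ)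
    refine (hf.comp ((L.comp (ContinuousLinearMap.fst ℝ (Ed d) ℝ)).prod
      (ContinuousLinearMap.snd ℝ (Ed d) ℝ))).congr fun z => ?_
    simp [h1]
  · intro β hβ z
    simp only [SV_apply]
    congr 1
    exact sum_grp_right h hβ (fun σ => f (σ z.1, z.2))

/-- Every orbit meets the closed chamber containing a given `v`. -/
theorem chamber (h : IsRootSystem R Rp κ) (v x : Ed d) :
    ∃ σ ∈ dunklGroup R, ∀ α ∈ R, (0 : ℝ) ≤ ⟪α, σ x⟫ * ⟪α, v⟫ := by
  obtain ⟨σ, hσ, hmax⟩ := (grp h).exists_max_image (fun σ => ⟪σ x, v⟫) ⟨1, one_mem_grp h⟩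
  have hσ' := (mem_grp h).1 hσ
  refine ⟨σ, hσ', fun α hα => ?_⟩
  have := hmax (rE α * σ)
    ((mem_grp h).2 (mul_mem (reflAt_mem_group hα) hσ'))
  have e : (rE α * σ) x = reflAt α (σ x) := rfl
  rw [e, reflAt, inner_sub_left, inner_smul_left] at this
  simp only [conj_trivial] at this
  linarith

/-! ### A Markov inequality -/

theorem T_deriv_one (n : ℕ) : (Polynomial.derivative (Polynomial.Chebyshev.T ℝ n)).eval 1 = (n : ℝ) ^ 2 := by
  rw [Polynomial.Chebyshev.T_derivative_eq_U]
  simp [sq]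

/-- Markov's inequality at an endpoint, from the extremal property of Chebyshev polynomials. -/
theorem markov_zero {n : ℕ} {P : Polynomial ℝ} (hP : P.natDegree ≤ n) {M : ℝ}
    (hb : ∀ t ∈ Set.Icc (0 : ℝ) 1, |P.eval t| ≤ M) : |P.derivative.eval 0| ≤ 2 * n ^ 2 * M := by
  have key : ∀ Q : Polynomial ℝ, Q.natDegree ≤ n → ∀ M > 0, (∀ t ∈ Set.Icc (0 : ℝ) 1, |Q.eval t| ≤ M) →
      -(Q.derivative.eval 0) ≤ 2 * n ^ 2 * M := by
    intro Q hQ M hM hb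
    set S : Polynomial ℝ := Polynomial.C (M⁻¹) * Q.comp (Polynomial.C (1 / 2) * (1 - Polynomial.X)) with hS
    have hdeg : S.degree ≤ n := by
      refine Polynomial.natDegree_le_iff_degree_le.1 ?_
      refine (Polynomial.natDegree_C_mul_le _ _).trans ?_
      rw [Polynomial.natDegree_comp]
      have : (Polynomial.C (1 / 2 : ℝ) * (1 - Polynomial.X)).natDegree ≤ 1 := by
        refine (Polynomial.natDegree_C_mul_le _ _).trans ?_
        compute_degree
      nlinarith
    have h1 := Polynomial.Chebyshev.eval_iterate_derivative_le_of_forall_abs_le_one (k := 1) (x := 1)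
      le_rfl hdeg (by
        intro x hx
        have := hb (1 / 2 * (1 - x)) ⟨by linarith [hx.2], by linarith [hx.1]⟩
        simp only [hS, Polynomial.eval_mul, Polynomial.eval_C, Polynomial.eval_comp, Polynomial.eval_sub,
          Polynomial.eval_one, Polynomial.eval_X]
        rw [abs_mul, abs_of_pos (inv_pos.2 hM)]
        calc M⁻¹ * |Q.eval (1 / 2 * (1 - x))| ≤ M⁻¹ * M := by gcongr
          _ = 1 := by field_simp)
    simp only [Function.iterate_one] at h1
    rw [T_deriv_one] at h1
    simp only [hS, Polynomial.derivative_mul, Polynomial.derivative_comp, Polynomial.derivative_C,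
      Polynomial.derivative_sub, Polynomial.derivative_one, Polynomial.derivative_X] at h1
    simp at h1
    have : M⁻¹ * (-(Q.derivative.eval 0) / 2) ≤ n ^ 2 := by
      refine le_trans (le_of_eq ?_) h1
      ring
    have h2 : -(Q.derivative.eval 0) / 2 = M * (M⁻¹ * (-(Q.derivative.eval 0) / 2)) := by field_simp
    nlinarith
  have key2 : ∀ Q : Polynomial ℝ, Q.natDegree ≤ n → (∀ t ∈ Set.Icc (0 : ℝ) 1, |Q.eval t| ≤ M) →
      -(Q.derivative.eval 0) ≤ 2 * n ^ 2 * M := by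
    intro Q hQ hb
    have h0 : 0 ≤ M := (abs_nonneg _).trans (hb 0 ⟨le_rfl, zero_le_one⟩)
    refine le_of_forall_pos_le_add fun ε hε => ?_
    have := key Q hQ (M + ε / (2 * n ^ 2 + 1)) (by positivity) (fun t ht => (hb t ht).trans
      (le_add_of_nonneg_right (by positivity)))
    have h3 : 2 * (n : ℝ) ^ 2 * (ε / (2 * n ^ 2 + 1)) ≤ ε := by
      rw [← mul_div_assoc, div_le_iff₀ (by positivity)]; nlinarith
    nlinarith
  rw [abs_le]
  constructor
  · linarith [key2 P hP hb]
  · have := key2 (-P) (by simpa using hP) (by simpa using hb)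
    simpa using this

/-! ### Orthogonality of homogeneous harmonic polynomials -/

instance haarV : (volume : Measure (Ed d × ℝ)).IsAddHaarMeasure := by
  rw [Measure.volume_eq_prod]; infer_instance

theorem integral_lineDeriv_zero {F F' : Ed d × ℝ → ℝ} {v : Ed d × ℝ} (hF : Integrable F)
    (hF' : Integrable F') (hd : ∀ z, HasLineDerivAt ℝ F (F' z) z v) : ∫ z, F' z = 0 := by
  have := integral_bilinear_hasLineDerivAt_right_eq_neg_left_of_integrable (μ := volume)
    (f := fun _ : Ed d × ℝ => (1 : ℝ)) (f' := fun _ => 0) (g := F) (g' := F') (v := v)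
    (B := ContinuousLinearMap.mul ℝ ℝ) (by simp) (by simpa using hF') (by simpa using hF)
    (fun x _ => by unfold HasLineDerivAt; exact hasDerivAt_const _ _) (fun x _ => hd x)
  simpa using this

theorem hasDerivAt_posSq (t : ℝ) : HasDerivAt (fun t : ℝ => (max t 0) ^ 2) (2 * max t 0) t := by
  rcases lt_trichotomy t 0 with ht | rfl | ht
  · rw [max_eq_right ht.le, mul_zero]
    refine (hasDerivAt_const t (0 : ℝ)).congr_of_eventuallyEq ?_
    filter_upwards [eventually_lt_nhds ht] with s hs
    simp [max_eq_right hs.le]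
  · rw [hasDerivAt_iff_isLittleO]
    simp only [max_self, mul_zero, smul_zero, sub_zero, ne_eq, OfNat.ofNat_ne_zero,
      not_false_eq_true, zero_pow]
    refine Asymptotics.IsBigO.trans_isLittleO (g := fun t : ℝ => t ^ 2) ?_ ?_
    · refine Asymptotics.IsBigO.of_bound 1 (Eventually.of_forall fun t => ?_)
      rw [Real.norm_eq_abs, Real.norm_eq_abs, one_mul, abs_of_nonneg (sq_nonneg _),
        abs_of_nonneg (sq_nonneg _)]
      rcases le_total t 0 with h | h
      · simp [max_eq_right h]; positivity
      · simp [max_eq_left h]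
    · exact Asymptotics.isLittleO_pow_id one_lt_two
  · rw [max_eq_left ht.le]
    have := (hasDerivAt_id t).pow 2
    simp only [id, mul_one, Nat.cast_ofNat] at this
    norm_num at this
    refine this.congr_of_eventuallyEq ?_
    filter_upwards [eventually_gt_nhds ht] with s hs
    simp [max_eq_left hs.le]

/-- The cut-off `(1 - |z|²)₊`. -/
def cut (z : Ed d × ℝ) : ℝ := max (1 - nsq z) 0

theorem cut_nonneg (z : Ed d × ℝ) : 0 ≤ cut z := le_max_right _ _

theorem cut_le_one (z : Ed d × ℝ) : cut z ≤ 1 :=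
  max_le (by linarith [nsq_nonneg z]) zero_le_one

theorem cut_eq_zero {z : Ed d × ℝ} (hz : 1 ≤ nsq z) : cut z = 0 :=
  max_eq_right (by linarith)

theorem continuous_cut : Continuous (cut : Ed d × ℝ → ℝ) :=
  (continuous_const.sub continuous_nsq).max continuous_const

theorem integrable_cut {A : Ed d × ℝ → ℝ} (hA : Continuous A) :
    Integrable (fun z => A z * cut z) := by
  refine (hA.mul continuous_cut).integrable_of_hasCompactSupport ?_
  refine HasCompactSupport.intro (isCompact_nsq 0 1) fun z hz => ?_
  have : 1 ≤ nsq z := by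
    by_contra hc
    apply hz
    simp only [Set.mem_ofPred_eq, sub_zero, one_pow]; linarith
  simp [cut_eq_zero this]

/-- The weight `∏ (⟨α,x⟩² + ε)^κ(α)`, written with `exp` and `log`. -/
def wt (Rp : Finset (Ed d)) (κ : Ed d → ℝ) (ε : ℝ) (z : Ed d × ℝ) : ℝ :=
  Real.exp (∑ α ∈ Rp, κ α * Real.log (⟪α, z.1⟫ ^ 2 + ε))

theorem wt_pos (ε : ℝ) (z : Ed d × ℝ) : 0 < wt Rp κ ε z := Real.exp_pos _

theorem continuous_wt {ε : ℝ} (hε : 0 < ε) : Continuous (wt Rp κ ε) := by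
  unfold wt
  refine Real.continuous_exp.comp (continuous_finsetSum _ fun α _ => continuous_const.mul
    (Continuous.log (by fun_prop) fun z => by positivity))

theorem measurable_wt (ε : ℝ) : Measurable (wt Rp κ ε) := by
  unfold wt
  refine Real.measurable_exp.comp (Finset.measurable_fun_sum _ fun α _ => measurable_const.mul
    (Real.measurable_log.comp ?_))
  exact Continuous.measurable (by fun_prop)

theorem wt_le (h : IsRootSystem R Rp κ) {ε : ℝ} (h0 : 0 ≤ ε) (h1 : ε ≤ 1) (z : Ed d × ℝ) :
    wt Rp κ ε z ≤ wt Rp κ 1 z := by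
  unfold wt
  refine Real.exp_le_exp.2 (Finset.sum_le_sum fun α hα => mul_le_mul_of_nonneg_left ?_
    (h.kappa_nonneg α (h.pos_sub hα)))
  rcases eq_or_ne (⟪α, z.1⟫ ^ 2 + ε) 0 with e | e
  · rw [e, Real.log_zero]; exact Real.log_nonneg (by nlinarith [sq_nonneg (⟪α, z.1⟫ : ℝ)])
  · have : 0 < ⟪α, z.1⟫ ^ 2 + ε := lt_of_le_of_ne (by positivity) (Ne.symm e)
    exact Real.log_le_log this (by linarith)

theorem lineDeriv_wt {ε : ℝ} (hε : 0 < ε) (z v : Ed d × ℝ) :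
    HasLineDerivAt ℝ (wt Rp κ ε)
      (wt Rp κ ε z * ∑ α ∈ Rp, κ α * (2 * ⟪α, z.1⟫ * ⟪α, v.1⟫ / (⟪α, z.1⟫ ^ 2 + ε))) z v := by
  unfold HasLineDerivAt wt
  have h1 : ∀ α ∈ Rp, HasDerivAt (fun t : ℝ => κ α * Real.log (⟪α, (z + t • v).1⟫ ^ 2 + ε))
      (κ α * (2 * ⟪α, z.1⟫ * ⟪α, v.1⟫ / (⟪α, z.1⟫ ^ 2 + ε))) 0 := by
    intro α _
    have e : ∀ t : ℝ, ⟪α, (z + t • v).1⟫ = ⟪α, z.1⟫ + t * ⟪α, v.1⟫ := fun t => by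
      simp [inner_add_right, inner_smul_right]
    simp only [e]
    have h2 : HasDerivAt (fun t : ℝ => (⟪α, z.1⟫ + t * ⟪α, v.1⟫) ^ 2 + ε)
        (2 * ⟪α, z.1⟫ * ⟪α, v.1⟫) 0 := by
      have := ((((hasDerivAt_id (0 : ℝ)).mul_const ⟪α, v.1⟫).const_add ⟪α, z.1⟫).pow 2).add_const ε
      refine this.congr_deriv ?_
      simp
    have := (h2.log (by simp; positivity)).const_mul (κ α)
    simpa using this
  have := (HasDerivAt.fun_sum h1).exp
  refine this.congr_deriv ?_
  simp

theorem lineDeriv_cut (z v : Ed d × ℝ) :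
    HasLineDerivAt ℝ (fun z => cut z ^ 2) (-2 * cut z * fderiv ℝ nsq z v) z v := by
  have hn : HasLineDerivAt ℝ nsq (fderiv ℝ nsq z v) z v :=
    ((hpoly_nsq.differentiable) z).hasFDerivAt.hasLineDerivAt v
  unfold HasLineDerivAt at hn ⊢
  have h1 : HasDerivAt (fun t : ℝ => 1 - nsq (z + t • v)) (-fderiv ℝ nsq z v) 0 := hn.const_sub 1
  have := (hasDerivAt_posSq (1 - nsq (z + (0:ℝ) • v))).comp (0:ℝ) h1
  refine this.congr_deriv ?_
  simp [cut]

/-- For an invariant polynomial, `∂_α f` is divisible by `⟨α, x⟩`. -/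
theorem root_div (h : IsRootSystem R Rp κ) {u : Ed d × ℝ → ℝ} (hu : PolySum u) (hi : GInv R u) :
    ∃ q : Ed d → Ed d × ℝ → ℝ, (∀ α, PolySum (q α)) ∧
      ∀ α ∈ Rp, ∀ p, fderiv ℝ u p (α, 0) = ⟪α, p.1⟫ * q α p := by
  have h1 : ∀ α : Ed d, ∃ q, PolySum q ∧
      (α ∈ Rp → ∀ p, fderiv ℝ u p (α, 0) = ⟪α, p.1⟫ * q p) := by
    intro α
    obtain ⟨q, hq, hqz⟩ := (hu.fderiv_apply (α, 0)).div_refl α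
    refine ⟨fun z => (1 / 2) * q z, hq.smul _, fun hα p => ?_⟩
    have := hqz p
    rw [fderiv_SV hi (hu.contDiff.differentiable (n := 1) (by norm_num)) (h.pos_sub hα)
      (h.two hα)] at this
    have e : SV α (α, 0) = -((α, 0) : Ed d × ℝ) := by simp [refl_self (h.two hα)]
    rw [e, map_neg] at this
    linarith
  choose q hq hqz using h1
  exact ⟨q, hq, fun α hα => hqz α hα⟩

theorem sum_crd_fderiv (f : Ed d × ℝ → ℝ) (p v : Ed d × ℝ) :
    ∑ i, crd d i v * fderiv ℝ f p (ebas d i) = fderiv ℝ f p v := by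
  conv_rhs => rw [← sum_crd v, map_sum]
  refine Finset.sum_congr rfl fun i _ => ?_
  rw [map_smul, smul_eq_mul]

/-- Green's formula for the regularised weight, tested against `cut²`: the vector field
`cut² wt_ε (f ∇g - g ∇f)` has compact support, so its divergence integrates to zero. The last sum is
the error caused by `ε`, which vanishes as `ε → 0`. -/
theorem green_eps (h : IsRootSystem R Rp κ) {n m : ℕ} {f g : Ed d × ℝ → ℝ} (hf : HPoly n f)
    (hg : HPoly m g) (fh : Harm R Rp κ f) (gh : Harm R Rp κ g) {qf qg : Ed d → Ed d × ℝ → ℝ}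
    (hqf : ∀ α ∈ Rp, ∀ p, fderiv ℝ f p (α, 0) = ⟪α, p.1⟫ * qf α p)
    (hqg : ∀ α ∈ Rp, ∀ p, fderiv ℝ g p (α, 0) = ⟪α, p.1⟫ * qg α p) {ε : ℝ} (hε : 0 < ε) :
    ∫ z, (-4 * ((m : ℝ) - n) * (f z * g z) * cut z * wt Rp κ ε z -
      cut z ^ 2 * wt Rp κ ε z * ∑ α ∈ Rp, 2 * κ α * (f z * qg α z - g z * qf α z) *
        (ε / (⟪α, z.1⟫ ^ 2 + ε))) = 0 := by
  have Pf := PolySum.of_hpoly hf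
  have Pg := PolySum.of_hpoly hg
  have cdf : ContDiff ℝ 2 f := Pf.contDiff
  have cdg : ContDiff ℝ 2 g := Pg.contDiff
  set e := ebas d
  set D : Option (Fin d) → Ed d × ℝ → ℝ := fun i z => f z * fderiv ℝ g z (e i) - g z * fderiv ℝ f z (e i)
  set S : Ed d × ℝ → Ed d × ℝ → ℝ := fun z v =>
    ∑ α ∈ Rp, κ α * (2 * ⟪α, z.1⟫ * ⟪α, v.1⟫ / (⟪α, z.1⟫ ^ 2 + ε))
  set F' : Option (Fin d) → Ed d × ℝ → ℝ := fun i z =>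
    ((f z * pd2 g z (e i) - g z * pd2 f z (e i)) * cut z +
      D i z * (-2 * fderiv ℝ nsq z (e i) + cut z * S z (e i))) * wt Rp κ ε z * cut z
  have cf : Continuous f := cdf.continuous
  have cg : Continuous g := cdg.continuous
  have c1 : ∀ {u : Ed d × ℝ → ℝ}, PolySum u → ∀ v, Continuous (fun z => fderiv ℝ u z v) := fun hu v =>
    (hu.fderiv_apply v).contDiff (k := 1) |>.continuous
  have c2 : ∀ {u : Ed d × ℝ → ℝ}, PolySum u → ∀ v, Continuous (fun z => pd2 u z v) := fun hu v =>
    ((hu.fderiv_apply v).fderiv_apply v).contDiff (k := 1) |>.continuous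
  have cD : ∀ i, Continuous (D i) := fun i => (cf.mul (c1 Pg _)).sub (cg.mul (c1 Pf _))
  have cw := continuous_wt (Rp := Rp) (κ := κ) hε
  have cS : ∀ v, Continuous (fun z => S z v) := fun v => by
    refine continuous_finsetSum _ fun α _ => continuous_const.mul (Continuous.div (by fun_prop)
      (by fun_prop) fun z => by positivity)
  have hF : ∀ i, ∫ z, F' i z = 0 := by
    intro i
    refine integral_lineDeriv_zero (F := fun z => D i z * wt Rp κ ε z * cut z * cut z) (v := e i)
      (integrable_cut (((cD i).mul cw).mul continuous_cut)) (integrable_cut ?_) ?_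
    · refine (Continuous.add ?_ ((cD i).mul ?_)).mul cw
      · exact ((cf.mul (c2 Pg _)).sub (cg.mul (c2 Pf _))).mul continuous_cut
      · exact (continuous_const.mul (c1 (PolySum.of_hpoly hpoly_nsq) _)).add
          (continuous_cut.mul (cS _))
    · intro z
      have ld : ∀ {u : Ed d × ℝ → ℝ}, PolySum u → HasDerivAt (fun t : ℝ => u (z + t • e i))
          (fderiv ℝ u z (e i)) 0 := fun hu =>
        ((hu.contDiff (k := 1)).differentiable (by norm_num) z).hasFDerivAt.hasLineDerivAt (e i)
      have h1 := ld Pf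
      have h2 := ld Pg
      have h3 := ld (Pf.fderiv_apply (e i))
      have h4 := ld (Pg.fderiv_apply (e i))
      have h5 := lineDeriv_wt (Rp := Rp) (κ := κ) hε z (e i)
      have h6 := lineDeriv_cut z (e i)
      unfold HasLineDerivAt at h5 h6 ⊢
      have := (((h1.fun_mul h4).fun_sub (h2.fun_mul h3)).fun_mul h5).fun_mul h6
      refine (this.congr_of_eventuallyEq (Eventually.of_forall fun t => ?_)).congr_deriv ?_
      · simp only [D]; ring
      · simp only [F', D, S, pd2, zero_smul, add_zero]
        ring
  have hFi : ∀ i, Integrable (F' i) := by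
    intro i
    refine integrable_cut ?_
    refine (Continuous.add ?_ ((cD i).mul ?_)).mul cw
    · exact ((cf.mul (c2 Pg _)).sub (cg.mul (c2 Pf _))).mul continuous_cut
    · exact (continuous_const.mul (c1 (PolySum.of_hpoly hpoly_nsq) _)).add
        (continuous_cut.mul (cS _))
  have hsum : ∫ z, ∑ i, F' i z = 0 := by
    rw [integral_finsetSum _ fun i _ => hFi i]
    exact Finset.sum_eq_zero fun i _ => hF i
  rw [← hsum]
  have hreg : ∀ᵐ z : Ed d × ℝ, isRegular R z.1 :=
    Measure.quasiMeasurePreserving_fst.ae (ae_regular h)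
  refine integral_congr_ae ?_
  filter_upwards [hreg] with z hz
  have hf0 := fh z hz
  have hg0 := gh z hz
  unfold LK at hf0 hg0
  rw [lapE_eq] at hf0 hg0
  have hz' : ∀ α ∈ Rp, (⟪α, z.1⟫ : ℝ) ≠ 0 := fun α hα => hz α (h.pos_sub hα)
  have hf1 : ∑ α ∈ Rp, κ α * (fderiv ℝ f z (α, 0) / ⟪α, z.1⟫) = ∑ α ∈ Rp, κ α * qf α z :=
    Finset.sum_congr rfl fun α hα => by rw [hqf α hα, mul_div_cancel_left₀ _ (hz' α hα)]
  have hg1 : ∑ α ∈ Rp, κ α * (fderiv ℝ g z (α, 0) / ⟪α, z.1⟫) = ∑ α ∈ Rp, κ α * qg α z :=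
    Finset.sum_congr rfl fun α hα => by rw [hqg α hα, mul_div_cancel_left₀ _ (hz' α hα)]
  rw [hf1] at hf0
  rw [hg1] at hg0
  -- Euler's identity evaluates the derivative of the cut-off, which is a radial function.
  have hrad : ∑ i, D i z * fderiv ℝ nsq z (e i) = 2 * ((m : ℝ) - n) * (f z * g z) := by
    have : ∀ i, D i z * fderiv ℝ nsq z (e i) =
        2 * f z * (crd d i z * fderiv ℝ g z (e i)) - 2 * g z * (crd d i z * fderiv ℝ f z (e i)) := by
      intro i
      have e1 : fderiv ℝ nsq z (e i) = 2 * crd d i z := by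
        rw [fderiv_nsq, sum_crd_mul]
        rcases i with _ | i <;> simp [e, ebas, crd, PiLp.inner_apply]
      rw [e1]; simp only [D]; ring
    rw [Finset.sum_congr rfl fun i _ => this i, Finset.sum_sub_distrib, ← Finset.mul_sum,
      ← Finset.mul_sum, sum_crd_fderiv, sum_crd_fderiv, hf.euler, hg.euler]
    ring
  have hang : ∑ i, D i z * S z (e i) = ∑ α ∈ Rp, κ α * (2 * ⟪α, z.1⟫ ^ 2 / (⟪α, z.1⟫ ^ 2 + ε) *
      (f z * qg α z - g z * qf α z)) := by
    simp only [S, Finset.mul_sum]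
    rw [Finset.sum_comm]
    refine Finset.sum_congr rfl fun α hα => ?_
    have : ∀ i, D i z * (κ α * (2 * ⟪α, z.1⟫ * ⟪α, (e i).1⟫ / (⟪α, z.1⟫ ^ 2 + ε))) =
        κ α * (2 * ⟪α, z.1⟫ / (⟪α, z.1⟫ ^ 2 + ε)) *
          (f z * (crd d i (α, 0) * fderiv ℝ g z (e i)) - g z * (crd d i (α, 0) * fderiv ℝ f z (e i))) := by
      intro i
      have e1 : (⟪α, (e i).1⟫ : ℝ) = crd d i (α, 0) := by
        rcases i with _ | i <;> simp [e, ebas, crd, PiLp.inner_apply]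
      rw [e1]; simp only [D]; ring
    rw [Finset.sum_congr rfl fun i _ => this i, ← Finset.mul_sum, Finset.sum_sub_distrib,
      ← Finset.mul_sum, ← Finset.mul_sum, sum_crd_fderiv, sum_crd_fderiv, hqf α hα, hqg α hα]
    ring
  have hlap : ∑ i, (f z * pd2 g z (e i) - g z * pd2 f z (e i)) =
      - ∑ α ∈ Rp, 2 * κ α * (f z * qg α z - g z * qf α z) := by
    rw [Finset.sum_sub_distrib, ← Finset.mul_sum, ← Finset.mul_sum]
    have a1 : ∑ i, pd2 g z (e i) = -(2 * ∑ α ∈ Rp, κ α * qg α z) := by linarith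
    have a2 : ∑ i, pd2 f z (e i) = -(2 * ∑ α ∈ Rp, κ α * qf α z) := by linarith
    rw [a1, a2]
    have : ∑ α ∈ Rp, 2 * κ α * (f z * qg α z - g z * qf α z) =
        2 * (f z * ∑ α ∈ Rp, κ α * qg α z) - 2 * (g z * ∑ α ∈ Rp, κ α * qf α z) := by
      simp only [Finset.mul_sum, ← Finset.sum_sub_distrib]
      exact Finset.sum_congr rfl fun α _ => by ring
    rw [this]; ring
  have htot : ∑ i, F' i z = ((∑ i, (f z * pd2 g z (e i) - g z * pd2 f z (e i))) * cut z +
      (-2 * (∑ i, D i z * fderiv ℝ nsq z (e i)) + cut z * ∑ i, D i z * S z (e i))) *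
        wt Rp κ ε z * cut z := by
    simp only [Finset.sum_mul, Finset.mul_sum, ← Finset.sum_add_distrib]
    refine Finset.sum_congr rfl fun i _ => ?_
    simp only [F']; ring
  rw [htot, hrad, hang, hlap]
  have hcomb : ∑ α ∈ Rp, 2 * κ α * (f z * qg α z - g z * qf α z) * (ε / (⟪α, z.1⟫ ^ 2 + ε)) =
      ∑ α ∈ Rp, 2 * κ α * (f z * qg α z - g z * qf α z) -
      ∑ α ∈ Rp, κ α * (2 * ⟪α, z.1⟫ ^ 2 / (⟪α, z.1⟫ ^ 2 + ε) * (f z * qg α z - g z * qf α z)) := by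
    rw [← Finset.sum_sub_distrib]
    refine Finset.sum_congr rfl fun α _ => ?_
    have : (⟪α, z.1⟫ : ℝ) ^ 2 + ε ≠ 0 := by positivity
    field_simp
    ring
  rw [hcomb]
  ring

/-- Invariant homogeneous harmonic polynomials of different degrees are orthogonal with respect to
`cut` times the Dunkl weight. -/
theorem orthogonal (h : IsRootSystem R Rp κ) {n m : ℕ} (hnm : n ≠ m) {f g : Ed d × ℝ → ℝ}
    (hf : HPoly n f) (hg : HPoly m g) (fi : GInv R f) (gi : GInv R g) (fh : Harm R Rp κ f)
    (gh : Harm R Rp κ g) : ∫ z, f z * g z * cut z * wt Rp κ 0 z = 0 := by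
  obtain ⟨qf, hqf', hqf⟩ := root_div h (PolySum.of_hpoly hf) fi
  obtain ⟨qg, hqg', hqg⟩ := root_div h (PolySum.of_hpoly hg) gi
  have cf : Continuous f := (hf.contDiff (k := 1)).continuous
  have cg : Continuous g := (hg.contDiff (k := 1)).continuous
  have cq : ∀ {u : Ed d × ℝ → ℝ}, PolySum u → Continuous u := fun hu =>
    (hu.contDiff (k := 1)).continuous
  set Φ : ℝ → Ed d × ℝ → ℝ := fun ε z => -4 * ((m : ℝ) - n) * (f z * g z) * cut z * wt Rp κ ε z -
      cut z ^ 2 * wt Rp κ ε z * ∑ α ∈ Rp, 2 * κ α * (f z * qg α z - g z * qf α z) *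
        (ε / (⟪α, z.1⟫ ^ 2 + ε)) with hΦ
  have hreg : ∀ᵐ z : Ed d × ℝ, isRegular R z.1 :=
    Measure.quasiMeasurePreserving_fst.ae (ae_regular h)
  have lim : Tendsto (fun ε => ∫ z, Φ ε z) (𝓝[>] 0)
      (𝓝 (∫ z, -4 * ((m : ℝ) - n) * (f z * g z) * cut z * wt Rp κ 0 z)) := by
    refine tendsto_integral_filter_of_dominated_convergence
      (fun z => ((|-4 * ((m : ℝ) - n)| * |f z * g z| + ∑ α ∈ Rp, |2 * κ α * (f z * qg α z - g z * qf α z)|)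
        * wt Rp κ 1 z) * cut z) ?_ ?_ ?_ ?_
    · filter_upwards [self_mem_nhdsWithin] with ε hε
      have cw := continuous_wt (Rp := Rp) (κ := κ) hε
      refine Continuous.aestronglyMeasurable ?_
      refine Continuous.sub (((continuous_const.mul (cf.mul cg)).mul continuous_cut).mul cw)
        (((continuous_cut.pow 2).mul cw).mul ?_)
      refine continuous_finsetSum _ fun α _ => Continuous.mul (continuous_const.mul
        ((cf.mul (cq (hqg' α))).sub (cg.mul (cq (hqf' α))))) (Continuous.div (by fun_prop)
          (by fun_prop) fun z => ?_)
      have : 0 < ε := hε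
      positivity
    · filter_upwards [self_mem_nhdsWithin, Ioc_mem_nhdsGT zero_lt_one] with ε (hε : 0 < ε) hε1
      refine Eventually.of_forall fun z => ?_
      have hw := wt_le h hε.le hε1.2 z
      have hw0 := wt_pos (Rp := Rp) (κ := κ) ε z
      have hc0 := cut_nonneg z
      have hc1 := cut_le_one z
      refine (norm_sub_le _ _).trans ?_
      simp only [Real.norm_eq_abs, abs_mul _ (wt Rp κ ε z), abs_of_pos hw0]
      rw [abs_mul (cut z ^ 2 * _), abs_mul (cut z ^ 2), abs_of_pos hw0, abs_of_nonneg (sq_nonneg (cut z)),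
        abs_mul _ (cut z), abs_of_nonneg hc0, abs_mul (-4 * ((m : ℝ) - n))]
      have hs : |∑ α ∈ Rp, 2 * κ α * (f z * qg α z - g z * qf α z) * (ε / (⟪α, z.1⟫ ^ 2 + ε))| ≤
          ∑ α ∈ Rp, |2 * κ α * (f z * qg α z - g z * qf α z)| := by
        refine (Finset.abs_sum_le_sum_abs _ _).trans (Finset.sum_le_sum fun α _ => ?_)
        rw [abs_mul]
        refine mul_le_of_le_one_right (abs_nonneg _) ?_
        rw [abs_of_nonneg (by positivity), div_le_one (by positivity)]
        nlinarith [sq_nonneg (⟪α, z.1⟫ : ℝ)]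
      set A := |-4 * ((m : ℝ) - n)| * |f z * g z|
      have hA : 0 ≤ A := by positivity
      set B := ∑ α ∈ Rp, |2 * κ α * (f z * qg α z - g z * qf α z)|
      have hB : 0 ≤ B := Finset.sum_nonneg fun _ _ => abs_nonneg _
      calc _ ≤ A * cut z * wt Rp κ 1 z + cut z ^ 2 * wt Rp κ 1 z * B := by
            have := (wt_pos (Rp := Rp) (κ := κ) 1 z).le
            gcongr
        _ ≤ A * cut z * wt Rp κ 1 z + cut z * wt Rp κ 1 z * B := by
            have : cut z ^ 2 ≤ cut z := by nlinarith
            have := (wt_pos (Rp := Rp) (κ := κ) 1 z).le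
            gcongr
        _ = _ := by ring
    · refine integrable_cut (Continuous.mul (Continuous.add (continuous_const.mul
        (cf.mul cg).abs) ?_) (continuous_wt one_pos))
      exact continuous_finsetSum _ fun α _ => (continuous_const.mul
        ((cf.mul (cq (hqg' α))).sub (cg.mul (cq (hqf' α))))).abs
    · filter_upwards [hreg] with z hz
      have hz' : ∀ α ∈ Rp, (⟪α, z.1⟫ : ℝ) ≠ 0 := fun α hα => hz α (h.pos_sub hα)
      have hc : ContinuousAt (fun ε => Φ ε z) 0 := by
        have hw : ContinuousAt (fun ε => wt Rp κ ε z) 0 := by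
          unfold wt
          refine Real.continuous_exp.continuousAt.comp (tendsto_finsetSum _ fun α hα =>
            Tendsto.const_mul _ (Tendsto.log ?_ ?_))
          · exact Continuous.tendsto' (by fun_prop) _ _ rfl
          · have := hz' α hα
            simp [this]
        refine (continuousAt_const.mul hw).sub ((continuousAt_const.mul hw).mul
          (tendsto_finsetSum _ fun α hα => Tendsto.const_mul _ (ContinuousAt.div (by fun_prop) (by fun_prop) ?_)))
        have := hz' α hα
        simp [this]
      have e : Φ 0 z = -4 * ((m : ℝ) - n) * (f z * g z) * cut z * wt Rp κ 0 z := by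
        simp [hΦ]
      rw [← e]
      exact hc.tendsto.mono_left nhdsWithin_le_nhds
  have lim0 : Tendsto (fun ε => ∫ z, Φ ε z) (𝓝[>] 0) (𝓝 0) := by
    refine tendsto_const_nhds.congr' ?_
    filter_upwards [self_mem_nhdsWithin] with ε hε
    exact (green_eps h hf hg fh gh hqf hqg hε).symm
  have := tendsto_nhds_unique lim lim0
  have e : ∀ z, -4 * ((m : ℝ) - n) * (f z * g z) * cut z * wt Rp κ 0 z =
      (-4 * ((m : ℝ) - n)) * (f z * g z * cut z * wt Rp κ 0 z) := fun z => by ring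
  simp only [e] at this
  rw [integral_const_mul] at this
  refine (mul_eq_zero.1 this).resolve_left ?_
  have : (m : ℝ) - n ≠ 0 := sub_ne_zero.2 (by exact_mod_cast hnm.symm)
  simp [this]

/-! ### Interior estimates -/

theorem nsq_add_le {a b : Ed d × ℝ} {A B : ℝ} (hA : 0 ≤ A) (hB : 0 ≤ B) (ha : nsq a ≤ A ^ 2)
    (hb : nsq b ≤ B ^ 2) : nsq (a + b) ≤ (A + B) ^ 2 := by
  unfold nsq at *
  have h1 : ‖a.1 + b.1‖ ≤ ‖a.1‖ + ‖b.1‖ := norm_add_le _ _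
  have h2 : ‖a.1 + b.1‖ ^ 2 ≤ (‖a.1‖ + ‖b.1‖) ^ 2 := by gcongr
  have h3 : ‖a.1‖ * ‖b.1‖ + a.2 * b.2 ≤ A * B := by
    refine abs_le_of_sq_le_sq' ?_ (by positivity) |>.2
    calc (‖a.1‖ * ‖b.1‖ + a.2 * b.2) ^ 2 ≤ (‖a.1‖ ^ 2 + a.2 ^ 2) * (‖b.1‖ ^ 2 + b.2 ^ 2) := by
          nlinarith [sq_nonneg (‖a.1‖ * b.2 - a.2 * ‖b.1‖)]
      _ ≤ A ^ 2 * B ^ 2 := by gcongr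
      _ = (A * B) ^ 2 := by ring
  simp only [Prod.fst_add, Prod.snd_add]
  nlinarith

theorem nsq_smul (t : ℝ) (z : Ed d × ℝ) : nsq (t • z) = t ^ 2 * nsq z := by
  simp only [nsq, Prod.smul_fst, Prod.smul_snd, norm_smul, smul_eq_mul, mul_pow, Real.norm_eq_abs,
    sq_abs]
  ring

theorem nsq_neg (z : Ed d × ℝ) : nsq (-z) = nsq z := by simp [nsq]

theorem HPoly.fderiv_pred {n : ℕ} {f : Ed d × ℝ → ℝ} (hf : HPoly n f) (v : Ed d × ℝ) :
    HPoly (n - 1) (fun z => fderiv ℝ f z v) := by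
  rcases n with _ | n
  · exact (HPoly.zero 0).congr fun z => hf.fderiv_zero v z
  · exact hf.fderiv_succ v

theorem HPoly.markov {n : ℕ} {p : Ed d × ℝ → ℝ} (hp : HPoly n p) {M : ℝ}
    (hb : ∀ z, nsq z ≤ 1 → |p z| ≤ M) {z v : Ed d × ℝ} (hz : nsq z ≤ 1) (hv : nsq v ≤ 1) :
    |fderiv ℝ p z v| ≤ 4 * n ^ 2 * M := by
  have key : ∀ w, nsq w ≤ 1 → |fderiv ℝ p z (w - z)| ≤ 2 * n ^ 2 * M := by
    intro w hw
    obtain ⟨P, hP, hPe⟩ := hp.line z (w - z)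
    have h1 : HasDerivAt (fun t : ℝ => p (z + t • (w - z))) (fderiv ℝ p z (w - z)) 0 :=
      (hp.differentiable z).hasFDerivAt.hasLineDerivAt (w - z)
    have h2 : HasDerivAt (fun t : ℝ => p (z + t • (w - z))) (P.derivative.eval 0) 0 := by
      simp only [hPe]; exact P.hasDerivAt 0
    rw [h1.unique h2]
    refine markov_zero hP fun t ht => ?_
    rw [← hPe]
    refine hb _ ?_
    have e : z + t • (w - z) = (1 - t) • z + t • w := by module
    rw [e]
    have := nsq_add_le (a := (1 - t) • z) (b := t • w) (A := 1 - t) (B := t) (by linarith [ht.2]) ht.1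
      (by rw [nsq_smul]; nlinarith [sq_nonneg (1 - t)]) (by rw [nsq_smul]; nlinarith [sq_nonneg t])
    linarith
  have h1 := key v hv
  have h2 := key 0 (by simp [nsq])
  have e : fderiv ℝ p z v = fderiv ℝ p z (v - z) - fderiv ℝ p z (0 - z) := by
    rw [← map_sub]; congr 1; module
  rw [e]
  rw [abs_le] at h1 h2 ⊢
  constructor <;> linarith [h1.1, h1.2, h2.1, h2.2]

theorem HPoly.lip {n : ℕ} {p : Ed d × ℝ → ℝ} (hp : HPoly n p) {M : ℝ}
    (hb : ∀ z, nsq z ≤ 1 → |p z| ≤ M) {z w : Ed d × ℝ} (hz : nsq z ≤ 1) (hw : nsq w ≤ 1) {r : ℝ}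
    (hr : 0 < r) (hzw : nsq (w - z) ≤ r ^ 2) : |p w - p z| ≤ 4 * n ^ 2 * M * r := by
  have hd : ∀ t : ℝ, HasDerivAt (fun t : ℝ => p (z + t • (w - z)))
      (fderiv ℝ p (z + t • (w - z)) (w - z)) t := by
    intro t
    have h1 : HasDerivAt (fun t : ℝ => z + t • (w - z)) (w - z) t := by
      simpa using ((hasDerivAt_id t).smul_const (w - z)).const_add z
    exact (hp.differentiable _).hasFDerivAt.comp_hasDerivAt t h1
  have := norm_image_sub_le_of_norm_deriv_le_segment_01' (C := 4 * n ^ 2 * M * r)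
    (fun t _ => (hd t).hasDerivWithinAt) (fun t ht => ?_)
  · simpa using this
  · have e : z + t • (w - z) = (1 - t) • z + t • w := by module
    have hin : nsq (z + t • (w - z)) ≤ 1 := by
      rw [e]
      have := nsq_add_le (a := (1 - t) • z) (b := t • w) (A := 1 - t) (B := t) (by linarith [ht.2]) ht.1
        (by rw [nsq_smul]; nlinarith [sq_nonneg (1 - t)]) (by rw [nsq_smul]; nlinarith [sq_nonneg t])
      linarith
    have h1 := hp.markov hb hin (v := r⁻¹ • (w - z)) (by
      rw [nsq_smul, inv_pow, inv_mul_le_iff₀ (by positivity)]; linarith)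
    rw [map_smul, smul_eq_mul, abs_mul, abs_of_pos (inv_pos.2 hr), inv_mul_le_iff₀ hr] at h1
    rw [Real.norm_eq_abs]; linarith

theorem HPoly.scale {n : ℕ} {p : Ed d × ℝ → ℝ} (hp : HPoly n p) {M : ℝ}
    (hb : ∀ z, nsq z ≤ 1 → |p z| ≤ M) {r : ℝ} (hr : 0 < r) {z : Ed d × ℝ} (hz : nsq z ≤ r ^ 2) :
    |p z| ≤ r ^ n * M := by
  have e : z = r • (r⁻¹ • z) := by rw [smul_smul, mul_inv_cancel₀ hr.ne', one_smul]
  rw [e, hp.hom, abs_mul, abs_of_pos (by positivity)]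
  gcongr
  refine hb _ ?_
  rw [nsq_smul, inv_pow, inv_mul_le_iff₀ (by positivity)]; linarith

theorem integrable_wt0 (h : IsRootSystem R Rp κ) {A : Ed d × ℝ → ℝ} (hA : Continuous A) :
    Integrable (fun z => A z * cut z * wt Rp κ 0 z) := by
  refine Integrable.mono' (g := fun z => (|A z| * wt Rp κ 1 z) * cut z)
    (integrable_cut (hA.abs.mul (continuous_wt one_pos))) ?_ (Eventually.of_forall fun z => ?_)
  · exact ((hA.mul continuous_cut).measurable.mul (measurable_wt 0)).aestronglyMeasurable
  · rw [Real.norm_eq_abs, abs_mul, abs_mul, abs_of_nonneg (cut_nonneg z), abs_of_pos (wt_pos 0 z)]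
    have := wt_le h le_rfl zero_le_one z
    have := cut_nonneg z
    calc |A z| * cut z * wt Rp κ 0 z ≤ |A z| * cut z * wt Rp κ 1 z := by gcongr
      _ = _ := by ring

theorem exists_regular (h : IsRootSystem R Rp κ) :
    ∃ v : Ed d, ‖v‖ ≤ 1 ∧ ∃ c : ℝ, 0 < c ∧ c ≤ 1 ∧ ∀ α ∈ R, c ≤ |⟪α, v⟫| := by
  obtain ⟨v0, hv0⟩ := (dense_regular h).nonempty
  have hpos : 0 < ‖v0‖ + 1 := by positivity
  set v := (‖v0‖ + 1)⁻¹ • v0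
  have hv : ∀ α ∈ R, 0 < |⟪α, v⟫| := fun α hα => by
    have := hv0 α hα
    simp only [v, inner_smul_right]
    positivity
  refine ⟨v, ?_, ?_⟩
  · rw [norm_smul, Real.norm_eq_abs, abs_of_pos (inv_pos.2 hpos), inv_mul_le_iff₀ hpos]; linarith
  · have key : ∀ S : Finset (Ed d), (∀ α ∈ S, 0 < |⟪α, v⟫|) →
        ∃ c : ℝ, 0 < c ∧ c ≤ 1 ∧ ∀ α ∈ S, c ≤ |⟪α, v⟫| := by
      intro S
      induction S using Finset.induction_on with
      | empty => exact fun _ => ⟨1, one_pos, le_rfl, by simp⟩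
      | insert a S _ ih =>
        intro hS
        obtain ⟨c, h1, h2, h3⟩ := ih fun α hα => hS α (Finset.mem_insert_of_mem hα)
        refine ⟨min c |⟪a, v⟫|, lt_min h1 (hS a (Finset.mem_insert_self _ _)), (min_le_left _ _).trans h2, ?_⟩
        intro α hα
        rcases Finset.mem_insert.1 hα with rfl | hα
        · exact min_le_right _ _
        · exact (min_le_left _ _).trans (h3 α hα)
    exact key R hv

theorem wt_lower (h : IsRootSystem R Rp κ) {t : ℝ} (ht : 0 < t) (ht1 : t ≤ 1) {z : Ed d × ℝ}
    (hz : ∀ α ∈ Rp, t ≤ |⟪α, z.1⟫|) : t ^ (2 * ⌈∑ α ∈ Rp, κ α⌉₊) ≤ wt Rp κ 0 z := by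
  set g := ⌈∑ α ∈ Rp, κ α⌉₊
  have hl : Real.log t ≤ 0 := Real.log_nonpos ht.le ht1
  have e : t ^ (2 * g) = Real.exp ((g : ℝ) * (2 * Real.log t)) := by
    rw [← Real.exp_log (pow_pos ht (2 * g)), Real.log_pow]; push_cast; ring_nf
  rw [e, wt]
  refine Real.exp_le_exp.2 ?_
  calc (g : ℝ) * (2 * Real.log t) ≤ (∑ α ∈ Rp, κ α) * (2 * Real.log t) :=
        mul_le_mul_of_nonpos_right (Nat.le_ceil _) (by linarith)
    _ = ∑ α ∈ Rp, κ α * (2 * Real.log t) := Finset.sum_mul _ _ _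
    _ ≤ _ := by
      refine Finset.sum_le_sum fun α hα => mul_le_mul_of_nonneg_left ?_
        (h.kappa_nonneg α (h.pos_sub hα))
      have h1 := Real.log_le_log ht (hz α hα)
      rw [add_zero, Real.log_pow, ← Real.log_abs ⟪α, z.1⟫]; push_cast; linarith

theorem le_of_same_sign {a b : ℝ} (h : 0 ≤ a * b) : |b| ≤ |a + b| := by
  rcases le_total 0 b with hb | hb
  · rcases hb.eq_or_lt with rfl | hb
    · simp
    · have : 0 ≤ a := nonneg_of_mul_nonneg_left h hb
      rw [abs_of_nonneg hb.le, abs_of_nonneg (by linarith)]; linarith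
  · rcases hb.eq_or_lt with rfl | hb
    · simp
    · have : a ≤ 0 := by nlinarith
      rw [abs_of_nonpos hb.le, abs_of_nonpos (by linarith)]; linarith

set_option maxHeartbeats 2000000 in
/-- The supremum of a homogeneous invariant polynomial on the unit ball is bounded by its weighted
`L²` norm, with polynomial loss in the degree. By Markov's inequality `|p|` stays above half of its
maximum on a ball of radius comparable to `n⁻²` near a maximum point, and this ball can be moved into
the chamber of a regular vector `v`, where the weight is at least a power of `n⁻¹`. -/
theorem sup_le_l2 (h : IsRootSystem R Rp κ) : ∃ C : ℝ, 1 ≤ C ∧ ∃ A : ℕ, ∀ (n : ℕ) (p : Ed d × ℝ → ℝ),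
    HPoly n p → GInv R p → ∀ z, nsq z ≤ 1 →
      p z ^ 2 ≤ C * (n + 1 : ℝ) ^ A * ∫ z, p z ^ 2 * cut z * wt Rp κ 0 z := by
  obtain ⟨v, hv1, c, hc, hc1, hcv⟩ := exists_regular h
  set g := ⌈∑ α ∈ Rp, κ α⌉₊
  set V : ℝ := (volume : Measure (Ed d × ℝ)).real (ball 0 1)
  have hV : 0 < V := by
    refine ENNReal.toReal_pos ?_ measure_ball_lt_top.ne
    exact (measure_ball_pos _ _ one_pos).ne'
  set c1 : ℝ := (1 / 2) * (1 / 48) * (c / 96) ^ (2 * g) * (c / 192) ^ (d + 1) * V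
  have hc1' : 0 < c1 := by positivity
  refine ⟨max 1 c1⁻¹, le_max_left _ _, 2 * (1 + 2 * g + (d + 1)), fun n p hp hi => ?_⟩
  have cp : Continuous p := (hp.contDiff (k := 1)).continuous
  obtain ⟨zs, hzs, hmax⟩ := (isCompact_nsq (d := d) 0 1).exists_isMaxOn
    ⟨0, by simp [nsq]⟩ (cp.abs).continuousOn
  have hb : ∀ z, nsq z ≤ 1 → |p z| ≤ |p zs| := fun z hz => hmax (by simpa using hz)
  have hzs1 : nsq zs ≤ 1 := by simpa using hzs
  set M := |p zs|
  have hM : 0 ≤ M := abs_nonneg _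
  obtain ⟨σ, hσ, hσv⟩ := chamber h v zs.1
  obtain ⟨L, hL, -, -, hLn⟩ := group_linear h hσ
  set z0 : Ed d × ℝ := (σ zs.1, zs.2) with hz0
  have hz01 : nsq z0 ≤ 1 := by
    have : nsq z0 = nsq zs := by simp only [nsq, hz0]; rw [hL, hLn]
    rw [this]; exact hzs1
  have hpz0 : |p z0| = M := by rw [hz0, hi.group hσ]
  set τ : ℝ := 1 / (48 * (n + 1) ^ 2) with hτd
  have hn1 : (1 : ℝ) ≤ (n + 1) ^ 2 := by nlinarith [(Nat.cast_nonneg n : (0 : ℝ) ≤ n)]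
  have hτ : 0 < τ := by positivity
  have hτ1 : τ ≤ 1 / 48 := by
    rw [hτd]; apply one_div_le_one_div_of_le <;> linarith
  have hτn : 48 * (n : ℝ) ^ 2 * τ ≤ 1 := by
    rw [hτd, mul_one_div, div_le_one (by positivity)]
    nlinarith [(Nat.cast_nonneg n : (0 : ℝ) ≤ n)]
  set z1 : Ed d × ℝ := (1 - 4 * τ) • z0 + τ • ((v, 0) : Ed d × ℝ) with hz1
  have hvn : nsq ((v, 0) : Ed d × ℝ) ≤ 1 := by simp [nsq]; nlinarith [norm_nonneg v]
  have hz1n : nsq z1 ≤ (1 - 4 * τ + τ) ^ 2 := by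
    refine nsq_add_le (by linarith) hτ.le ?_ ?_
    · rw [nsq_smul]; nlinarith [sq_nonneg (1 - 4 * τ)]
    · rw [nsq_smul]; nlinarith [sq_nonneg τ]
  set δ : ℝ := c * τ / 4 with hδd
  have hδ : 0 < δ := by positivity
  have hδτ : δ ≤ τ / 4 := by rw [hδd]; nlinarith
  have hball : ∀ z ∈ ball z1 δ, (M ^ 2 / 4) * (2 * τ) * (c * τ / 2) ^ (2 * g) ≤
      p z ^ 2 * cut z * wt Rp κ 0 z := by
    intro z hz
    rw [mem_ball, Prod.dist_eq, max_lt_iff, dist_eq_norm, Real.dist_eq] at hz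
    have hdn : nsq (z - z1) ≤ τ ^ 2 := by
      have e1 : ‖z.1 - z1.1‖ ^ 2 ≤ δ ^ 2 := by gcongr; exact hz.1.le
      have e2 : (z.2 - z1.2) ^ 2 ≤ δ ^ 2 := by rw [← sq_abs]; gcongr; exact hz.2.le
      simp only [nsq, Prod.fst_sub, Prod.snd_sub]
      nlinarith
    have hzn : nsq z ≤ (1 - 2 * τ) ^ 2 := by
      have := nsq_add_le (a := z1) (b := z - z1) (A := 1 - 4 * τ + τ) (B := τ) (by linarith) hτ.le hz1n hdn
      rw [add_sub_cancel] at this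
      convert this using 2; ring
    have hzn1 : nsq z ≤ 1 := by nlinarith
    have hcut : 2 * τ ≤ cut z := by
      refine le_trans ?_ (le_max_left _ _)
      nlinarith
    have hwt : (c * τ / 2) ^ (2 * g) ≤ wt Rp κ 0 z := by
      refine wt_lower h (by positivity) (by nlinarith) fun α hα => ?_
      have hαR := h.pos_sub hα
      have h1 : c * τ ≤ |⟪α, z1.1⟫| := by
        have e : (⟪α, z1.1⟫ : ℝ) = (1 - 4 * τ) * ⟪α, σ zs.1⟫ + τ * ⟪α, v⟫ := by
          simp [hz1, hz0, inner_add_right, inner_smul_right]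
        rw [e]
        refine le_trans ?_ (le_of_same_sign ?_)
        · rw [abs_mul, abs_of_pos hτ]; nlinarith [hcv α hαR]
        · have := hσv α hαR
          have h48 : 0 ≤ (1 - 4 * τ) * τ := by apply mul_nonneg <;> linarith
          calc (0 : ℝ) ≤ ((1 - 4 * τ) * τ) * (⟪α, σ zs.1⟫ * ⟪α, v⟫) := mul_nonneg h48 this
            _ = _ := by ring
      have h2 : |⟪α, z1.1 - z.1⟫| ≤ 2 * δ := by
        refine (abs_real_inner_le_norm _ _).trans ?_
        have hα2 : ‖α‖ ≤ 2 := by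
          have := h.two hα
          rw [real_inner_self_eq_norm_sq] at this
          nlinarith [norm_nonneg α]
        have := hz.1.le
        rw [norm_sub_rev] at this
        gcongr
      rw [inner_sub_right] at h2
      have h3 := abs_sub_abs_le_abs_sub (⟪α, z1.1⟫ : ℝ) ⟪α, z.1⟫
      have : 2 * δ = c * τ / 2 := by rw [hδd]; ring
      linarith
    have hpz : M / 2 ≤ |p z| := by
      have hd6 : nsq (z - z0) ≤ (6 * τ) ^ 2 := by
        have e : z - z0 = ((-(4 * τ)) • z0 + τ • ((v, 0) : Ed d × ℝ)) + (z - z1) := by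
          rw [hz1]; module
        rw [e]
        have := nsq_add_le (a := (-(4 * τ)) • z0 + τ • ((v, 0) : Ed d × ℝ)) (b := z - z1)
          (A := 4 * τ + τ) (B := τ) (by positivity) hτ.le (nsq_add_le (by positivity) hτ.le
            (by rw [nsq_smul]; nlinarith [sq_nonneg (4 * τ)]) (by rw [nsq_smul]; nlinarith [sq_nonneg τ])) hdn
        convert this using 2; ring
      have h1 := hp.lip hb hz01 hzn1 (by positivity) hd6
      have h2 : 4 * (n : ℝ) ^ 2 * M * (6 * τ) ≤ M / 2 := by
        have := mul_le_mul_of_nonneg_right hτn hM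
        nlinarith
      have h3 := abs_sub_abs_le_abs_sub (p z0) (p z)
      rw [abs_sub_comm] at h1
      rw [hpz0] at h3
      linarith
    have hp2 : M ^ 2 / 4 ≤ p z ^ 2 := by rw [← sq_abs (p z)]; nlinarith
    have h0 : 0 ≤ p z ^ 2 * cut z := mul_nonneg (sq_nonneg _) (cut_nonneg z)
    gcongr
  have hint := integrable_wt0 h (A := fun z => p z ^ 2) (cp.pow 2)
  have hnn : ∀ z, 0 ≤ p z ^ 2 * cut z * wt Rp κ 0 z := fun z =>
    mul_nonneg (mul_nonneg (sq_nonneg _) (cut_nonneg z)) (wt_pos 0 z).le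
  have hlow : (M ^ 2 / 4) * (2 * τ) * (c * τ / 2) ^ (2 * g) * (δ ^ (d + 1) * V) ≤
      ∫ z, p z ^ 2 * cut z * wt Rp κ 0 z := by
    have hvol : (volume : Measure (Ed d × ℝ)).real (ball z1 δ) = δ ^ (d + 1) * V := by
      have := Measure.addHaar_ball_of_pos (volume : Measure (Ed d × ℝ)) z1 hδ
      rw [Measure.real, this, ENNReal.toReal_mul, ENNReal.toReal_ofReal (by positivity)]
      simp [V, Measure.real]
    calc _ = ∫ z in ball z1 δ, (M ^ 2 / 4) * (2 * τ) * (c * τ / 2) ^ (2 * g) := by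
          rw [setIntegral_const, hvol, smul_eq_mul, mul_comm]
      _ ≤ ∫ z in ball z1 δ, p z ^ 2 * cut z * wt Rp κ 0 z :=
          setIntegral_mono_on (integrableOn_const measure_ball_lt_top.ne) hint.integrableOn
            measurableSet_ball hball
      _ ≤ _ := setIntegral_le_integral hint (Eventually.of_forall hnn)
  intro z hz
  have hpM : p z ^ 2 ≤ M ^ 2 := by rw [← sq_abs (p z)]; gcongr; exact hb z hz
  set I := ∫ z, p z ^ 2 * cut z * wt Rp κ 0 z
  have hI : 0 ≤ I := integral_nonneg hnn
  have e : (M ^ 2 / 4) * (2 * τ) * (c * τ / 2) ^ (2 * g) * (δ ^ (d + 1) * V) =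
      M ^ 2 * (c1 / (n + 1 : ℝ) ^ (2 * (1 + 2 * g + (d + 1)))) := by
    have e1 : c * τ / 2 = (c / 96) * ((n + 1 : ℝ) ^ 2)⁻¹ := by rw [hτd]; field_simp; norm_num
    have e2 : δ = (c / 192) * ((n + 1 : ℝ) ^ 2)⁻¹ := by rw [hδd, hτd]; field_simp; norm_num
    have e3 : τ = (1 / 48) * ((n + 1 : ℝ) ^ 2)⁻¹ := by rw [hτd]; field_simp
    have e4 : (((n : ℝ) + 1) ^ (2 * (1 + 2 * g + (d + 1))))⁻¹ = ((n + 1 : ℝ) ^ 2)⁻¹ *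
        (((n + 1 : ℝ) ^ 2)⁻¹) ^ (2 * g) * (((n + 1 : ℝ) ^ 2)⁻¹) ^ (d + 1) := by
      rw [← inv_pow, pow_mul, ← inv_pow]
      ring
    rw [e1, e2, e3, div_eq_mul_inv c1, e4, mul_pow, mul_pow]
    simp only [c1]
    ring
  rw [e] at hlow
  have hnp : (0 : ℝ) < (n + 1 : ℝ) ^ (2 * (1 + 2 * g + (d + 1))) := by positivity
  calc p z ^ 2 ≤ M ^ 2 := hpM
    _ = c1⁻¹ * (n + 1 : ℝ) ^ (2 * (1 + 2 * g + (d + 1))) *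
        (M ^ 2 * (c1 / (n + 1 : ℝ) ^ (2 * (1 + 2 * g + (d + 1))))) := by field_simp
    _ ≤ c1⁻¹ * (n + 1 : ℝ) ^ (2 * (1 + 2 * g + (d + 1))) * I := by gcongr
    _ ≤ _ := by gcongr; exact le_max_right _ _

/-- Bounds for the homogeneous components of an invariant harmonic polynomial, which by orthogonality
have smaller `L²` norm than their sum. -/
theorem comp_bound (h : IsRootSystem R Rp κ) : ∃ C : ℝ, 0 ≤ C ∧ ∃ A : ℕ, ∀ (N : ℕ)
    (p : ℕ → Ed d × ℝ → ℝ), (∀ n, HPoly n (p n)) → (∀ n < N, GInv R (p n)) →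
    (∀ n < N, Harm R Rp κ (p n)) → ∀ B, (∀ z, nsq z ≤ 1 → |∑ n ∈ Finset.range N, p n z| ≤ B) →
      ∀ n < N, ∀ z, nsq z ≤ 1 → |p n z| ≤ C * (n + 1 : ℝ) ^ A * B := by
  obtain ⟨C, hC, A, hCA⟩ := sup_le_l2 h
  set W := ∫ z : Ed d × ℝ, 1 * cut z * wt Rp κ 0 z
  have hW : 0 ≤ W := integral_nonneg fun z => mul_nonneg (mul_nonneg zero_le_one (cut_nonneg z)) (wt_pos 0 z).le
  refine ⟨C * (W + 1), by positivity, A, fun N p hp hi hh B hB n hn z hz => ?_⟩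
  set u := fun z => ∑ n ∈ Finset.range N, p n z
  have cpn : ∀ m, Continuous (p m) := fun m => ((hp m).contDiff (k := 1)).continuous
  have cu : Continuous u := continuous_finsetSum _ fun m _ => cpn m
  have hB0 : 0 ≤ B := (abs_nonneg _).trans (hB 0 (by simp [nsq]))
  have hcross : ∫ z, p n z * u z * cut z * wt Rp κ 0 z = ∫ z, p n z ^ 2 * cut z * wt Rp κ 0 z := by
    have e : ∀ z, p n z * u z * cut z * wt Rp κ 0 z =
        ∑ m ∈ Finset.range N, p n z * p m z * cut z * wt Rp κ 0 z := fun z => by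
      simp only [u, Finset.mul_sum, Finset.sum_mul]
    simp only [e]
    rw [integral_finsetSum _ fun m _ => integrable_wt0 h (A := fun z => p n z * p m z) ((cpn n).mul (cpn m)),
      Finset.sum_eq_single n]
    · simp only [sq]
    · intro m hm hmn
      have hm' := Finset.mem_range.1 hm
      exact orthogonal h (Ne.symm hmn) (hp n) (hp m) (hi n hn) (hi m hm') (hh n hn) (hh m hm')
    · intro hnn; exact absurd (Finset.mem_range.2 hn) hnn
  have hI : ∫ z, p n z ^ 2 * cut z * wt Rp κ 0 z ≤ ∫ z, u z ^ 2 * cut z * wt Rp κ 0 z := by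
    have h0 : 0 ≤ ∫ z, (u z ^ 2 * cut z * wt Rp κ 0 z - 2 * (p n z * u z * cut z * wt Rp κ 0 z) +
        p n z ^ 2 * cut z * wt Rp κ 0 z) := by
      refine integral_nonneg fun z => ?_
      have : u z ^ 2 * cut z * wt Rp κ 0 z - 2 * (p n z * u z * cut z * wt Rp κ 0 z) +
        p n z ^ 2 * cut z * wt Rp κ 0 z = (u z - p n z) ^ 2 * cut z * wt Rp κ 0 z := by ring
      beta_reduce
      rw [this]
      exact mul_nonneg (mul_nonneg (sq_nonneg _) (cut_nonneg z)) (wt_pos 0 z).le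
    have i1 := integrable_wt0 h (A := fun z => u z ^ 2) (cu.pow 2)
    have i2 := (integrable_wt0 h (A := fun z => p n z * u z) ((cpn n).mul cu)).const_mul 2
    have i3 := integrable_wt0 h (A := fun z => p n z ^ 2) ((cpn n).pow 2)
    rw [integral_add (f := fun z => u z ^ 2 * cut z * wt Rp κ 0 z -
      2 * (p n z * u z * cut z * wt Rp κ 0 z)) (i1.sub i2) i3, integral_sub i1 i2, integral_const_mul, hcross] at h0
    linarith
  have hU : ∫ z, u z ^ 2 * cut z * wt Rp κ 0 z ≤ B ^ 2 * W := by
    rw [← integral_const_mul]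
    refine integral_mono (integrable_wt0 h (A := fun z => u z ^ 2) (cu.pow 2))
      ((integrable_wt0 h (A := fun _ => (1 : ℝ)) continuous_const).const_mul _) fun z => ?_
    beta_reduce
    rcases le_total (nsq z) 1 with hz | hz
    · have hu2 : u z ^ 2 ≤ B ^ 2 := by rw [← sq_abs (u z)]; gcongr; exact hB z hz
      have := cut_nonneg z
      have := (wt_pos (Rp := Rp) (κ := κ) 0 z).le
      calc u z ^ 2 * cut z * wt Rp κ 0 z ≤ B ^ 2 * cut z * wt Rp κ 0 z := by gcongr
        _ = _ := by ring
    · simp [cut_eq_zero hz]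
  have h1 := hCA n (p n) (hp n) (hi n hn) z hz
  set X := C * (n + 1 : ℝ) ^ A
  have hX : 1 ≤ X := by
    have : (1 : ℝ) ≤ (n + 1 : ℝ) ^ A := one_le_pow₀ (by linarith [(Nat.cast_nonneg n : (0 : ℝ) ≤ n)])
    nlinarith
  have h2 : p n z ^ 2 ≤ (X * (W + 1) * B) ^ 2 := by
    calc p n z ^ 2 ≤ X * ∫ z, p n z ^ 2 * cut z * wt Rp κ 0 z := h1
      _ ≤ X * (B ^ 2 * W) := by gcongr; linarith
      _ ≤ X * (B ^ 2 * (W + 1) ^ 2) := by gcongr; nlinarith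
      _ ≤ X ^ 2 * (B ^ 2 * (W + 1) ^ 2) := by gcongr; nlinarith
      _ = _ := by ring
  have := abs_le_of_sq_le_sq h2 (by positivity)
  calc _ ≤ _ := this
    _ = _ := by simp only [X]; ring

theorem pow_pred_le {r : ℝ} (hr : 0 < r) (n : ℕ) : r ^ (n - 1) ≤ (1 + 1 / r) * r ^ n := by
  rcases n with _ | n
  · simp; positivity
  · have : (1 + 1 / r) * r ^ (n + 1) = r ^ (n + 1) + r ^ n := by field_simp; ring
    rw [this]; simp; positivity

/-- Interior estimates for the first and second derivatives: the polynomial growth in `comp_bound`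
is summable against the geometric decay `(r/ρ)ⁿ`. -/
theorem interior0 (h : IsRootSystem R Rp κ) {r ρ : ℝ} (hr : 0 < r) (hρ : r < ρ) :
    ∃ C : ℝ, ∀ u : Ed d × ℝ → ℝ, PolySum u → GInv R u → Harm R Rp κ u → ∀ B,
      (∀ z, nsq z ≤ ρ ^ 2 → |u z| ≤ B) → ∀ z, nsq z ≤ r ^ 2 → ∀ v w, nsq v ≤ 1 → nsq w ≤ 1 →
      |fderiv ℝ u z v| ≤ C * B ∧ |fderiv ℝ (fun q => fderiv ℝ u q v) z w| ≤ C * B := by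
  obtain ⟨C, hC, A, hCA⟩ := comp_bound h
  have hρ0 : 0 < ρ := hr.trans hρ
  set t : ℕ → ℝ := fun n => ((n : ℝ) + 1) ^ (A + 4) * (r / ρ) ^ n
  have hsum : Summable t := by
    have h1 : Summable fun n : ℕ => ((n : ℝ)) ^ (A + 4) * (r / ρ) ^ n :=
      summable_pow_mul_geometric_of_norm_lt_one (A + 4) (by
        rw [Real.norm_eq_abs, abs_of_pos (by positivity), div_lt_one hρ0]; exact hρ)
    have h2 := ((summable_nat_add_iff 1).2 h1).mul_right (ρ / r)
    refine h2.congr fun n => ?_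
    simp only [t]
    push_cast
    rw [pow_succ (r / ρ) n]
    have : r / ρ * (ρ / r) = 1 := by field_simp
    calc _ = ((n : ℝ) + 1) ^ (A + 4) * (r / ρ) ^ n * (r / ρ * (ρ / r)) := by ring
      _ = _ := by rw [this, mul_one]
  have ht0 : ∀ n, 0 ≤ t n := fun n => by positivity
  set K := (1 + 1 / r) with hK
  have hK1 : 1 ≤ K := by rw [hK]; have : 0 < 1 / r := by positivity
                         linarith
  refine ⟨16 * C * K ^ 2 * ∑' n, t n, fun u hu hi hh B hB z hz v w hv hw => ?_⟩
  have hB0 : 0 ≤ B := (abs_nonneg _).trans (hB 0 (by simp [nsq]; positivity))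
  obtain ⟨N, p, hp, hsumu⟩ := hu
  obtain rfl : u = fun z => ∑ n ∈ Finset.range N, p n z := funext hsumu
  have hpi := PolySum.comp_ginv hp hi
  have hph := PolySum.comp_harm hp hh
  have hb := hCA N (fun n z => ρ ^ n * p n z) (fun n => (hp n).smul _)
    (fun n hn α hα z => by beta_reduce; rw [hpi n hn α hα]) (fun n hn => (hph n hn).smul (hp n).contDiff _)
    B (fun z hz => by
      have := hB (ρ • z) (by rw [nsq_smul]; nlinarith [sq_nonneg ρ])
      simpa only [(hp _).hom] using this)
  have hM : ∀ n < N, ∀ z, nsq z ≤ 1 → |p n z| ≤ (ρ ^ n)⁻¹ * (C * (n + 1 : ℝ) ^ A * B) := by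
    intro n hn z hz
    have := hb n hn z hz
    rw [abs_mul, abs_of_pos (by positivity)] at this
    rw [← div_eq_inv_mul, le_div_iff₀ (by positivity)]; linarith
  have hd1 : ∀ n < N, ∀ z, nsq z ≤ 1 → |fderiv ℝ (p n) z v| ≤
      4 * n ^ 2 * ((ρ ^ n)⁻¹ * (C * (n + 1 : ℝ) ^ A * B)) := fun n hn z hz =>
    (hp n).markov (hM n hn) hz hv
  have hd2 : ∀ n < N, ∀ z, nsq z ≤ 1 → |fderiv ℝ (fun q => fderiv ℝ (p n) q v) z w| ≤
      4 * ((n - 1 : ℕ) : ℝ) ^ 2 * (4 * n ^ 2 * ((ρ ^ n)⁻¹ * (C * (n + 1 : ℝ) ^ A * B))) :=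
    fun n hn z hz => ((hp n).fderiv_pred v).markov (hd1 n hn) hz hw
  have hnn : ∀ n : ℕ, ((n - 1 : ℕ) : ℝ) ≤ n + 1 := fun n => by
    have : ((n - 1 : ℕ) : ℝ) ≤ n := by exact_mod_cast Nat.sub_le n 1
    linarith
  have b1 : ∀ n < N, |fderiv ℝ (p n) z v| ≤ 16 * C * K ^ 2 * B * t n := by
    intro n hn
    have := ((hp n).fderiv_pred v).scale (hd1 n hn) hr hz
    calc _ ≤ _ := this
      _ ≤ (K * r ^ n) * (4 * (n + 1 : ℝ) ^ 2 * ((ρ ^ n)⁻¹ * (C * (n + 1 : ℝ) ^ A * B))) := by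
        gcongr
        · exact pow_pred_le hr n
        · linarith
      _ = 4 * C * K * B * ((n + 1 : ℝ) ^ (A + 2) * (r / ρ) ^ n) := by rw [div_pow]; field_simp; ring
      _ ≤ 16 * C * K ^ 2 * B * ((n + 1 : ℝ) ^ (A + 4) * (r / ρ) ^ n) := by
        have : (1 : ℝ) ≤ n + 1 := by linarith [(Nat.cast_nonneg n : (0 : ℝ) ≤ n)]
        gcongr
        · norm_num
        · nlinarith
        · norm_num
  have b2 : ∀ n < N, |fderiv ℝ (fun q => fderiv ℝ (p n) q v) z w| ≤ 16 * C * K ^ 2 * B * t n := by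
    intro n hn
    have := (((hp n).fderiv_pred v).fderiv_pred w).scale (hd2 n hn) hr hz
    have hpp : r ^ (n - 1 - 1) ≤ K * (K * r ^ n) :=
      (pow_pred_le hr _).trans (mul_le_mul_of_nonneg_left (pow_pred_le hr n) (by positivity))
    calc _ ≤ _ := this
      _ ≤ (K * (K * r ^ n)) * (4 * (n + 1 : ℝ) ^ 2 * (4 * (n + 1 : ℝ) ^ 2 * ((ρ ^ n)⁻¹ * (C * (n + 1 : ℝ) ^ A * B)))) := by
        gcongr
        · exact hnn n
        · linarith
      _ = 16 * C * K ^ 2 * B * t n := by simp only [t]; rw [div_pow]; field_simp; ring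
  have hfin : ∑ n ∈ Finset.range N, t n ≤ ∑' n, t n := hsum.sum_le_tsum _ fun n _ => ht0 n
  have hpd : ∀ n, Differentiable ℝ (p n) := fun n => (hp n).differentiable
  have e1 : ∀ q, fderiv ℝ (fun z => ∑ n ∈ Finset.range N, p n z) q v =
      ∑ n ∈ Finset.range N, fderiv ℝ (p n) q v := fun q => by
    rw [fderiv_fun_sum fun n _ => hpd n q, sum_apply]
  have tot : ∀ a : ℕ → ℝ, (∀ n < N, |a n| ≤ 16 * C * K ^ 2 * B * t n) →
      |∑ n ∈ Finset.range N, a n| ≤ 16 * C * K ^ 2 * (∑' n, t n) * B := by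
    intro a ha
    calc _ ≤ ∑ n ∈ Finset.range N, |a n| := Finset.abs_sum_le_sum_abs _ _
      _ ≤ ∑ n ∈ Finset.range N, 16 * C * K ^ 2 * B * t n :=
        Finset.sum_le_sum fun n hn => ha n (Finset.mem_range.1 hn)
      _ = 16 * C * K ^ 2 * B * ∑ n ∈ Finset.range N, t n := by rw [Finset.mul_sum]
      _ ≤ 16 * C * K ^ 2 * B * ∑' n, t n := by gcongr
      _ = _ := by ring
  constructor
  · rw [e1]; exact tot _ b1
  · simp only [e1]
    rw [fderiv_fun_sum fun n _ => ((hp n).fderiv_pred v).differentiable z, sum_apply]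
    exact tot _ b2

theorem fderiv_translate (f : Ed d × ℝ → ℝ) (c p v : Ed d × ℝ) :
    fderiv ℝ (fun z => f (z + c)) p v = fderiv ℝ f (p + c) v := by
  rw [fderiv_comp_add_right]

/-- Interior estimates on balls centred on the vertical axis. -/
theorem interior_est (h : IsRootSystem R Rp κ) {r ρ : ℝ} (hr : 0 < r) (hρ : r < ρ) :
    ∃ C : ℝ, ∀ u : Ed d × ℝ → ℝ, PolySum u → GInv R u → Harm R Rp κ u → ∀ B c : ℝ,
      (∀ z, nsq (z - (0, c)) ≤ ρ ^ 2 → |u z| ≤ B) → ∀ z, nsq (z - (0, c)) ≤ r ^ 2 → ∀ v w,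
      nsq v ≤ 1 → nsq w ≤ 1 →
      |fderiv ℝ u z v| ≤ C * B ∧ |fderiv ℝ (fun q => fderiv ℝ u q v) z w| ≤ C * B := by
  obtain ⟨C, hC⟩ := interior0 h hr hρ
  refine ⟨C, fun u hu hi hh B c hB z hz v w hv hw => ?_⟩
  have := hC (fun z => u (z + (0, c))) (hu.translate _) (hi.translate c) (hh.translate c) B
    (fun z hz => hB _ (by simpa using hz)) (z - (0, c)) hz v w hv hw
  simp only [fderiv_translate] at this
  rw [fderiv_translate (fun q => fderiv ℝ u q v)] at this
  simpa using this

/-! ### Limits of harmonic polynomials -/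

/-- Pointwise limits of `C¹` functions whose derivatives are uniformly Cauchy along a filter are `C¹`,
and the derivatives converge to the derivative of the limit. -/
theorem deriv_limit {U : Filter ℕ} [U.NeBot] {S : Set (Ed d × ℝ)} (hS : IsOpen S)
    {g : ℕ → Ed d × ℝ → ℝ} {G : Ed d × ℝ → ℝ} (hg : ∀ n, ContDiff ℝ 1 (g n))
    (hlim : ∀ z ∈ S, Tendsto (fun n => g n z) U (𝓝 (G z)))
    (hC : ∀ ε > 0, ∀ᶠ q in U ×ˢ U, ∀ z ∈ S, ∀ v : Ed d × ℝ, ‖v‖ ≤ 1 →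
      |fderiv ℝ (g q.1) z v - fderiv ℝ (g q.2) z v| ≤ ε) :
    ContDiffOn ℝ 1 G S ∧ ∀ z ∈ S, Tendsto (fun n => fderiv ℝ (g n) z) U (𝓝 (fderiv ℝ G z)) := by
  have hCau : UniformCauchySeqOn (fun n z => fderiv ℝ (g n) z) U S := by
    intro u hu
    obtain ⟨ε, hε, hεu⟩ := Metric.mem_uniformity_dist.1 hu
    filter_upwards [hC (ε / 2) (by positivity)] with q hq z hz
    refine hεu ?_
    rw [dist_eq_norm]
    refine lt_of_le_of_lt (ContinuousLinearMap.opNorm_le_of_unit_norm (C := ε / 2) (by positivity) ?_)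
      (by linarith)
    intro v hv
    simpa using hq z hz v hv.le
  have hex : ∀ z : Ed d × ℝ, ∃ L : (Ed d × ℝ) →L[ℝ] ℝ, z ∈ S →
      Tendsto (fun n => fderiv ℝ (g n) z) U (𝓝 L) := by
    intro z
    by_cases hz : z ∈ S
    · obtain ⟨L, hL⟩ := CompleteSpace.complete (hCau.cauchy_map hz)
      exact ⟨L, fun _ => hL⟩
    · exact ⟨0, fun h => absurd h hz⟩
  choose L hL using hex
  have hunif := hCau.tendstoUniformlyOn_of_tendsto hL
  have hder : ∀ z ∈ S, HasFDerivAt G (L z) z := fun z hz =>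
    hasFDerivAt_of_tendstoUniformlyOn hS hunif
      (fun n z _ => ((hg n).differentiable (by norm_num) z).hasFDerivAt) hlim hz
  have hcont : ContinuousOn L S := hunif.continuousOn
    (Eventually.frequently (Eventually.of_forall fun n =>
      ((hg n).continuous_fderiv (by norm_num)).continuousOn))
  refine ⟨?_, fun z hz => by rw [(hder z hz).fderiv]; exact hL z hz⟩
  have : (1 : WithTop ℕ∞) = 0 + 1 := by norm_num
  rw [this, contDiffOn_succ_iff_fderiv_of_isOpen hS]
  refine ⟨fun z hz => (hder z hz).differentiableAt.differentiableWithinAt, by simp, ?_⟩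
  rw [contDiffOn_zero]
  exact hcont.congr fun z hz => (hder z hz).fderiv

theorem nsq_half {v : Ed d × ℝ} (hv : ‖v‖ ≤ 1) : nsq ((1 / 2 : ℝ) • v) ≤ 1 := by
  rw [Prod.norm_def, max_le_iff, Real.norm_eq_abs] at hv
  rw [nsq_smul, nsq]
  have h1 : ‖v.1‖ ^ 2 ≤ 1 := pow_le_one₀ (norm_nonneg _) hv.1
  have h2 : v.2 ^ 2 ≤ 1 := by rw [← sq_abs]; exact pow_le_one₀ (abs_nonneg _) hv.2
  nlinarith

theorem interior_norm (h : IsRootSystem R Rp κ) {r ρ : ℝ} (hr : 0 < r) (hρ : r < ρ) :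
    ∃ C : ℝ, 0 < C ∧ ∀ u : Ed d × ℝ → ℝ, PolySum u → GInv R u → Harm R Rp κ u → ∀ B c : ℝ,
      (∀ z, nsq (z - (0, c)) ≤ ρ ^ 2 → |u z| ≤ B) → ∀ z, nsq (z - (0, c)) ≤ r ^ 2 →
      ∀ v w : Ed d × ℝ, ‖v‖ ≤ 1 → ‖w‖ ≤ 1 →
      |fderiv ℝ u z v| ≤ C * B ∧ |fderiv ℝ (fun q => fderiv ℝ u q v) z w| ≤ C * B := by
  obtain ⟨C, hC⟩ := interior_est h hr hρ
  refine ⟨4 * |C| + 1, by positivity, fun u hu hi hh B c hB z hz v w hv hw => ?_⟩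
  have hB0 : 0 ≤ B := (abs_nonneg _).trans (hB (0, c) (by simp [nsq]; positivity))
  obtain ⟨h1, h2⟩ := hC u hu hi hh B c hB z hz _ _ (nsq_half hv) (nsq_half hw)
  have hCB : C * B ≤ |C| * B := by gcongr; exact le_abs_self C
  have e : (fun q => fderiv ℝ u q ((1 / 2 : ℝ) • v)) = (1 / 2 : ℝ) • fun q => fderiv ℝ u q v := by
    ext q; simp
  rw [e, fderiv_const_smul_field, map_smul, Pi.smul_apply, smul_apply, smul_smul, smul_eq_mul,
    abs_mul] at h2
  rw [map_smul, smul_eq_mul, abs_mul] at h1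
  norm_num at h1 h2
  have : 0 ≤ |C| * B := by positivity
  constructor <;> linarith

theorem upper_cover {p : Ed d × ℝ} (hp : 0 < p.2) :
    ∃ c r : ℝ, 0 < r ∧ r < c ∧ nsq (p - (0, c)) < r ^ 2 := by
  set c := (nsq p + 1) / (2 * p.2) + 1 with hc
  have hc0 : 0 < c := by have := nsq_nonneg p; positivity
  have h1 : nsq (p - (0, c)) < c ^ 2 := by
    have e : nsq (p - (0, c)) = nsq p - 2 * p.2 * c + c ^ 2 := by simp [nsq]; ring
    have : 2 * p.2 * c = nsq p + 1 + 2 * p.2 := by rw [hc]; field_simp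
    rw [e, this]; linarith
  have h2 : √(nsq (p - (0, c))) < c := by rw [Real.sqrt_lt' hc0]; exact h1
  refine ⟨c, (√(nsq (p - (0, c))) + c) / 2, by positivity, by linarith, ?_⟩
  calc _ = √(nsq (p - (0, c))) ^ 2 := (Real.sq_sqrt (nsq_nonneg _)).symm
    _ < _ := by gcongr; linarith

theorem pos_of_nsq {z : Ed d × ℝ} {c r : ℝ} (hr : 0 < r) (hrc : r < c)
    (hz : nsq (z - (0, c)) ≤ r ^ 2) : 0 < z.2 := by
  have h1 : (z.2 - c) ^ 2 ≤ r ^ 2 := by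
    refine le_trans ?_ hz
    simp [nsq]
  have := abs_le_of_sq_le_sq h1 hr.le
  rw [abs_le] at this; linarith [this.1]

theorem PolySum.cd {u : Ed d × ℝ → ℝ} (hu : PolySum u) : ContDiff ℝ 2 u := hu.contDiff

/-- Limits along a filter of locally bounded invariant harmonic polynomials are `κ`-harmonic. -/
theorem limit_harm (h : IsRootSystem R Rp κ) {U : Filter ℕ} [U.NeBot] {f : ℕ → Ed d × ℝ → ℝ}
    (hP : ∀ n, PolySum (f n)) (hI : ∀ n, GInv R (f n)) (hH : ∀ n, Harm R Rp κ (f n)) {b : ℝ → ℝ}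
    (hb : ∀ c ρ : ℝ, 0 < ρ → ρ < c → ∀ᶠ n in U, ∀ z, nsq (z - (0, c)) ≤ ρ ^ 2 → |f n z| ≤ b c)
    {H : Ed d × ℝ → ℝ} (hlim : ∀ z, 0 < z.2 → Tendsto (fun n => f n z) U (𝓝 (H z)))
    (hHi : GInv R H) : KHarmonicOn R Rp κ H (upperHS d) := by
  have main : ∀ c r : ℝ, 0 < r → r < c →
      ContDiffOn ℝ 2 H {z | nsq (z - (0, c)) < r ^ 2} ∧ ∀ z, nsq (z - (0, c)) < r ^ 2 →
        ∀ v, Tendsto (fun n => fderiv ℝ (f n) z v) U (𝓝 (fderiv ℝ H z v)) ∧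
          Tendsto (fun n => pd2 (f n) z v) U (𝓝 (pd2 H z v)) := by
    intro c r hr hrc
    set s := (c - r) / 4 with hs
    have hs0 : 0 < s := by rw [hs]; linarith
    have hop : ∀ t : ℝ, IsOpen {z : Ed d × ℝ | nsq (z - (0, c)) < t ^ 2} := fun t =>
      isOpen_lt (continuous_nsq.comp (continuous_id.sub continuous_const)) continuous_const
    obtain ⟨C1, hC1, hE1⟩ := interior_norm h (r := r + 2 * s) (ρ := r + 3 * s) (by positivity) (by linarith)
    obtain ⟨C2, hC2, hE2⟩ := interior_norm h (r := r) (ρ := r + s) hr (by linarith)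
    set B := b c
    have hB0 : ∀ᶠ n in U, ∀ z, nsq (z - (0, c)) ≤ (r + 3 * s) ^ 2 → |f n z| ≤ B :=
      hb c _ (by positivity) (by rw [hs]; linarith)
    have hBn : 0 ≤ B := by
      obtain ⟨n, hn⟩ := hB0.exists
      exact (abs_nonneg _).trans (hn (0, c) (by simp [nsq]; positivity))
    -- uniform convergence on a slightly larger ball
    have hunif : TendstoUniformlyOn f H U {z | nsq (z - (0, c)) ≤ (r + s) ^ 2} := by
      rw [← tendstoLocallyUniformlyOn_iff_tendstoUniformlyOn_of_compact (isCompact_nsq _ _)]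
      rw [Metric.tendstoLocallyUniformlyOn_iff]
      intro ε hε z hz
      have hz2 : z ∈ {z : Ed d × ℝ | nsq (z - (0, c)) < (r + 2 * s) ^ 2} :=
        by
        have hz' : nsq (z - (0, c)) ≤ (r + s) ^ 2 := hz
        have : (r + s) ^ 2 < (r + 2 * s) ^ 2 := by gcongr; linarith
        exact lt_of_le_of_lt hz' this
      obtain ⟨δ, hδ, hδs⟩ := Metric.isOpen_iff.1 (hop (r + 2 * s)) z hz2
      set η := min δ (ε / (4 * (C1 * B + 1))) with hη
      have hη0 : 0 < η := by positivity
      have hsub : ball z η ⊆ {z : Ed d × ℝ | nsq (z - (0, c)) < (r + 2 * s) ^ 2} :=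
        (ball_subset_ball (min_le_left _ _)).trans hδs
      have hLip : ∀ᶠ n in U, ∀ w ∈ ball z η, |f n w - f n z| ≤ ε / 4 := by
        filter_upwards [hB0] with n hn w hw
        have hd : ∀ x ∈ ball z η, ‖fderiv ℝ (f n) x‖ ≤ C1 * B := fun x hx =>
          ContinuousLinearMap.opNorm_le_of_unit_norm (by positivity) fun v hv =>
            (hE1 (f n) (hP n) (hI n) (hH n) B c hn x (hsub hx).le v v hv.le hv.le).1
        have := (convex_ball z η).norm_image_sub_le_of_norm_fderiv_le
          (fun x _ => (hP n).cd.differentiable (by norm_num) x) hd (mem_ball_self hη0) hw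
        rw [Real.norm_eq_abs] at this
        refine this.trans ?_
        have h1 : ‖w - z‖ ≤ ε / (4 * (C1 * B + 1)) := by
          rw [← dist_eq_norm]; exact (mem_ball.1 hw).le.trans (min_le_right _ _)
        calc C1 * B * ‖w - z‖ ≤ (C1 * B + 1) * (ε / (4 * (C1 * B + 1))) := by
              gcongr; linarith
          _ = ε / 4 := by field_simp
      have hpos : ∀ w ∈ ball z η, 0 < w.2 := fun w hw =>
        pos_of_nsq (by positivity) (by rw [hs]; linarith) (hsub hw).le
      have hLipH : ∀ w ∈ ball z η, |H w - H z| ≤ ε / 4 := fun w hw =>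
        le_of_tendsto ((hlim w (hpos w hw)).sub (hlim z (hpos z (mem_ball_self hη0)))).abs
          (hLip.mono fun n hn => hn w hw)
      refine ⟨ball z η, mem_nhdsWithin_of_mem_nhds (ball_mem_nhds z hη0), ?_⟩
      have hz0 := Metric.tendsto_nhds.1 (hlim z (hpos z (mem_ball_self hη0))) (ε / 4) (by positivity)
      filter_upwards [hLip, hz0] with n h1 h2 w hw
      have h1 := h1 w hw
      have h3 := hLipH w hw
      rw [Real.dist_eq] at h2 ⊢
      rw [abs_le] at h1 h3
      rw [abs_lt] at h2 ⊢
      constructor <;> linarith [h1.1, h1.2, h2.1, h2.2, h3.1, h3.2]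
    have hder : ∀ ε > 0, ∀ᶠ q in U ×ˢ U, ∀ z ∈ {z : Ed d × ℝ | nsq (z - (0, c)) < r ^ 2},
        ∀ v w : Ed d × ℝ, ‖v‖ ≤ 1 → ‖w‖ ≤ 1 → |fderiv ℝ (f q.1) z v - fderiv ℝ (f q.2) z v| ≤ ε ∧
          |fderiv ℝ (fun y => fderiv ℝ (f q.1) y v) z w - fderiv ℝ (fun y => fderiv ℝ (f q.2) y v) z w|
            ≤ ε := by
      intro ε hε
      have h1 := Metric.tendstoUniformlyOn_iff.1 hunif (ε / (2 * C2)) (by positivity)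
      filter_upwards [h1.prod_mk h1] with q hq z hz v w hv hw
      have hd1 : ∀ n, Differentiable ℝ (f n) := fun n => (hP n).cd.differentiable (by norm_num)
      have hd2 : ∀ n, Differentiable ℝ fun y => fderiv ℝ (f n) y v := fun n =>
        (((hP n).cd.fderiv_right (m := 1) (by norm_num)).clm_apply contDiff_const).differentiable
          (by norm_num)
      have := hE2 (fun z => f q.1 z - f q.2 z) ((hP _).sub (hP _)) ((hI _).sub (hI _))
        ((hH _).sub (hH _) (hP _).cd (hP _).cd) (ε / C2) c (fun z hz => by
          have a1 := hq.1 z hz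
          have a2 := hq.2 z hz
          rw [Real.dist_eq, abs_lt] at a1 a2
          have : ε / C2 = ε / (2 * C2) + ε / (2 * C2) := by field_simp; norm_num
          rw [this, abs_le]
          constructor <;> linarith [a1.1, a1.2, a2.1, a2.2]) z (le_of_lt hz) v w hv hw
      rw [mul_div_cancel₀ _ hC2.ne'] at this
      have e : (fun y => fderiv ℝ (fun z => f q.1 z - f q.2 z) y v) =
          fun y => fderiv ℝ (f q.1) y v - fderiv ℝ (f q.2) y v := by
        ext y; rw [fderiv_fun_sub (hd1 _ y) (hd1 _ y)]; rfl
      rw [e, fderiv_fun_sub (hd1 _ z) (hd1 _ z), fderiv_fun_sub (hd2 _ z) (hd2 _ z)] at this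
      exact this
    have first := deriv_limit (hop r) (fun n => (hP n).cd.of_le (by norm_num))
      (fun z hz => hlim z (pos_of_nsq hr hrc (le_of_lt hz)))
      (fun ε hε => (hder ε hε).mono fun q hq z hz v hv => (hq z hz v v hv hv).1)
    have second : ∀ v : Ed d × ℝ, ‖v‖ ≤ 1 → _ := fun v hv => deriv_limit (hop r)
      (g := fun n y => fderiv ℝ (f n) y v) (G := fun y => fderiv ℝ H y v)
      (fun n => ((hP n).cd.fderiv_right (m := 1) (by norm_num)).clm_apply contDiff_const)
      (fun z hz => ((ContinuousLinearMap.apply ℝ ℝ v).continuous.tendsto _).comp (first.2 z hz))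
      (fun ε hε => (hder ε hε).mono fun q hq z hz w hw => (hq z hz v w hv hw).2)
    have unit : ∀ v : Ed d × ℝ, ∃ (t : ℝ) (v' : Ed d × ℝ), ‖v'‖ ≤ 1 ∧ v = t • v' := fun v => by
      refine ⟨‖v‖ + 1, (‖v‖ + 1)⁻¹ • v, ?_, by rw [smul_smul, mul_inv_cancel₀ (by positivity), one_smul]⟩
      rw [norm_smul, norm_inv, Real.norm_eq_abs, abs_of_pos (by positivity), inv_mul_le_iff₀ (by positivity)]
      linarith
    have sm : ∀ (g : Ed d × ℝ → ℝ) (t : ℝ) (v : Ed d × ℝ), (fun q => fderiv ℝ g q (t • v)) =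
        t • fun q => fderiv ℝ g q v := fun g t v => by ext q; simp
    refine ⟨?_, fun z hz v => ⟨?_, ?_⟩⟩
    · have : (2 : WithTop ℕ∞) = 1 + 1 := by norm_num
      rw [this, contDiffOn_succ_iff_fderiv_of_isOpen (hop r)]
      refine ⟨first.1.differentiableOn (by norm_num), by simp, contDiffOn_clm_apply.2 fun v => ?_⟩
      obtain ⟨t, v', hv', rfl⟩ := unit v
      rw [sm]
      exact (second v' hv').1.const_smul t
    · exact ((ContinuousLinearMap.apply ℝ ℝ v).continuous.tendsto _).comp (first.2 z hz)
    · obtain ⟨t, v', hv', rfl⟩ := unit v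
      have h2 := (second v' hv').2 z hz
      have h3 := ((ContinuousLinearMap.apply ℝ ℝ v').continuous.tendsto _).comp h2
      have e : ∀ g : Ed d × ℝ → ℝ, pd2 g z (t • v') =
          t • t • fderiv ℝ (fun q => fderiv ℝ g q v') z v' := fun g => by
        rw [pd2, sm, fderiv_const_smul_field, map_smul, Pi.smul_apply, smul_apply]
      simp only [e]
      exact (h3.const_smul t).const_smul t
  constructor
  · intro p hp
    obtain ⟨c, r, hr, hrc, hpr⟩ := upper_cover (d := d) hp
    have hop : IsOpen {z : Ed d × ℝ | nsq (z - (0, c)) < r ^ 2} :=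
      isOpen_lt (continuous_nsq.comp (continuous_id.sub continuous_const)) continuous_const
    exact ((main c r hr hrc).1.contDiffAt (hop.mem_nhds hpr)).contDiffWithinAt
  · intro p hp hreg
    obtain ⟨c, r, hr, hrc, hpr⟩ := upper_cover (d := d) hp
    have hm := (main c r hr hrc).2 p hpr
    rw [dunklLap_eq_LK h.pos_sub hHi]
    have hl : Tendsto (fun n => LK Rp κ (f n) p) U (𝓝 (LK Rp κ H p)) := by
      unfold LK lapE
      refine Tendsto.add (Tendsto.add (tendsto_finsetSum _ fun i _ => (hm _).2) (hm _).2) ?_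
      refine (tendsto_finsetSum _ fun α _ => ?_).const_mul 2
      exact ((hm _).1.div_const _).const_mul _
    refine tendsto_nhds_unique hl ?_
    have : (fun n => LK Rp κ (f n) p) = fun _ => 0 := funext fun n => hH n p hreg
    rw [this]
    exact tendsto_const_nhds

/-! ### The classical Poisson kernel -/

/-- The Euclidean inner product on `ℝ^d × ℝ`. -/
def bil {d : ℕ} (w v : Ed d × ℝ) : ℝ := ⟪w.1, v.1⟫ + w.2 * v.2

/-- The exponent of the Poisson kernel. -/
def pexp (d : ℕ) : ℝ := ((d : ℝ) + 1) / 2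

/-- The unnormalized Poisson kernel `y (|x|² + y²)^{-(d+1)/2}`. -/
def pk {d : ℕ} (w : Ed d × ℝ) : ℝ := w.2 * nsq w ^ (-pexp d)

/-- First directional derivative of the Poisson kernel. -/
def pk1 {d : ℕ} (w v : Ed d × ℝ) : ℝ :=
  nsq w ^ (-pexp d) * (v.2 - 2 * pexp d * w.2 * bil w v / nsq w)

/-- Second directional derivative of the Poisson kernel. -/
def pk2 {d : ℕ} (w v : Ed d × ℝ) : ℝ :=
  nsq w ^ (-pexp d) * (-4 * pexp d * v.2 * bil w v / nsq w +
    4 * pexp d * (pexp d + 1) * w.2 * bil w v ^ 2 / nsq w ^ 2 - 2 * pexp d * w.2 * nsq v / nsq w)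

theorem pexp_pos : 0 < pexp d := by unfold pexp; positivity

theorem nsq_pos {w : Ed d × ℝ} (hw : 0 < w.2) : 0 < nsq w := by unfold nsq; positivity

theorem bil_sq_le (w v : Ed d × ℝ) : bil w v ^ 2 ≤ nsq w * nsq v := by
  have h := abs_real_inner_le_norm w.1 v.1
  have h1 : (⟪w.1, v.1⟫ : ℝ) ^ 2 ≤ ‖w.1‖ ^ 2 * ‖v.1‖ ^ 2 := by
    rw [← sq_abs, ← mul_pow]; gcongr
  have h2 : 2 * (⟪w.1, v.1⟫ * (w.2 * v.2) : ℝ) ≤ ‖w.1‖ ^ 2 * v.2 ^ 2 + ‖v.1‖ ^ 2 * w.2 ^ 2 := by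
    have a1 : (⟪w.1, v.1⟫ * (w.2 * v.2) : ℝ) ≤ (‖w.1‖ * ‖v.1‖) * |w.2 * v.2| := by
      refine (le_abs_self _).trans ?_
      rw [abs_mul]; gcongr
    rw [abs_mul] at a1
    have a2 := sq_nonneg (‖w.1‖ * |v.2| - ‖v.1‖ * |w.2|)
    have a3 := sq_abs v.2
    have a4 := sq_abs w.2
    nlinarith
  unfold bil nsq
  nlinarith

theorem hasDerivAt_line (w v : Ed d × ℝ) (s : ℝ) :
    HasDerivAt (fun s : ℝ => nsq (w + s • v)) (2 * bil (w + s • v) v) s := by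
  have e : (fun s : ℝ => nsq (w + s • v)) = fun s => nsq w + 2 * bil w v * s + nsq v * s ^ 2 := by
    ext s
    simp only [nsq, bil, Prod.fst_add, Prod.snd_add, Prod.smul_fst, Prod.smul_snd, smul_eq_mul]
    rw [norm_add_sq_real, norm_smul, inner_smul_right, mul_pow, Real.norm_eq_abs, sq_abs]
    ring
  have e2 : bil (w + s • v) v = bil w v + s * nsq v := by
    simp only [nsq, bil, Prod.fst_add, Prod.snd_add, Prod.smul_fst, Prod.smul_snd, smul_eq_mul,
      inner_add_left, inner_smul_left, real_inner_self_eq_norm_sq, conj_trivial]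
    ring
  rw [e, e2]
  have h1 := (((hasDerivAt_id s).const_mul (2 * bil w v)).const_add (nsq w)).add
    (((hasDerivAt_id s).pow 2).const_mul (nsq v))
  refine h1.congr_deriv ?_
  simp; ring

theorem hasDerivAt_bil (w v : Ed d × ℝ) (s : ℝ) :
    HasDerivAt (fun s : ℝ => bil (w + s • v) v) (nsq v) s := by
  have e : (fun s : ℝ => bil (w + s • v) v) = fun s => bil w v + s * nsq v := by
    ext s
    simp only [nsq, bil, Prod.fst_add, Prod.snd_add, Prod.smul_fst, Prod.smul_snd, smul_eq_mul,
      inner_add_left, inner_smul_left, real_inner_self_eq_norm_sq, conj_trivial]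
    ring
  rw [e]
  simpa using ((hasDerivAt_id s).mul_const (nsq v)).const_add (bil w v)

theorem hasDerivAt_ht (w v : Ed d × ℝ) (s : ℝ) :
    HasDerivAt (fun s : ℝ => (w + s • v).2) v.2 s := by
  simpa using ((hasDerivAt_id s).mul_const v.2).const_add w.2

theorem hasDerivAt_Q {w v : Ed d × ℝ} {s : ℝ} (h : 0 < (w + s • v).2) :
    HasDerivAt (fun s : ℝ => nsq (w + s • v) ^ (-pexp d))
      (nsq (w + s • v) ^ (-pexp d) * (-2 * pexp d * bil (w + s • v) v / nsq (w + s • v))) s := by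
  have hn := nsq_pos h
  refine ((hasDerivAt_line w v s).rpow_const (p := -pexp d) (Or.inl hn.ne')).congr_deriv ?_
  rw [Real.rpow_sub_one hn.ne']
  ring

theorem hasDerivAt_pk {w v : Ed d × ℝ} {s : ℝ} (h : 0 < (w + s • v).2) :
    HasDerivAt (fun s : ℝ => pk (w + s • v)) (pk1 (w + s • v) v) s := by
  refine ((hasDerivAt_ht w v s).fun_mul (hasDerivAt_Q h)).congr_deriv ?_
  unfold pk1; ring

theorem hasDerivAt_pk1 {w v : Ed d × ℝ} {s : ℝ} (h : 0 < (w + s • v).2) :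
    HasDerivAt (fun s : ℝ => pk1 (w + s • v) v) (pk2 (w + s • v) v) s := by
  have hn := nsq_pos h
  have h1 := ((((hasDerivAt_ht w v s).const_mul (2 * pexp d)).fun_mul (hasDerivAt_bil w v s)).fun_div
    (hasDerivAt_line w v s) hn.ne').const_sub v.2
  refine ((hasDerivAt_Q h).fun_mul h1).congr_deriv ?_
  unfold pk2
  field_simp
  ring

theorem abs_snd_le (w : Ed d × ℝ) : |w.2| ≤ √(nsq w) := by
  apply Real.abs_le_sqrt; unfold nsq; nlinarith [sq_nonneg ‖w.1‖]

theorem abs_bil_le (w v : Ed d × ℝ) : |bil w v| ≤ √(nsq w) * √(nsq v) := by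
  rw [← Real.sqrt_mul (nsq_nonneg w)]; exact Real.abs_le_sqrt (bil_sq_le w v)

theorem pk1_le {w : Ed d × ℝ} (hw : 0 < w.2) (v : Ed d × ℝ) :
    |pk1 w v| ≤ ((1 + 2 * pexp d) * √(nsq v)) * nsq w ^ (-pexp d) := by
  have hn := nsq_pos hw
  have hp := pexp_pos (d := d)
  have hQ : 0 < nsq w ^ (-pexp d) := Real.rpow_pos_of_pos hn _
  rw [pk1, abs_mul, abs_of_pos hQ, mul_comm]
  gcongr
  refine (abs_sub _ _).trans ?_
  have h2 : |2 * pexp d * w.2 * bil w v / nsq w| ≤ 2 * pexp d * √(nsq v) := by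
    rw [abs_div, abs_of_pos hn, div_le_iff₀ hn, abs_mul, abs_mul, abs_of_pos (by positivity : 0 < 2 * pexp d)]
    calc 2 * pexp d * |w.2| * |bil w v| ≤ 2 * pexp d * √(nsq w) * (√(nsq w) * √(nsq v)) := by
          gcongr; exacts [abs_snd_le w, abs_bil_le w v]
      _ = 2 * pexp d * √(nsq v) * (√(nsq w) * √(nsq w)) := by ring
      _ = _ := by rw [Real.mul_self_sqrt hn.le]
  linarith [abs_snd_le v]

theorem pk2_le {w : Ed d × ℝ} (hw : 0 < w.2) (v : Ed d × ℝ) :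
    |pk2 w v| ≤ ((4 * pexp d + 4 * pexp d * (pexp d + 1) + 2 * pexp d) * nsq v / w.2) *
      nsq w ^ (-pexp d) := by
  have hn := nsq_pos hw
  have hp := pexp_pos (d := d)
  have hQ : 0 < nsq w ^ (-pexp d) := Real.rpow_pos_of_pos hn _
  set ρ := √(nsq w) with hρ
  set s := √(nsq v) with hs
  have hρ2 : nsq w = ρ ^ 2 := (Real.sq_sqrt hn.le).symm
  have hs2 : nsq v = s ^ 2 := (Real.sq_sqrt (nsq_nonneg v)).symm
  have hρ0 : 0 < ρ := Real.sqrt_pos.2 hn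
  have hs0 : 0 ≤ s := Real.sqrt_nonneg _
  have b1 : |w.2| ≤ ρ := abs_snd_le w
  have b2 : |bil w v| ≤ ρ * s := abs_bil_le w v
  have b3 : |v.2| ≤ s := abs_snd_le v
  rw [pk2, abs_mul, abs_of_pos hQ, mul_comm]
  gcongr
  have c1 : |-4 * pexp d * v.2 * bil w v / nsq w| ≤ 4 * pexp d * s ^ 2 / ρ := by
    rw [abs_div, abs_of_pos hn, abs_mul, abs_mul, abs_mul, abs_of_pos hp, hρ2, div_le_div_iff₀ (by positivity) hρ0]
    norm_num
    calc 4 * pexp d * |v.2| * |bil w v| * ρ ≤ 4 * pexp d * s * (ρ * s) * ρ := by gcongr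
      _ = _ := by ring
  have c2 : |4 * pexp d * (pexp d + 1) * w.2 * bil w v ^ 2 / nsq w ^ 2| ≤
      4 * pexp d * (pexp d + 1) * s ^ 2 / ρ := by
    rw [abs_div, abs_of_pos (by positivity : 0 < nsq w ^ 2), abs_mul, abs_mul, abs_pow,
      abs_of_pos (by positivity : 0 < 4 * pexp d * (pexp d + 1)), hρ2, div_le_div_iff₀ (by positivity) hρ0]
    calc 4 * pexp d * (pexp d + 1) * |w.2| * |bil w v| ^ 2 * ρ ≤
        4 * pexp d * (pexp d + 1) * ρ * (ρ * s) ^ 2 * ρ := by gcongr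
      _ = _ := by ring
  have c3 : |2 * pexp d * w.2 * nsq v / nsq w| ≤ 2 * pexp d * s ^ 2 / ρ := by
    rw [abs_div, abs_of_pos hn, abs_mul, abs_mul, abs_of_nonneg (nsq_nonneg v), abs_of_pos (by positivity : 0 < 2 * pexp d),
      hρ2, hs2, div_le_div_iff₀ (by positivity) hρ0]
    calc 2 * pexp d * |w.2| * s ^ 2 * ρ ≤ 2 * pexp d * ρ * s ^ 2 * ρ := by gcongr
      _ = _ := by ring
  have hw1 : w.2 ≤ ρ := (le_abs_self _).trans b1
  calc _ ≤ 4 * pexp d * s ^ 2 / ρ + 4 * pexp d * (pexp d + 1) * s ^ 2 / ρ + 2 * pexp d * s ^ 2 / ρ := by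
        rw [abs_le] at *
        constructor <;> linarith [c1.1, c1.2, c2.1, c2.2, c3.1, c3.2]
    _ = (4 * pexp d + 4 * pexp d * (pexp d + 1) + 2 * pexp d) * s ^ 2 / ρ := by ring
    _ ≤ _ := by rw [hs2]; gcongr

theorem pk2_sum {w : Ed d × ℝ} (hw : 0 < w.2) : ∑ i, pk2 w (ebas d i) = 0 := by
  have hn := nsq_pos hw
  have hb : ∀ i, bil w (ebas d i) = crd d i w := fun i => by
    cases i <;> simp [bil, ebas, crd, EuclideanSpace.inner_single_right]
  have hs : ∑ i, crd d i w ^ 2 = nsq w := (nsq_eq w).symm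
  have hv : ∑ i, (ebas d i).2 * crd d i w = w.2 := by
    rw [Fintype.sum_option]; simp [ebas, crd]
  simp only [pk2, hb, nsq_ebas]
  rw [← Finset.mul_sum, Finset.sum_sub_distrib, Finset.sum_add_distrib]
  have e1 : ∑ i, -4 * pexp d * (ebas d i).2 * crd d i w / nsq w = -4 * pexp d * w.2 / nsq w := by
    rw [← Finset.sum_div]
    congr 1
    rw [← hv, Finset.mul_sum]
    exact Finset.sum_congr rfl fun i _ => by ring
  have e2 : ∑ i, 4 * pexp d * (pexp d + 1) * w.2 * crd d i w ^ 2 / nsq w ^ 2 =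
      4 * pexp d * (pexp d + 1) * w.2 / nsq w := by
    rw [← Finset.sum_div, ← Finset.mul_sum, hs]; field_simp
  have e3 : ∑ _i : Option (Fin d), 2 * pexp d * w.2 * 1 / nsq w = (2 * pexp d) * (2 * pexp d * w.2) / nsq w := by
    rw [Finset.sum_const, Finset.card_univ, Fintype.card_option, Fintype.card_fin, nsmul_eq_mul]
    have : ((d + 1 : ℕ) : ℝ) = 2 * pexp d := by unfold pexp; push_cast; ring
    rw [this]; ring
  rw [e1, e2, e3]
  ring

theorem pk1_linear (w v : Ed d × ℝ) : pk1 w v = ∑ i, crd d i v * pk1 w (ebas d i) := by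
  have hb : ∀ i, bil w (ebas d i) = crd d i w := fun i => by
    cases i <;> simp [bil, ebas, crd, EuclideanSpace.inner_single_right]
  have h1 : bil w v = ∑ i, crd d i v * crd d i w := by
    rw [sum_crd_mul, bil, real_inner_comm]; ring
  have h2 : v.2 = ∑ i, crd d i v * (ebas d i).2 := by
    rw [Fintype.sum_option]; simp [ebas, crd]
  simp only [pk1, hb]
  rw [h1]
  nth_rewrite 1 [h2]
  rw [Finset.mul_sum, Finset.sum_div, ← Finset.sum_sub_distrib, Finset.mul_sum]
  exact Finset.sum_congr rfl fun i _ => by ring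

/-! ### The Poisson integral of an indicator function -/

/-- The profile of the Poisson kernel. -/
def phi {d : ℕ} (t : Ed d) : ℝ := (1 + ‖t‖ ^ 2) ^ (-pexp d)

theorem phi_pos (t : Ed d) : 0 < phi t := by unfold phi; positivity

theorem phi_le_one (t : Ed d) : phi t ≤ 1 := by
  unfold phi
  exact Real.rpow_le_one_of_one_le_of_nonpos (by nlinarith [sq_nonneg ‖t‖]) (by linarith [pexp_pos (d := d)])

theorem integrable_phi : Integrable (phi (d := d)) := by
  have := integrable_rpow_neg_one_add_norm_sq (E := Ed d) (μ := volume) (r := (d : ℝ) + 1) (by simp)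
  refine this.congr (ae_of_all _ fun t => ?_)
  simp only [phi, pexp]; congr 1; ring

theorem continuous_phi : Continuous (phi (d := d)) := by
  unfold phi
  refine Continuous.rpow_const (by fun_prop) fun t => Or.inl ?_
  positivity

theorem phi_int_pos : 0 < ∫ t : Ed d, phi t := by
  rw [integral_pos_iff_support_of_nonneg (fun t => (phi_pos t).le) integrable_phi]
  have : Function.support (phi (d := d)) = Set.univ := by
    ext t; simp [(phi_pos t).ne']
  rw [this]; exact Measure.measure_univ_pos.2 (NeZero.ne _)

theorem dom {y1 : ℝ} (hy : 0 < y1) (M : ℝ) : ∃ C : ℝ, 0 ≤ C ∧ ∀ (z : Ed d × ℝ) (t : Ed d),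
    y1 ≤ z.2 → ‖z.1‖ ≤ M → nsq (z - (t, 0)) ^ (-pexp d) ≤ C * phi t := by
  set C1 : ℝ := 2 + (1 + 2 * M ^ 2) / y1 ^ 2 with hC1
  have hC1p : 0 < C1 := by positivity
  refine ⟨C1 ^ pexp d, by positivity, fun z t hz hM => ?_⟩
  have h1 : ‖t‖ ^ 2 ≤ 2 * ‖z.1 - t‖ ^ 2 + 2 * M ^ 2 := by
    have h2 : ‖t‖ ≤ ‖z.1 - t‖ + ‖z.1‖ := by
      have := norm_sub_le z.1 (z.1 - t); simp at this; linarith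
    have h3 : ‖t‖ ^ 2 ≤ (‖z.1 - t‖ + M) ^ 2 := by gcongr; linarith
    nlinarith [sq_nonneg (‖z.1 - t‖ - M)]
  have h2 : (1 + 2 * M ^ 2) ≤ (1 + 2 * M ^ 2) / y1 ^ 2 * z.2 ^ 2 := by
    rw [div_mul_eq_mul_div, le_div_iff₀ (by positivity)]
    gcongr
  have h3 : 1 + ‖t‖ ^ 2 ≤ C1 * nsq (z - (t, 0)) := by
    simp only [nsq, Prod.fst_sub, Prod.snd_sub, sub_zero]
    have : 0 ≤ (1 + 2 * M ^ 2) / y1 ^ 2 * ‖z.1 - t‖ ^ 2 := by positivity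
    rw [hC1]; nlinarith [sq_nonneg z.2]
  have hn : 0 < nsq (z - (t, 0)) := nsq_pos (by simpa using hy.trans_le hz)
  have h4 : (C1 * nsq (z - (t, 0))) ^ (-pexp d) ≤ phi t :=
    Real.rpow_le_rpow_of_nonpos (by positivity) h3 (by linarith [pexp_pos (d := d)])
  rw [Real.mul_rpow hC1p.le hn.le, Real.rpow_neg hC1p.le, inv_mul_le_iff₀ (by positivity)] at h4
  exact h4

theorem measurable_nsq_sub (z : Ed d × ℝ) : Measurable fun t : Ed d => nsq (z - (t, 0)) := by
  unfold nsq; fun_prop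

theorem measurable_bil_sub (z v : Ed d × ℝ) : Measurable fun t : Ed d => bil (z - (t, 0)) v := by
  unfold bil; fun_prop

theorem measurable_pk (z : Ed d × ℝ) : Measurable fun t : Ed d => pk (z - (t, 0)) := by
  have := measurable_nsq_sub z
  unfold pk
  simp only [Prod.snd_sub, sub_zero]
  fun_prop

theorem measurable_pk1 (z v : Ed d × ℝ) : Measurable fun t : Ed d => pk1 (z - (t, 0)) v := by
  have := measurable_nsq_sub z
  have := measurable_bil_sub z v
  unfold pk1
  simp only [Prod.snd_sub, sub_zero]
  fun_prop

theorem measurable_pk2 (z v : Ed d × ℝ) : Measurable fun t : Ed d => pk2 (z - (t, 0)) v := by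
  have := measurable_nsq_sub z
  have := measurable_bil_sub z v
  unfold pk2
  simp only [Prod.snd_sub, sub_zero]
  fun_prop

theorem pk_nonneg {w : Ed d × ℝ} (hw : 0 ≤ w.2) : 0 ≤ pk w := by
  unfold pk; have := nsq_nonneg w; positivity

theorem integrable_pk {z : Ed d × ℝ} (hz : 0 < z.2) : Integrable fun t : Ed d => pk (z - (t, 0)) := by
  obtain ⟨C, _, h⟩ := dom (d := d) hz ‖z.1‖
  refine ((integrable_phi.const_mul C).const_mul z.2).mono' (measurable_pk z).aestronglyMeasurable
    (ae_of_all _ fun t => ?_)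
  rw [Real.norm_eq_abs, abs_of_nonneg (pk_nonneg (by simpa using hz.le))]
  have := h z t le_rfl le_rfl
  simp only [pk, Prod.snd_sub, sub_zero]
  gcongr

theorem integrable_pk1 {z : Ed d × ℝ} (hz : 0 < z.2) (v : Ed d × ℝ) :
    Integrable fun t : Ed d => pk1 (z - (t, 0)) v := by
  obtain ⟨C, _, h⟩ := dom (d := d) hz ‖z.1‖
  refine ((integrable_phi.const_mul C).const_mul ((1 + 2 * pexp d) * √(nsq v))).mono'
    (measurable_pk1 z v).aestronglyMeasurable (ae_of_all _ fun t => ?_)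
  have hp := pexp_pos (d := d)
  refine (pk1_le (w := z - (t, 0)) (by simpa using hz) v).trans ?_
  have := h z t le_rfl le_rfl
  gcongr

theorem integrable_pk2 {z : Ed d × ℝ} (hz : 0 < z.2) (v : Ed d × ℝ) :
    Integrable fun t : Ed d => pk2 (z - (t, 0)) v := by
  obtain ⟨C, _, h⟩ := dom (d := d) hz ‖z.1‖
  have hp := pexp_pos (d := d)
  have hn := nsq_nonneg v
  refine ((integrable_phi.const_mul C).const_mul
    ((4 * pexp d + 4 * pexp d * (pexp d + 1) + 2 * pexp d) * nsq v / z.2)).mono'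
    (measurable_pk2 z v).aestronglyMeasurable (ae_of_all _ fun t => ?_)
  refine (pk2_le (w := z - (t, 0)) (by simpa using hz) v).trans ?_
  have := h z t le_rfl le_rfl
  simp only [Prod.snd_sub, sub_zero]
  exact mul_le_mul_of_nonneg_left this (by positivity)

/-- The unnormalized Poisson integral of the indicator function of `O`. -/
def pint {d : ℕ} (O : Set (Ed d)) (z : Ed d × ℝ) : ℝ := ∫ t in O, pk (z - (t, 0))

/-- First directional derivative of `pint O`. -/
def pint1 {d : ℕ} (O : Set (Ed d)) (z v : Ed d × ℝ) : ℝ := ∫ t in O, pk1 (z - (t, 0)) v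

/-- Second directional derivative of `pint O`. -/
def pint2 {d : ℕ} (O : Set (Ed d)) (z v : Ed d × ℝ) : ℝ := ∫ t in O, pk2 (z - (t, 0)) v

/-- Along a line through an interior point, height and norm stay controlled. -/
theorem line_nbhd {z v : Ed d × ℝ} {s0 : ℝ} (hz : 0 < (z + s0 • v).2) :
    ∃ y1 > 0, ∃ M : ℝ, ∃ S ∈ 𝓝 s0, ∀ s ∈ S, y1 ≤ (z + s • v).2 ∧ ‖(z + s • v).1‖ ≤ M := by
  have hc : Continuous fun s : ℝ => z + s • v := by fun_prop
  have h1 : ∀ᶠ s in 𝓝 s0, (z + s0 • v).2 / 2 < (z + s • v).2 :=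
    (hc.snd.tendsto s0).eventually_const_lt (by linarith)
  have h2 : ∀ᶠ s in 𝓝 s0, ‖(z + s • v).1‖ < ‖(z + s0 • v).1‖ + 1 :=
    (hc.fst.norm.tendsto s0).eventually_lt_const (by linarith)
  exact ⟨_, half_pos hz, _, _, h1.and h2, fun s hs => ⟨hs.1.le, hs.2.le⟩⟩

theorem hasDerivAt_pint (O : Set (Ed d)) {z v : Ed d × ℝ} {s0 : ℝ} (hz : 0 < (z + s0 • v).2) :
    HasDerivAt (fun s : ℝ => pint O (z + s • v)) (pint1 O (z + s0 • v) v) s0 := by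
  obtain ⟨y1, hy1, M, S, hS, hb⟩ := line_nbhd hz
  obtain ⟨C, hC, h⟩ := dom (d := d) hy1 M
  have hp := pexp_pos (d := d)
  refine (hasDerivAt_integral_of_dominated_loc_of_deriv_le (μ := volume.restrict O)
    (F := fun s t => pk (z + s • v - (t, 0))) (F' := fun s t => pk1 (z + s • v - (t, 0)) v)
    (bound := fun t => ((1 + 2 * pexp d) * √(nsq v)) * (C * phi t)) hS
    (Eventually.of_forall fun s => (measurable_pk _).aestronglyMeasurable)
    (integrable_pk hz).restrict (measurable_pk1 _ _).aestronglyMeasurable ?_ ?_ ?_).2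
  · refine ae_of_all _ fun t s hs => ?_
    obtain ⟨h1, h2⟩ := hb s hs
    refine (pk1_le (by simpa using hy1.trans_le h1) v).trans ?_
    have := h _ t h1 h2
    gcongr
  · exact ((integrable_phi.const_mul C).const_mul _).restrict
  · refine ae_of_all _ fun t s hs => ?_
    obtain ⟨h1, h2⟩ := hb s hs
    have := hasDerivAt_pk (w := z - (t, 0)) (v := v) (s := s) (by simpa using hy1.trans_le h1)
    simpa only [sub_add_eq_add_sub] using this

theorem hasDerivAt_pint1 (O : Set (Ed d)) {z v : Ed d × ℝ} {s0 : ℝ} (hz : 0 < (z + s0 • v).2) :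
    HasDerivAt (fun s : ℝ => pint1 O (z + s • v) v) (pint2 O (z + s0 • v) v) s0 := by
  obtain ⟨y1, hy1, M, S, hS, hb⟩ := line_nbhd hz
  obtain ⟨C, hC, h⟩ := dom (d := d) hy1 M
  have hp := pexp_pos (d := d)
  have hn := nsq_nonneg v
  refine (hasDerivAt_integral_of_dominated_loc_of_deriv_le (μ := volume.restrict O)
    (F := fun s t => pk1 (z + s • v - (t, 0)) v) (F' := fun s t => pk2 (z + s • v - (t, 0)) v)
    (bound := fun t => ((4 * pexp d + 4 * pexp d * (pexp d + 1) + 2 * pexp d) * nsq v / y1) *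
      (C * phi t)) hS
    (Eventually.of_forall fun s => (measurable_pk1 _ _).aestronglyMeasurable)
    (integrable_pk1 hz v).restrict (measurable_pk2 _ _).aestronglyMeasurable ?_ ?_ ?_).2
  · refine ae_of_all _ fun t s hs => ?_
    obtain ⟨h1, h2⟩ := hb s hs
    refine (pk2_le (by simpa using hy1.trans_le h1) v).trans ?_
    have h3 := h _ t h1 h2
    have h4 : y1 ≤ (z + s • v - (t, 0)).2 := by simpa using h1
    have h5 : 0 ≤ C * phi t := mul_nonneg hC (phi_pos t).le
    have h6 : 0 ≤ nsq (z + s • v - (t, 0)) ^ (-pexp d) :=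
      Real.rpow_nonneg (nsq_nonneg _) _
    gcongr
  · exact ((integrable_phi.const_mul C).const_mul _).restrict
  · refine ae_of_all _ fun t s hs => ?_
    obtain ⟨h1, h2⟩ := hb s hs
    have := hasDerivAt_pk1 (w := z - (t, 0)) (v := v) (s := s) (by simpa using hy1.trans_le h1)
    simpa only [sub_add_eq_add_sub] using this

theorem hasD2_pint (O : Set (Ed d)) {z : Ed d × ℝ} (hz : 0 < z.2) (v : Ed d × ℝ) :
    HasD2 (pint O) z v (pint1 O z v) (pint2 O z v) := by
  refine ⟨fun t => pint1 O (z + t • v) v, ?_, by simp, ?_⟩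
  · have hc : Continuous fun s : ℝ => (z + s • v).2 := by fun_prop
    have h1 : ∀ᶠ s in 𝓝 (0 : ℝ), 0 < (z + s • v).2 :=
      (hc.tendsto 0).eventually_const_lt (by simpa using hz)
    filter_upwards [h1] with s hs using hasDerivAt_pint O hs
  · have := hasDerivAt_pint1 O (z := z) (v := v) (s0 := 0) (by simpa using hz)
    simpa using this

theorem pint2_sum (O : Set (Ed d)) {z : Ed d × ℝ} (hz : 0 < z.2) :
    ∑ i, pint2 O z (ebas d i) = 0 := by
  unfold pint2
  rw [← integral_finsetSum _ fun i _ => (integrable_pk2 hz _).restrict]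
  rw [integral_congr_ae (g := fun _ => (0 : ℝ)), integral_zero]
  exact ae_of_all _ fun t => pk2_sum (by simpa using hz)

theorem pint1_linear (O : Set (Ed d)) {z : Ed d × ℝ} (hz : 0 < z.2) (v : Ed d × ℝ) :
    pint1 O z v = ∑ i, crd d i v * pint1 O z (ebas d i) := by
  unfold pint1
  simp_rw [← integral_const_mul]
  rw [← integral_finsetSum _ fun i _ => ((integrable_pk1 hz _).restrict.const_mul _)]
  exact integral_congr_ae (ae_of_all _ fun t => pk1_linear _ _)

theorem continuousOn_pint (O : Set (Ed d)) : ContinuousOn (pint O) {z | 0 < z.2} := by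
  intro z hz
  have hz : 0 < z.2 := hz
  refine ContinuousAt.continuousWithinAt ?_
  obtain ⟨C, hC, h⟩ := dom (d := d) (half_pos hz) (‖z.1‖ + 1)
  have h1 : ∀ᶠ w in 𝓝 z, z.2 / 2 < w.2 := (continuous_snd.tendsto z).eventually_const_lt (by linarith)
  have h2 : ∀ᶠ w in 𝓝 z, w.2 < z.2 + 1 := (continuous_snd.tendsto z).eventually_lt_const (by linarith)
  have h3 : ∀ᶠ w in 𝓝 z, ‖w.1‖ < ‖z.1‖ + 1 :=
    (continuous_fst.norm.tendsto z).eventually_lt_const (by simp)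
  refine continuousAt_of_dominated (bound := fun t => (z.2 + 1) * (C * phi t))
    (Eventually.of_forall fun w => (measurable_pk w).aestronglyMeasurable) ?_
    ((integrable_phi.const_mul C).const_mul _).restrict ?_
  · filter_upwards [h1, h2, h3] with w w1 w2 w3
    refine ae_of_all _ fun t => ?_
    have w0 : 0 < w.2 := by linarith
    rw [Real.norm_eq_abs, abs_of_nonneg (pk_nonneg (by simpa using w0.le))]
    have h4 := h w t w1.le w3.le
    have h6 : 0 ≤ nsq (w - (t, 0)) ^ (-pexp d) := Real.rpow_nonneg (nsq_nonneg _) _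
    simp only [pk, Prod.snd_sub, sub_zero]
    gcongr
  · refine ae_of_all _ fun t => ?_
    have hc : Continuous fun w : Ed d × ℝ => nsq (w - (t, 0)) := by unfold nsq; fun_prop
    unfold pk
    simp only [Prod.snd_sub, sub_zero]
    refine continuous_snd.continuousAt.mul (hc.continuousAt.rpow_const (Or.inl ?_))
    exact (nsq_pos (by simpa using hz)).ne'

/-! ### Bounds for the Poisson integral and Fatou's theorem -/

theorem pk_eq_phi {z : Ed d × ℝ} (hz : 0 < z.2) (t : Ed d) :
    pk (z - (t, 0)) = (z.2 ^ d)⁻¹ * phi (z.2⁻¹ • (t - z.1)) := by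
  have e : (1 + ‖z.2⁻¹ • (t - z.1)‖ ^ 2 : ℝ) = nsq (z - (t, 0)) / z.2 ^ 2 := by
    rw [norm_smul, mul_pow, Real.norm_eq_abs, sq_abs, norm_sub_rev]
    simp only [nsq, Prod.fst_sub, Prod.snd_sub, sub_zero]
    field_simp
    ring
  have e2 : ((z.2 ^ 2 : ℝ)) ^ (-pexp d) = (z.2 ^ (d + 1))⁻¹ := by
    rw [Real.rpow_neg (by positivity), ← Real.rpow_natCast z.2 2, ← Real.rpow_mul hz.le,
      ← Real.rpow_natCast z.2 (d + 1)]
    congr 2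
    unfold pexp; push_cast; ring
  rw [phi, e, Real.div_rpow (nsq_nonneg _) (by positivity), e2]
  simp only [pk, Prod.snd_sub, sub_zero]
  field_simp
  ring

/-- The change of variables `t = x + yτ` in the Poisson integral. -/
theorem pint_scale {O : Set (Ed d)} (hO : MeasurableSet O) {z : Ed d × ℝ} (hz : 0 < z.2) :
    pint O z = ∫ τ in {τ | z.1 + z.2 • τ ∈ O}, phi τ := by
  have hm : MeasurableSet {τ : Ed d | z.1 + z.2 • τ ∈ O} :=
    hO.preimage (by fun_prop : Measurable fun τ : Ed d => z.1 + z.2 • τ)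
  unfold pint
  rw [← integral_indicator hO, ← integral_indicator hm]
  rw [← integral_add_left_eq_self _ z.1]
  have h := Measure.integral_comp_smul (volume : Measure (Ed d))
    (fun s => O.indicator (fun t => phi (z.2⁻¹ • (t - z.1))) (z.1 + s)) z.2
  rw [abs_of_pos (by positivity), smul_eq_mul] at h
  rw [show (fun τ : Ed d => O.indicator (fun t => phi (z.2⁻¹ • (t - z.1))) (z.1 + z.2 • τ)) =
    {τ | z.1 + z.2 • τ ∈ O}.indicator phi from ?_] at h
  · rw [h, ← integral_const_mul]
    refine integral_congr_ae (ae_of_all _ fun s => ?_)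
    by_cases hs : z.1 + s ∈ O
    · simp only [Set.indicator_of_mem hs, pk_eq_phi hz, finrank_euclideanSpace, Fintype.card_fin]
    · simp only [Set.indicator_of_notMem hs, mul_zero]
  · ext τ
    by_cases hs : z.1 + z.2 • τ ∈ O
    · rw [Set.indicator_of_mem hs, Set.indicator_of_mem (s := {τ | z.1 + z.2 • τ ∈ O}) hs,
        add_sub_cancel_left, smul_smul, inv_mul_cancel₀ hz.ne', one_smul]
    · rw [Set.indicator_of_notMem hs, Set.indicator_of_notMem (s := {τ | z.1 + z.2 • τ ∈ O}) hs]

theorem pint_nonneg (O : Set (Ed d)) {z : Ed d × ℝ} (hz : 0 < z.2) : 0 ≤ pint O z :=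
  integral_nonneg fun _ => pk_nonneg (by simpa using hz.le)

theorem pint_le {O : Set (Ed d)} (hO : MeasurableSet O) {z : Ed d × ℝ} (hz : 0 < z.2) :
    pint O z ≤ ∫ t : Ed d, phi t := by
  rw [pint_scale hO hz]
  exact setIntegral_le_integral integrable_phi (ae_of_all _ fun t => (phi_pos t).le)

/-- Lower bound for the Poisson integral of a set containing a ball. -/
theorem pint_lower : ∃ c : ℝ, 0 < c ∧ ∀ {O : Set (Ed d)}, MeasurableSet O → ∀ (x : Ed d) (y h : ℝ),
    0 < y → 0 < h → ball x h ⊆ O → c * min 1 (h / y) ^ d ≤ pint O (x, y) := by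
  refine ⟨(2 : ℝ) ^ (-pexp d) * volume.real (ball (0 : Ed d) 1), ?_, fun {O} hO x y h hy hh hb => ?_⟩
  · have : 0 < volume.real (ball (0 : Ed d) 1) :=
      ENNReal.toReal_pos (measure_ball_pos _ _ one_pos).ne' measure_ball_lt_top.ne
    positivity
  set m := min 1 (h / y) with hm
  have hm0 : 0 < m := lt_min one_pos (by positivity)
  rw [pint_scale hO hy]
  have hsub : ball (0 : Ed d) m ⊆ {τ | x + y • τ ∈ O} := by
    intro τ hτ
    apply hb
    rw [mem_ball, dist_eq_norm, add_sub_cancel_left, norm_smul, Real.norm_eq_abs, abs_of_pos hy]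
    rw [mem_ball_zero_iff] at hτ
    have := hτ.trans_le (min_le_right _ _)
    rwa [lt_div_iff₀ hy, mul_comm] at this
  calc (2 : ℝ) ^ (-pexp d) * volume.real (ball (0 : Ed d) 1) * m ^ d
      = (2 : ℝ) ^ (-pexp d) * volume.real (ball (0 : Ed d) m) := by
        rw [measureReal_def, measureReal_def, Measure.addHaar_ball_of_pos _ _ hm0, ENNReal.toReal_mul,
          ENNReal.toReal_ofReal (by positivity)]
        simp only [finrank_euclideanSpace, Fintype.card_fin]; ring
    _ = ∫ τ in ball (0 : Ed d) m, (2 : ℝ) ^ (-pexp d) := by simp [mul_comm]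
    _ ≤ ∫ τ in ball (0 : Ed d) m, phi τ := by
        refine setIntegral_mono_on (integrableOn_const measure_ball_lt_top.ne)
          integrable_phi.integrableOn measurableSet_ball fun τ hτ => ?_
        have h1 : ‖τ‖ < 1 := (mem_ball_zero_iff.1 hτ).trans_le (min_le_left _ _)
        refine Real.rpow_le_rpow_of_nonpos (by positivity) ?_ (by linarith [pexp_pos (d := d)])
        nlinarith [norm_nonneg τ]
    _ ≤ _ := by
        refine setIntegral_mono_set integrable_phi.integrableOn
          (ae_of_all _ fun t => (phi_pos t).le) hsub.eventuallyLE

theorem pint_SV {α : Ed d} (h2 : (⟪α, α⟫ : ℝ) = 2) {O : Set (Ed d)}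
    (hinv : ∀ x, reflAt α x ∈ O ↔ x ∈ O) (z : Ed d × ℝ) : pint O (SV α z) = pint O z := by
  let A : Ed d →ₗ[ℝ] Ed d := LinearMap.id - (innerₛₗ ℝ α).smulRight α
  have hA : ∀ x, A x = reflAt α x := fun x => by simp [A, reflAt]
  let L : Ed d ≃ₗᵢ[ℝ] Ed d :=
    { LinearEquiv.ofInvolutive A (fun x => by rw [hA, hA, refl_invol h2]) with
      norm_map' := fun x => by
        show ‖A x‖ = ‖x‖
        rw [hA, norm_refl h2] }
  have hL : ∀ x, L x = reflAt α x := hA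
  have hmp := L.measurePreserving
  have he := L.toHomeomorph.toMeasurableEquiv.measurableEmbedding
  have h := hmp.setIntegral_preimage_emb he (fun t => pk (SV α z - (t, 0))) O
  rw [show (L : Ed d → Ed d) ⁻¹' O = O by ext x; simp [hL, hinv]] at h
  unfold pint
  rw [← h]
  refine integral_congr_ae (ae_of_all _ fun t => ?_)
  beta_reduce
  have e : SV α z - (L t, 0) = SV α (z - (t, 0)) := by
    rw [map_sub, hL]; simp [SV_apply]
  rw [e]
  simp only [pk, nsq_SV h2]
  simp


theorem volume_scale (s : Set (Ed d)) (x : Ed d) {y : ℝ} (hy : 0 < y) :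
    volume.real ((fun τ : Ed d => x + y • τ) ⁻¹' s) = (y ^ d)⁻¹ * volume.real s := by
  have e : (fun τ : Ed d => x + y • τ) ⁻¹' s = (y • ·) ⁻¹' ((x + ·) ⁻¹' s) := rfl
  rw [e, measureReal_def, Measure.addHaar_preimage_smul _ hy.ne', measure_preimage_add,
    ENNReal.toReal_mul, ENNReal.toReal_ofReal (by positivity), abs_of_pos (by positivity)]
  simp [measureReal_def]

theorem phi_tail {ε : ℝ} (hε : 0 < ε) (b : ℝ) :
    ∃ T : ℝ, 0 < T ∧ b ≤ T ∧ ∫ τ in (closedBall (0 : Ed d) T)ᶜ, phi τ < ε := by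
  have h := tendsto_setIntegral_of_antitone (μ := volume) (f := phi (d := d))
    (s := fun n : ℕ => (closedBall (0 : Ed d) n)ᶜ)
    (fun n => measurableSet_closedBall.compl)
    (fun m n hmn => Set.compl_subset_compl.2 (closedBall_subset_closedBall (by exact_mod_cast hmn)))
    ⟨0, integrable_phi.integrableOn⟩
  have e : (⋂ n : ℕ, (closedBall (0 : Ed d) n)ᶜ) = ∅ := by
    rw [← Set.compl_iUnion, iUnion_closedBall_nat, Set.compl_univ]
  rw [e, setIntegral_empty] at h
  obtain ⟨n, h1, h2, h3⟩ := ((h.eventually_lt_const hε).and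
    ((eventually_gt_atTop 0).and (eventually_ge_atTop ⌈b⌉₊))).exists
  exact ⟨n, by exact_mod_cast h2, (Nat.le_ceil b).trans (by exact_mod_cast h3), h1⟩

/-- Fatou's theorem for indicator functions: the Poisson integral of `O` tends to zero
nontangentially at almost every point outside `O`. -/
theorem pint_fatou {O : Set (Ed d)} (hO : MeasurableSet O) :
    ∀ᵐ x : Ed d, x ∉ O → ∀ b > 0, Tendsto (pint O) (𝓝[cone b x] (x, 0)) (𝓝 0) := by
  have h := IsUnifLocDoublingMeasure.ae_tendsto_measure_inter_div (volume : Measure (Ed d)) Oᶜ 1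
  rw [ae_restrict_iff' hO.compl] at h
  filter_upwards [h] with x hx hxO b hb
  have hmem : ∀ᶠ z in 𝓝[cone b x] ((x, 0) : Ed d × ℝ), z ∈ cone b x := self_mem_nhdsWithin
  have hsnd : Tendsto (fun z : Ed d × ℝ => z.2) (𝓝[cone b x] (x, 0)) (𝓝 0) :=
    (continuous_snd.tendsto (x, (0 : ℝ))).mono_left nhdsWithin_le_nhds
  rw [Metric.tendsto_nhds]
  intro ε hε
  obtain ⟨T, hT, hbT, htail⟩ := phi_tail (d := d) (half_pos hε) b
  have hden := @hx hxO (Ed d × ℝ) (𝓝[cone b x] ((x, 0) : Ed d × ℝ)) (fun z => z.1) (fun z => T * z.2)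
    (by
      refine tendsto_nhdsWithin_iff.2 ⟨by simpa using hsnd.const_mul T, ?_⟩
      filter_upwards [hmem] with z hz using mul_pos hT hz.1)
    (by
      filter_upwards [hmem] with z hz
      rw [mem_closedBall, dist_comm, one_mul]
      exact hz.2.le.trans (mul_le_mul_of_nonneg_right hbT hz.1.le))
  have hden2 := (ENNReal.tendsto_toReal ENNReal.one_ne_top).comp hden
  set V := volume.real (closedBall (0 : Ed d) T) with hV
  have hV0 : 0 < V := ENNReal.toReal_pos (measure_closedBall_pos _ _ hT).ne' measure_closedBall_lt_top.ne
  have hev := hden2.eventually_const_lt (show 1 - ε / (2 * V) < (1 : ENNReal).toReal by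
    simp only [ENNReal.toReal_one]; have : 0 < ε / (2 * V) := by positivity
    linarith)
  filter_upwards [hev, hmem] with z hz hzc
  have hz0 : 0 < z.2 := hzc.1
  rw [Real.dist_eq, sub_zero, abs_of_nonneg (pint_nonneg O hz0), pint_scale hO hz0]
  set A : Set (Ed d) := {τ | z.1 + z.2 • τ ∈ O} with hA
  have hAm : MeasurableSet A :=
    hO.preimage (by fun_prop : Measurable fun τ : Ed d => z.1 + z.2 • τ)
  have hball : (fun τ : Ed d => z.1 + z.2 • τ) ⁻¹' (closedBall z.1 (T * z.2)) = closedBall 0 T := by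
    ext τ
    simp only [Set.mem_preimage, mem_closedBall, dist_eq_norm, add_sub_cancel_left, sub_zero,
      norm_smul, Real.norm_eq_abs, abs_of_pos hz0]
    rw [mul_comm, mul_le_mul_iff_left₀ hz0]
  have v1 := volume_scale (closedBall z.1 (T * z.2)) z.1 hz0
  have v2 := volume_scale (Oᶜ ∩ closedBall z.1 (T * z.2)) z.1 hz0
  rw [hball] at v1
  have e2 : (fun τ : Ed d => z.1 + z.2 • τ) ⁻¹' (Oᶜ ∩ closedBall z.1 (T * z.2)) =
      closedBall 0 T \ A := by
    rw [Set.preimage_inter, hball, Set.inter_comm]; rfl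
  rw [e2] at v2
  have v3 : volume.real (closedBall (0 : Ed d) T ∩ A) + volume.real (closedBall 0 T \ A) = V :=
    measureReal_inter_add_sdiff hAm measure_closedBall_lt_top.ne
  have hr : V * (1 - ε / (2 * V)) < volume.real (closedBall 0 T \ A) := by
    simp only [Function.comp_apply, ENNReal.toReal_div] at hz
    have hB : 0 < volume.real (closedBall z.1 (T * z.2)) :=
      ENNReal.toReal_pos (measure_closedBall_pos _ _ (by positivity)).ne' measure_closedBall_lt_top.ne
    change _ < volume.real _ / volume.real _ at hz
    rw [lt_div_iff₀ hB] at hz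
    rw [hV, v2, v1, mul_assoc]
    refine mul_lt_mul_of_pos_left ?_ (by positivity)
    rw [← v1, mul_comm]
    exact hz
  have hsmall : volume.real (closedBall (0 : Ed d) T ∩ A) < ε / 2 := by
    have : V * (1 - ε / (2 * V)) = V - ε / 2 := by field_simp
    linarith
  have hsplit := integral_inter_add_sdiff (μ := volume) (f := phi (d := d)) (s := A)
    (measurableSet_closedBall (x := (0 : Ed d)) (ε := T)) integrable_phi.integrableOn
  have i1 : ∫ τ in A ∩ closedBall 0 T, phi τ ≤ volume.real (closedBall (0 : Ed d) T ∩ A) := by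
    rw [Set.inter_comm]
    have hfin : volume (closedBall (0 : Ed d) T ∩ A) ≠ ⊤ :=
      ((measure_mono Set.inter_subset_left).trans_lt measure_closedBall_lt_top).ne
    calc _ ≤ ∫ τ in closedBall 0 T ∩ A, (1 : ℝ) :=
          setIntegral_mono integrable_phi.integrableOn (integrableOn_const hfin)
            fun τ => phi_le_one τ
      _ = _ := by simp
  have i2 : ∫ τ in A \ closedBall 0 T, phi τ ≤ ∫ τ in (closedBall (0 : Ed d) T)ᶜ, phi τ :=
    setIntegral_mono_set integrable_phi.integrableOn
      (ae_of_all _ fun t => (phi_pos t).le) (Set.sdiff_subset_compl _ _).eventuallyLE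
  linarith

/-! ### The approximate Dirichlet problem -/

/-- Stone–Weierstrass for polynomials on a compact subset of `ℝ^d × ℝ`. -/
theorem stone {K : Set (Ed d × ℝ)} (hK : IsCompact K) {g : Ed d × ℝ → ℝ} (hg : ContinuousOn g K)
    {ε : ℝ} (hε : 0 < ε) : ∃ f : Ed d × ℝ → ℝ, PolySum f ∧ ∀ z ∈ K, |f z - g z| < ε := by
  have : CompactSpace K := isCompact_iff_compactSpace.1 hK
  let A : Subalgebra ℝ C(K, ℝ) :=
    { carrier := {F | ∃ f : Ed d × ℝ → ℝ, PolySum f ∧ ∀ z : K, F z = f z}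
      mul_mem' := by
        rintro F G ⟨f, hf, h1⟩ ⟨g, hg, h2⟩
        exact ⟨_, hf.mul hg, fun z => by simp [h1, h2]⟩
      add_mem' := by
        rintro F G ⟨f, hf, h1⟩ ⟨g, hg, h2⟩
        exact ⟨_, hf.add hg, fun z => by simp [h1, h2]⟩
      algebraMap_mem' := fun r => ⟨_, PolySum.const r, fun z => by simp⟩ }
  have hA : A.SeparatesPoints := by
    intro z w hzw
    obtain ⟨l, hl⟩ := SeparatingDual.exists_separating_of_ne (R := ℝ)
      (show (z : Ed d × ℝ) ≠ w from fun h => hzw (Subtype.ext h))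
    refine ⟨_, ⟨⟨fun z : K => l z, by fun_prop⟩, ⟨_, PolySum.linear l, fun z => rfl⟩, rfl⟩, hl⟩
  obtain ⟨⟨F, f, hf, hFf⟩, hF⟩ :=
    ContinuousMap.exists_mem_subalgebra_near_continuous_of_separatesPoints A hA
      (fun z : K => g z) (continuousOn_iff_continuous_domRestrict.1 hg) ε hε
  refine ⟨f, hf, fun z hz => ?_⟩
  have := hF ⟨z, hz⟩
  simpa [hFf] using this

theorem nsq_group (h : IsRootSystem R Rp κ) {σ : Function.End (Ed d)} (hσ : σ ∈ dunklGroup R)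
    (z : Ed d × ℝ) (c : ℝ) : nsq (((σ z.1, z.2) : Ed d × ℝ) - (0, c)) = nsq (z - (0, c)) := by
  obtain ⟨L, h1, -, -, h4⟩ := group_linear h hσ
  simp [nsq, h1, h4]

/-- Approximate solution of the Dirichlet problem on a ball centred on the `y`-axis, by an
invariant `κ`-harmonic polynomial. -/
theorem approx_dirichlet (h : IsRootSystem R Rp κ) {g : Ed d × ℝ → ℝ} (hgi : GInv R g)
    {c ρ : ℝ} (hg : ContinuousOn g {z | nsq (z - (0, c)) = ρ ^ 2}) {ε : ℝ} (hε : 0 < ε) :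
    ∃ u, PolySum u ∧ GInv R u ∧ Harm R Rp κ u ∧
      ∀ z, nsq (z - (0, c)) = ρ ^ 2 → |u z - g z| ≤ ε := by
  have hK : IsCompact {z : Ed d × ℝ | nsq (z - (0, c)) = ρ ^ 2} :=
    (isCompact_nsq (0, c) ρ).of_isClosed_subset
      (isClosed_eq (continuous_nsq.comp (continuous_id.sub continuous_const)) continuous_const)
      fun z hz => le_of_eq hz
  obtain ⟨f, hf, hfg⟩ := stone hK hg hε
  obtain ⟨F, hF, hFi, hFe⟩ := average h hf
  obtain ⟨u, hu, hui, huh, hue⟩ := dirichlet h (hF.translate (0, c)) (hFi.translate c) ρ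
  refine ⟨fun z => u (z + (0, -c)), hu.translate _, hui.translate _, huh.translate _, fun z hz => ?_⟩
  have e : z + (0, -c) = z - (0, c) := by ext <;> simp [sub_eq_add_neg]
  beta_reduce
  rw [e, hue _ hz, sub_add_cancel, hFe]
  have hc : 0 < ((grp h).card : ℝ) := by exact_mod_cast Finset.card_pos.2 ⟨1, one_mem_grp h⟩
  have e2 : ((grp h).card : ℝ)⁻¹ * ∑ σ ∈ grp h, f (σ z.1, z.2) - g z =
      ((grp h).card : ℝ)⁻¹ * ∑ σ ∈ grp h, (f (σ z.1, z.2) - g (σ z.1, z.2)) := by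
    rw [Finset.sum_sub_distrib, Finset.sum_congr rfl fun σ hσ => hgi.group ((mem_grp h).1 hσ) z]
    simp; field_simp
  rw [e2, abs_mul, abs_of_pos (by positivity), inv_mul_le_iff₀ hc]
  refine (Finset.abs_sum_le_sum_abs _ _).trans ?_
  rw [← nsmul_eq_mul]
  refine Finset.sum_le_card_nsmul _ _ _ fun σ hσ => (hfg _ ?_).le
  simp only [Set.mem_ofPred_eq]
  rw [nsq_group h ((mem_grp h).1 hσ)]; exact hz

/-- Every point has an orbit representative in the closed chamber of `v`, at least as close to `v`. -/
theorem chamber_near (h : IsRootSystem R Rp κ) (v x : Ed d) :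
    ∃ σ ∈ dunklGroup R, (∀ α ∈ R, (0 : ℝ) ≤ ⟪α, σ x⟫ * ⟪α, v⟫) ∧ ‖σ x - v‖ ≤ ‖x - v‖ := by
  obtain ⟨σ, hσ, hmax⟩ := (grp h).exists_max_image (fun σ => ⟪σ x, v⟫) ⟨1, one_mem_grp h⟩
  have hσ' := (mem_grp h).1 hσ
  refine ⟨σ, hσ', fun α hα => ?_, ?_⟩
  · have := hmax (rE α * σ)
      ((mem_grp h).2 (mul_mem (reflAt_mem_group hα) hσ'))
    have e : (rE α * σ) x = reflAt α (σ x) := rfl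
    rw [e, reflAt, inner_sub_left, inner_smul_left] at this
    simp only [conj_trivial] at this
    linarith
  · have h1 : ⟪x, v⟫ ≤ (⟪σ x, v⟫ : ℝ) := hmax 1 (one_mem_grp h)
    obtain ⟨L, h2, -, -, h4⟩ := group_linear h hσ'
    refine abs_le_of_sq_le_sq' ?_ (norm_nonneg _) |>.2
    rw [norm_sub_sq_real, norm_sub_sq_real, h2, h4, ← h2]
    linarith

/-! ### The lower barrier -/

/-- Directional derivatives of `‖x - w‖²` (as a function on `ℝ^d × ℝ`). -/
theorem hasD2_sqdist (w : Ed d) (z v : Ed d × ℝ) :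
    HasD2 (fun z : Ed d × ℝ => ‖z.1 - w‖ ^ 2) z v (2 * ⟪z.1 - w, v.1⟫) (2 * ‖v.1‖ ^ 2) := by
  have h1 := hasD2_nsq_sub (w, 0) z v
  have h2 : HasD2 (fun z : Ed d × ℝ => z.2) z v v.2 0 :=
    HasD2.of_clm (ContinuousLinearMap.snd ℝ (Ed d) ℝ)
  refine ((h1.sub (h2.mul h2)).congr ?_ ?_).congr_fun fun z => ?_
  · simp; ring
  · simp [nsq]; ring
  · simp [nsq]; ring

/-- Directional derivatives of the barrier `e^{-μy}(1 - q‖x - w‖²)^j`. -/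
theorem hasD2_barrier (w : Ed d) (q μ : ℝ) (j : ℕ) (z v : Ed d × ℝ) :
    HasD2 (fun z : Ed d × ℝ => Real.exp (-μ * z.2) * (1 - q * ‖z.1 - w‖ ^ 2) ^ (j + 2)) z v
      (Real.exp (-μ * z.2) * (-μ * v.2 * (1 - q * ‖z.1 - w‖ ^ 2) ^ (j + 2) -
        (j + 2) * (1 - q * ‖z.1 - w‖ ^ 2) ^ (j + 1) * (2 * q * ⟪z.1 - w, v.1⟫)))
      (Real.exp (-μ * z.2) * (μ ^ 2 * v.2 ^ 2 * (1 - q * ‖z.1 - w‖ ^ 2) ^ (j + 2) +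
        2 * μ * v.2 * ((j + 2) * (1 - q * ‖z.1 - w‖ ^ 2) ^ (j + 1) * (2 * q * ⟪z.1 - w, v.1⟫)) +
        (j + 2) * (j + 1) * (1 - q * ‖z.1 - w‖ ^ 2) ^ j * (2 * q * ⟪z.1 - w, v.1⟫) ^ 2 -
        (j + 2) * (1 - q * ‖z.1 - w‖ ^ 2) ^ (j + 1) * (2 * q * ‖v.1‖ ^ 2))) := by
  have h2 : HasD2 (fun z : Ed d × ℝ => z.2) z v v.2 0 :=
    HasD2.of_clm (ContinuousLinearMap.snd ℝ (Ed d) ℝ)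
  have h3 := (h2.smul (-μ)).comp (f := Real.exp) (f1 := Real.exp) (fun s => Real.hasDerivAt_exp s)
    (Real.hasDerivAt_exp _)
  have h4 := ((HasD2.const (z := z) (v := v) 1).sub ((hasD2_sqdist w z v).smul q)).comp
    (f := fun s => s ^ (j + 2)) (f1 := fun s => (j + 2) * s ^ (j + 1))
    (c := (j + 2) * ((j + 1) * (1 - q * ‖z.1 - w‖ ^ 2) ^ j))
    (fun s => by simpa using hasDerivAt_pow (j + 2) s)
    (by
      have := (hasDerivAt_pow (j + 1) (1 - q * ‖z.1 - w‖ ^ 2)).const_mul ((j : ℝ) + 2)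
      simpa using this)
  refine (h3.mul h4).congr ?_ ?_ <;> ring

theorem sum_ebas_inner_sq (x : Ed d) : ∑ i, (⟪x, (ebas d i).1⟫ : ℝ) ^ 2 = ‖x‖ ^ 2 := by
  rw [Fintype.sum_option, EuclideanSpace.norm_sq_eq]
  simp [ebas, EuclideanSpace.inner_single_right]

theorem sum_ebas_norm_sq : ∑ i, ‖(ebas d i).1‖ ^ 2 = (d : ℝ) := by
  rw [Fintype.sum_option]; simp [ebas]

theorem sum_ebas_snd_sq : ∑ i, (ebas d i).2 ^ 2 = (1 : ℝ) := by
  rw [Fintype.sum_option]; simp [ebas]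

theorem ebas_cross (x : Ed d) (i : Option (Fin d)) : (ebas d i).2 * (⟪x, (ebas d i).1⟫ : ℝ) = 0 := by
  cases i <;> simp [ebas]

/-- The coefficient `μ s` of the barrier, where `s` is its radius and `γ` the total multiplicity. -/
def barA (d : ℕ) (γ : ℝ) : ℝ := 4 * (d + 2) * (d + 1) + 2 * (d + 2) * (d + 2 * γ)

theorem barA_pos {γ : ℝ} (hγ : 0 ≤ γ) : 0 < barA d γ := by unfold barA; positivity

/-- The barrier is strictly `κ`-subharmonic, in the sense tested by `touch`, at the points of its
support lying in the same closed chamber as its centre. -/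
theorem barrier_pos (h : IsRootSystem R Rp κ) {M s μ q : ℝ} (hM : 0 < M) (hs : 0 < s)
    (hq : q = 1 / s ^ 2) (hμ : μ = barA d (∑ α ∈ Rp, κ α) / s) (w : Ed d) (z : Ed d × ℝ)
    (hV : 0 < 1 - q * ‖z.1 - w‖ ^ 2)
    (hch : ∀ α ∈ R, (0 : ℝ) ≤ ⟪α, z.1⟫ * ⟪α, w⟫) (a b : Ed d × ℝ → ℝ)
    (ha : ∀ v, a v = M * (Real.exp (-μ * z.2) * (-μ * v.2 * (1 - q * ‖z.1 - w‖ ^ 2) ^ (d + 2) -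
        (d + 2) * (1 - q * ‖z.1 - w‖ ^ 2) ^ (d + 1) * (2 * q * ⟪z.1 - w, v.1⟫))))
    (hb : ∀ v, b v = M * (Real.exp (-μ * z.2) * (μ ^ 2 * v.2 ^ 2 * (1 - q * ‖z.1 - w‖ ^ 2) ^ (d + 2) +
        2 * μ * v.2 * ((d + 2) * (1 - q * ‖z.1 - w‖ ^ 2) ^ (d + 1) * (2 * q * ⟪z.1 - w, v.1⟫)) +
        (d + 2) * (d + 1) * (1 - q * ‖z.1 - w‖ ^ 2) ^ d * (2 * q * ⟪z.1 - w, v.1⟫) ^ 2 -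
        (d + 2) * (1 - q * ‖z.1 - w‖ ^ 2) ^ (d + 1) * (2 * q * ‖v.1‖ ^ 2)))) :
    0 < ∑ i, b (ebas d i) + ∑ α ∈ Rp, κ α *
      (if (⟪α, z.1⟫ : ℝ) = 0 then b (α, 0) else 2 * a (α, 0) / ⟪α, z.1⟫) := by
  set γ := ∑ α ∈ Rp, κ α with hγ
  have hγ0 : 0 ≤ γ := Finset.sum_nonneg fun α hα => h.kappa_nonneg α (h.pos_sub hα)
  have hq0 : 0 < q := by rw [hq]; positivity
  generalize hVd : 1 - q * ‖z.1 - w‖ ^ 2 = V at *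
  have hn : q * ‖z.1 - w‖ ^ 2 = 1 - V := by linarith
  have hV1 : V ≤ 1 := by nlinarith [sq_nonneg ‖z.1 - w‖]
  set e := M * Real.exp (-μ * z.2) with he
  have he0 : 0 < e := by positivity
  have hsum : ∑ i, b (ebas d i) = e * V ^ d *
      (μ ^ 2 * V ^ 2 + 4 * (d + 2) * (d + 1) * q * (1 - V) - 2 * (d + 2) * d * q * V) := by
    have : ∀ i, b (ebas d i) = e * μ ^ 2 * V ^ (d + 2) * (ebas d i).2 ^ 2 +
        e * (d + 2) * (d + 1) * V ^ d * 4 * q ^ 2 * (⟪z.1 - w, (ebas d i).1⟫ : ℝ) ^ 2 -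
        e * (d + 2) * V ^ (d + 1) * 2 * q * ‖(ebas d i).1‖ ^ 2 := fun i => by
      rw [hb, he]
      linear_combination (M * Real.exp (-μ * z.2) * 2 * μ * (d + 2) * V ^ (d + 1) * 2 * q) *
        ebas_cross (z.1 - w) i
    rw [Finset.sum_congr rfl fun i _ => this i, Finset.sum_sub_distrib, Finset.sum_add_distrib,
      ← Finset.mul_sum, ← Finset.mul_sum, ← Finset.mul_sum, sum_ebas_inner_sq, sum_ebas_norm_sq,
      sum_ebas_snd_sq]
    linear_combination (e * (d + 2) * (d + 1) * V ^ d * 4 * q) * hn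
  have hT : ∀ α ∈ Rp, -(4 * q * (d + 2) * V ^ (d + 1) * e) ≤
      (if (⟪α, z.1⟫ : ℝ) = 0 then b (α, 0) else 2 * a (α, 0) / ⟪α, z.1⟫) := by
    intro α hα
    have hαR := h.pos_sub hα
    split_ifs with h0
    · rw [hb, ← mul_assoc M, ← he]
      have hn2 : ‖α‖ ^ 2 = 2 := by rw [← real_inner_self_eq_norm_sq]; exact h.norm_two α hαR
      simp only [hn2]
      have : 0 ≤ e * ((d + 2) * (d + 1) * V ^ d * (2 * q * (⟪z.1 - w, α⟫ : ℝ)) ^ 2) := by positivity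
      nlinarith
    · rw [ha, ← mul_assoc M, ← he]
      have h1 : (⟪z.1 - w, α⟫ : ℝ) / ⟪α, z.1⟫ ≤ 1 := by
        have h2 : 0 ≤ (⟪α, w⟫ : ℝ) / ⟪α, z.1⟫ := by
          have : (⟪α, w⟫ : ℝ) / ⟪α, z.1⟫ = ⟪α, z.1⟫ * ⟪α, w⟫ / ⟪α, z.1⟫ ^ 2 := by field_simp
          rw [this]; exact div_nonneg (hch α hαR) (sq_nonneg _)
        rw [inner_sub_left, real_inner_comm α z.1, real_inner_comm α w, sub_div, div_self h0]
        linarith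
      have h3 : 0 ≤ 4 * q * (d + 2) * V ^ (d + 1) * e := by positivity
      have e2 : 2 * (e * (-μ * (0 : ℝ) * V ^ (d + 2) - (d + 2) * V ^ (d + 1) *
          (2 * q * (⟪z.1 - w, α⟫ : ℝ)))) / ⟪α, z.1⟫ =
          -(4 * q * (d + 2) * V ^ (d + 1) * e) * ((⟪z.1 - w, α⟫ : ℝ) / ⟪α, z.1⟫) := by ring
      simp only [e2]
      nlinarith
  have hS : -(γ * (4 * q * (d + 2) * V ^ (d + 1) * e)) ≤ ∑ α ∈ Rp, κ α *
      (if (⟪α, z.1⟫ : ℝ) = 0 then b (α, 0) else 2 * a (α, 0) / ⟪α, z.1⟫) := by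
    rw [hγ, ← mul_neg, Finset.sum_mul]
    exact Finset.sum_le_sum fun α hα =>
      mul_le_mul_of_nonneg_left (hT α hα) (h.kappa_nonneg α (h.pos_sub hα))
  have hμ2 : μ ^ 2 = barA d γ ^ 2 * q := by rw [hμ, hq]; field_simp
  have hP : 0 < 4 * (d + 2) * (d + 1) - barA d γ * V + (barA d γ * V) ^ 2 := by
    have : (0 : ℝ) ≤ d := Nat.cast_nonneg d
    nlinarith [sq_nonneg (barA d γ * V - 1 / 2)]
  have hfin : 0 < e * V ^ d * q * (4 * (d + 2) * (d + 1) - barA d γ * V + (barA d γ * V) ^ 2) := by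
    positivity
  have e3 : e * V ^ d * q * (4 * (d + 2) * (d + 1) - barA d γ * V + (barA d γ * V) ^ 2) =
      ∑ i, b (ebas d i) - γ * (4 * q * (d + 2) * V ^ (d + 1) * e) := by
    rw [hsum, hμ2]; unfold barA; ring
  linarith

/-- The barrier of centre `w`. -/
def barr (w : Ed d) (M q μ : ℝ) (z : Ed d × ℝ) : ℝ :=
  M * (Real.exp (-μ * z.2) * max 0 (1 - q * ‖z.1 - w‖ ^ 2) ^ (d + 2))

/-- Comparison of an invariant `κ`-harmonic polynomial with the barrier on a ball. -/
theorem lower_compare (h : IsRootSystem R Rp κ) {u : Ed d × ℝ → ℝ} (hu : PolySum u) (hi : GInv R u)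
    (hh : Harm R Rp κ u) {M s μ q : ℝ} (hM : 0 < M) (hs : 0 < s)
    (hq : q = 1 / s ^ 2) (hμ : μ = barA d (∑ α ∈ Rp, κ α) / s) (w : Ed d) {c ρ ε : ℝ}
    (hb : ∀ z, nsq (z - (0, c)) = ρ ^ 2 → barr w M q μ z - ε ≤ u z) :
    ∀ z, nsq (z - (0, c)) ≤ ρ ^ 2 → barr w M q μ z - ε ≤ u z := by
  have hbn : ∀ z, 0 ≤ barr w M q μ z := fun z => by unfold barr; positivity
  have hlow : ∀ z, nsq (z - (0, c)) ≤ ρ ^ 2 → -ε ≤ u z := by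
    intro z hz
    have hn := Harm.max_principle h (hu.smul (-1))
      (fun α hα z => by beta_reduce; rw [hi α hα z]) (hh.smul hu.cd (-1)) c ρ ε
      (fun z hz => by have := hb z hz; have := hbn z; linarith) z hz
    linarith
  have hcont : Continuous (barr w M q μ) := by unfold barr; fun_prop
  have hcn : Continuous fun z : Ed d × ℝ => nsq (z - (0, c)) :=
    continuous_nsq.comp (continuous_id.sub continuous_const)
  by_contra hcon
  push Not at hcon
  obtain ⟨p, hp, hpl⟩ := hcon
  obtain ⟨z0, hz0, hmin⟩ := (isCompact_nsq ((0 : Ed d), c) ρ).exists_isMinOn ⟨p, hp⟩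
    (f := fun z => u z - barr w M q μ z) (hu.cd.continuous.sub hcont).continuousOn
  have hmin' : ∀ y, nsq (y - (0, c)) ≤ ρ ^ 2 → u z0 - barr w M q μ z0 ≤ u y - barr w M q μ y :=
    fun y hy => hmin hy
  obtain ⟨σ, hσ, hch, hnear⟩ := chamber_near h w z0.1
  set z : Ed d × ℝ := (σ z0.1, z0.2) with hz
  have hzb : nsq (z - (0, c)) ≤ ρ ^ 2 := by rw [hz, nsq_group h hσ]; exact hz0
  have hq0 : 0 < q := by rw [hq]; positivity
  have hψ : barr w M q μ z0 ≤ barr w M q μ z := by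
    unfold barr
    have : ‖z.1 - w‖ ^ 2 ≤ ‖z0.1 - w‖ ^ 2 := by
      have : ‖z.1 - w‖ ≤ ‖z0.1 - w‖ := hnear
      gcongr
    have e : z.2 = z0.2 := rfl
    rw [e]
    gcongr
  have huz : u z = u z0 := hi.group hσ z0
  have hmz : ∀ y, nsq (y - (0, c)) ≤ ρ ^ 2 → u z - barr w M q μ z ≤ u y - barr w M q μ y :=
    fun y hy => by have := hmin' y hy; linarith
  have hneg : u z - barr w M q μ z < -ε := by have := hmz p hp; linarith
  have hint : nsq (z - (0, c)) < ρ ^ 2 := lt_of_le_of_ne hzb fun he => by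
    have := hb z he; linarith
  have hV : 0 < 1 - q * ‖z.1 - w‖ ^ 2 := by
    by_contra hV
    push Not at hV
    have : barr w M q μ z = 0 := by simp [barr, max_eq_left hV]
    have := hlow z hzb
    linarith
  have hloc : IsLocalMin (fun y => u y - M * (Real.exp (-μ * y.2) *
      (1 - q * ‖y.1 - w‖ ^ 2) ^ (d + 2))) z := by
    have hcV : Continuous fun y : Ed d × ℝ => 1 - q * ‖y.1 - w‖ ^ 2 := by fun_prop
    have e : ∀ y : Ed d × ℝ, 0 < 1 - q * ‖y.1 - w‖ ^ 2 → barr w M q μ y =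
        M * (Real.exp (-μ * y.2) * (1 - q * ‖y.1 - w‖ ^ 2) ^ (d + 2)) := fun y hy => by
      rw [barr, max_eq_right hy.le]
    filter_upwards [hcn.continuousAt.eventually_lt continuousAt_const hint,
      continuousAt_const.eventually_lt hcV.continuousAt hV] with y h1 h2
    have := hmz y h1.le
    rw [e z hV, e y h2] at this
    exact this
  have ht := touch h hu hi hh hloc _ _ fun v => (hasD2_barrier w q μ d z v).smul M
  exact absurd ht (not_le.2 (barrier_pos h hM hs hq hμ w z hV hch _ _ (fun v => rfl) fun v => rfl))

/-- The barrier is dominated by a multiple of the Poisson integral of the indicator of `O`. -/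
theorem barr_le_pint {A : ℝ} (hA : 0 < A) (a : ℝ) : ∃ C : ℝ, 0 < C ∧
    ∀ {O : Set (Ed d)}, MeasurableSet O → ∀ (w : Ed d) (s : ℝ), 0 < s → ball w s ⊆ O →
      ∀ z : Ed d × ℝ, 0 < z.2 →
        barr w (2 * Real.exp (A / a)) (1 / s ^ 2) (A / s) z ≤ C * pint O z := by
  obtain ⟨c, hc, hlow⟩ := pint_lower (d := d)
  refine ⟨2 * Real.exp (A / a) * ((d.factorial * (2 / A) ^ d + 2 ^ d) / c), by positivity,
    fun {O} hO w s hs hball z hz => ?_⟩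
  unfold barr
  rw [mul_assoc _ _ (pint O z)]
  refine mul_le_mul_of_nonneg_left ?_ (by positivity)
  by_cases hV : 1 - 1 / s ^ 2 * ‖z.1 - w‖ ^ 2 ≤ 0
  · rw [max_eq_left hV]
    have := pint_nonneg O hz
    simp only [ne_eq, Nat.add_eq_zero_iff, OfNat.ofNat_ne_zero, and_false, not_false_eq_true,
      zero_pow, mul_zero]
    positivity
  push Not at hV
  rw [max_eq_right hV.le]
  set n := ‖z.1 - w‖ with hn
  have hn0 : 0 ≤ n := norm_nonneg _
  have hns : n < s := by
    by_contra hcon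
    push Not at hcon
    have : 1 ≤ 1 / s ^ 2 * n ^ 2 := by
      rw [one_div, ← div_eq_inv_mul, one_le_div (by positivity)]; gcongr
    linarith
  set t := s - n with ht
  have ht0 : 0 < t := by linarith
  have hVt : 1 - 1 / s ^ 2 * n ^ 2 ≤ 2 * (t / s) := by
    have : 2 * (t / s) - (1 - 1 / s ^ 2 * n ^ 2) = ((s - n) / s) ^ 2 := by
      rw [ht]; field_simp; ring
    nlinarith [sq_nonneg ((s - n) / s)]
  have hV1 : 1 - 1 / s ^ 2 * n ^ 2 ≤ 1 := by
    have : 0 ≤ 1 / s ^ 2 * n ^ 2 := by positivity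
    linarith
  generalize 1 - 1 / s ^ 2 * n ^ 2 = V at *
  have hVd : V ^ (d + 2) ≤ V ^ d := pow_le_pow_of_le_one hV.le hV1 (by omega)
  have hb := hlow hO z.1 z.2 t hz ht0 (fun x hx => hball (by
    rw [mem_ball, dist_eq_norm] at *
    calc ‖x - w‖ ≤ ‖x - z.1‖ + ‖z.1 - w‖ := norm_sub_le_norm_sub_add_norm_sub _ _ _
      _ < s := by rw [← hn]; linarith))
  have hexp1 : Real.exp (-(A / s) * z.2) ≤ 1 := Real.exp_le_one_iff.2 (by
    have : 0 ≤ A / s * z.2 := by positivity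
    linarith)
  have key : Real.exp (-(A / s) * z.2) * V ^ (d + 2) ≤
      (d.factorial * (2 / A) ^ d + 2 ^ d) * min 1 (t / z.2) ^ d := by
    rcases le_total 1 (t / z.2) with h1 | h1
    · rw [min_eq_left h1, one_pow, mul_one]
      have : V ^ (d + 2) ≤ 1 := pow_le_one₀ hV.le hV1
      have : (1 : ℝ) ≤ 2 ^ d := one_le_pow₀ (by norm_num)
      have : (0 : ℝ) ≤ d.factorial * (2 / A) ^ d := by positivity
      have : Real.exp (-(A / s) * z.2) * V ^ (d + 2) ≤ 1 * 1 := by gcongr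
      linarith
    · rw [min_eq_right h1]
      -- `e^{-x} ≤ d! / x^d` at `x = A y / s`
      have hx : 0 < A / s * z.2 := by positivity
      have h2 := Real.pow_div_factorial_le_exp _ hx.le d
      have h3 : Real.exp (-(A / s) * z.2) ≤ d.factorial / (A / s * z.2) ^ d := by
        rw [neg_mul, Real.exp_neg, ← inv_div ((A / s * z.2) ^ d)]
        exact inv_anti₀ (by positivity) h2
      calc Real.exp (-(A / s) * z.2) * V ^ (d + 2)
          ≤ d.factorial / (A / s * z.2) ^ d * (2 * (t / s)) ^ d := by
            refine mul_le_mul h3 (hVd.trans (by gcongr)) (by positivity) (by positivity)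
        _ = d.factorial * (2 / A) ^ d * (t / z.2) ^ d := by
            simp only [mul_pow, div_pow]; field_simp
        _ ≤ _ := by
            have : (0 : ℝ) ≤ 2 ^ d := by positivity
            gcongr; linarith
  calc _ ≤ _ := key
    _ = (d.factorial * (2 / A) ^ d + 2 ^ d) / c * (c * min 1 (t / z.2) ^ d) := by field_simp
    _ ≤ _ := by
      have : (z.1, z.2) = z := rfl
      gcongr

/-- A harmonic polynomial with boundary values at least `C p - ε`, where `p` is the Poisson integral
of the indicator of `O`, is at least `2 - ε` at every `(w, r)` with `ball w (a r) ⊆ O`. The constant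
`C` depends only on `a` and the root system. -/
theorem lower_bound (h : IsRootSystem R Rp κ) {a : ℝ} (ha : 0 < a) : ∃ C : ℝ, 0 < C ∧
    ∀ {O : Set (Ed d)}, MeasurableSet O → ∀ {u : Ed d × ℝ → ℝ}, PolySum u → GInv R u →
      Harm R Rp κ u → ∀ c ρ ε : ℝ, 0 < ρ → ρ < c →
      (∀ z, nsq (z - (0, c)) = ρ ^ 2 → C * pint O z - ε ≤ u z) →
      ∀ (w : Ed d) (r : ℝ), 0 < r → ball w (a * r) ⊆ O → nsq ((w, r) - (0, c)) ≤ ρ ^ 2 →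
        2 - ε ≤ u (w, r) := by
  have hγ0 : 0 ≤ ∑ α ∈ Rp, κ α := Finset.sum_nonneg fun α hα => h.kappa_nonneg α (h.pos_sub hα)
  obtain ⟨C, hC, hle⟩ := barr_le_pint (d := d) (barA_pos hγ0) a
  refine ⟨C, hC, fun {O} hO {u} hu hi hh c ρ ε hρ hρc hb w r hr hball hw => ?_⟩
  have hs : 0 < a * r := by positivity
  have := lower_compare h hu hi hh (M := 2 * Real.exp (barA d (∑ α ∈ Rp, κ α) / a)) (by positivity)
    hs rfl rfl w (c := c) (ρ := ρ) (ε := ε) (fun z hz => by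
      have h1 := hle hO w _ hs hball z (pos_of_nsq hρ hρc hz.le)
      have h2 := hb z hz
      linarith) (w, r) hw
  have e : barr w (2 * Real.exp (barA d (∑ α ∈ Rp, κ α) / a)) (1 / (a * r) ^ 2)
      (barA d (∑ α ∈ Rp, κ α) / (a * r)) (w, r) = 2 := by
    have e1 : -(barA d (∑ α ∈ Rp, κ α) / (a * r)) * r = -(barA d (∑ α ∈ Rp, κ α) / a) := by
      field_simp
    simp only [barr, e1, sub_self, norm_zero, ne_eq, OfNat.ofNat_ne_zero, not_false_eq_true,
      zero_pow, mul_zero, sub_zero, max_eq_right (zero_le_one' ℝ), one_pow, mul_one]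
    rw [mul_assoc, ← Real.exp_add]; simp
  linarith

/-! ### The upper barrier -/

/-- The upper barrier `2Cp - (C/D)p² + K(|x - x₀|² + A y(1 - y))`, where `p` is the Poisson integral
of the indicator of `O` and `D` an upper bound of `p`. -/
def ubar (O : Set (Ed d)) (C D K A : ℝ) (x0 : Ed d) (z : Ed d × ℝ) : ℝ :=
  2 * C * pint O z - C / D * (pint O z * pint O z) +
    K * (‖z.1 - x0‖ ^ 2 + A * (z.2 - z.2 * z.2))

theorem hasD2_ubar (O : Set (Ed d)) (C D K A : ℝ) (x0 : Ed d) {z : Ed d × ℝ} (hz : 0 < z.2)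
    (v : Ed d × ℝ) : HasD2 (ubar O C D K A x0) z v
      ((2 * C - 2 * (C / D) * pint O z) * pint1 O z v +
        K * (2 * ⟪z.1 - x0, v.1⟫ + A * (v.2 * (1 - 2 * z.2))))
      ((2 * C - 2 * (C / D) * pint O z) * pint2 O z v - 2 * (C / D) * pint1 O z v ^ 2 +
        2 * K * ‖v.1‖ ^ 2 - 2 * K * A * v.2 ^ 2) := by
  have hp := hasD2_pint O hz v
  have h2 : HasD2 (fun z : Ed d × ℝ => z.2) z v v.2 0 :=
    HasD2.of_clm (ContinuousLinearMap.snd ℝ (Ed d) ℝ)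
  refine ((((hp.smul (2 * C)).sub ((hp.mul hp).smul (C / D))).add
    (((hasD2_sqdist x0 z v).add ((h2.sub (h2.mul h2)).smul A)).smul K)).congr ?_ ?_).congr_fun
    fun z => ?_
  · ring
  · ring
  · simp only [ubar]

/-- The first derivatives of the Poisson integral in root directions are controlled by the
gradient, since roots have length `√2`. -/
theorem pint1_root_sq (O : Set (Ed d)) {z : Ed d × ℝ} (hz : 0 < z.2) {α : Ed d}
    (h2 : (⟪α, α⟫ : ℝ) = 2) :
    pint1 O z (α, 0) ^ 2 ≤ 2 * ∑ i, pint1 O z (ebas d i) ^ 2 := by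
  have e : ∑ i, crd d i ((α, 0) : Ed d × ℝ) ^ 2 = 2 := by
    have := crd_root α (α, 0)
    simp only [sq]; rw [this]; exact h2
  rw [pint1_linear O hz, ← e]
  exact Finset.sum_mul_sq_le_sq_mul_sq _ _ _

/-- The upper barrier is strictly `κ`-superharmonic, in the sense tested by `touch_above`, near a
regular point `x₀`. -/
theorem ubar_neg (h : IsRootSystem R Rp κ) {O : Set (Ed d)} {C D K A δ : ℝ} (hC : 0 < C)
    (hD : 0 < D) (hδ : 0 < δ) (hK : 0 < K) (x0 : Ed d) {z : Ed d × ℝ} (hz : 0 < z.2)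
    (hp0 : 0 ≤ pint O z) (hpD : pint O z ≤ D) (hx : ‖z.1 - x0‖ ≤ 1)
    (hreg : ∀ α ∈ Rp, δ ≤ |(⟪α, z.1⟫ : ℝ)|)
    (hA : A = d + 1 + 4 * (∑ α ∈ Rp, κ α) / δ)
    (hKb : 2 * C * D * (∑ α ∈ Rp, κ α) ^ 2 / δ ^ 2 < K) (a b : Ed d × ℝ → ℝ)
    (ha : ∀ v, a v = (2 * C - 2 * (C / D) * pint O z) * pint1 O z v +
        K * (2 * ⟪z.1 - x0, v.1⟫ + A * (v.2 * (1 - 2 * z.2))))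
    (hb : ∀ v, b v = (2 * C - 2 * (C / D) * pint O z) * pint2 O z v -
        2 * (C / D) * pint1 O z v ^ 2 + 2 * K * ‖v.1‖ ^ 2 - 2 * K * A * v.2 ^ 2) :
    ∑ i, b (ebas d i) + ∑ α ∈ Rp, κ α *
      (if (⟪α, z.1⟫ : ℝ) = 0 then b (α, 0) else 2 * a (α, 0) / ⟪α, z.1⟫) < 0 := by
  set γ := ∑ α ∈ Rp, κ α with hγ
  have hγ0 : 0 ≤ γ := Finset.sum_nonneg fun α hα => h.kappa_nonneg α (h.pos_sub hα)
  set P := ∑ i, pint1 O z (ebas d i) ^ 2 with hP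
  have hP0 : 0 ≤ P := Finset.sum_nonneg fun i _ => sq_nonneg _
  have hsum : ∑ i, b (ebas d i) = -(2 * (C / D) * P) + 2 * K * (d - A) := by
    simp only [hb, Finset.sum_sub_distrib, Finset.sum_add_distrib, ← Finset.mul_sum]
    rw [pint2_sum O hz, sum_ebas_norm_sq, sum_ebas_snd_sq]
    ring
  set T := Real.sqrt (2 * P) with hT
  have hT2 : T ^ 2 = 2 * P := Real.sq_sqrt (by positivity)
  have hT0 : 0 ≤ T := Real.sqrt_nonneg _
  have hco : |2 * C - 2 * (C / D) * pint O z| ≤ 2 * C := by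
    have h1 : C / D * pint O z ≤ C := by
      rw [div_mul_eq_mul_div, div_le_iff₀ hD]; gcongr
    have h2 : 0 ≤ C / D * pint O z := by positivity
    rw [abs_le]; constructor <;> linarith
  have hterm : ∀ α ∈ Rp,
      (if (⟪α, z.1⟫ : ℝ) = 0 then b (α, 0) else 2 * a (α, 0) / ⟪α, z.1⟫) ≤
        4 * C * T / δ + 8 * K / δ := by
    intro α hα
    have hr := hreg α hα
    have h0 : (⟪α, z.1⟫ : ℝ) ≠ 0 := fun h0 => by rw [h0, abs_zero] at hr; linarith
    rw [if_neg h0]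
    have h22 := h.norm_two α (h.pos_sub hα)
    have h1 : |pint1 O z (α, 0)| ≤ T := by
      rw [hT]; exact Real.abs_le_sqrt (pint1_root_sq O hz h22)
    have hn : ‖α‖ ≤ 2 := by
      have : ‖α‖ ^ 2 = 2 := by rw [← real_inner_self_eq_norm_sq]; exact h22
      nlinarith [norm_nonneg α]
    have h3 : |(⟪z.1 - x0, α⟫ : ℝ)| ≤ 2 := by
      refine (abs_real_inner_le_norm _ _).trans ?_
      calc ‖z.1 - x0‖ * ‖α‖ ≤ 1 * 2 := by gcongr
        _ = 2 := by norm_num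
    have h4 : |a (α, 0)| ≤ 2 * C * T + 4 * K := by
      rw [ha]
      simp only [zero_mul, mul_zero, add_zero]
      refine (abs_add_le _ _).trans ?_
      rw [abs_mul, abs_mul, abs_mul, abs_of_pos hK, abs_of_pos (two_pos (α := ℝ))]
      have : |2 * C - 2 * (C / D) * pint O z| * |pint1 O z (α, 0)| ≤ 2 * C * T := by gcongr
      nlinarith
    calc 2 * a (α, 0) / ⟪α, z.1⟫ ≤ |2 * a (α, 0) / ⟪α, z.1⟫| := le_abs_self _
      _ = 2 * |a (α, 0)| / |(⟪α, z.1⟫ : ℝ)| := by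
        rw [abs_div, abs_mul, abs_of_pos (two_pos (α := ℝ))]
      _ ≤ 2 * (2 * C * T + 4 * K) / δ := by gcongr
      _ = _ := by ring
  have hS : ∑ α ∈ Rp, κ α *
      (if (⟪α, z.1⟫ : ℝ) = 0 then b (α, 0) else 2 * a (α, 0) / ⟪α, z.1⟫) ≤
        γ * (4 * C * T / δ + 8 * K / δ) := by
    rw [hγ, Finset.sum_mul]
    exact Finset.sum_le_sum fun α hα =>
      mul_le_mul_of_nonneg_left (hterm α hα) (h.kappa_nonneg α (h.pos_sub hα))
  -- absorb the first-order terms in the good term `-(C/D) T²`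
  have hamgm : γ * (4 * C * T / δ) ≤ C / D * T ^ 2 + 2 * (2 * C * D * γ ^ 2 / δ ^ 2) := by
    have e : C / D * T ^ 2 + 2 * (2 * C * D * γ ^ 2 / δ ^ 2) - γ * (4 * C * T / δ) =
        C / D * (T - 2 * D * γ / δ) ^ 2 := by field_simp; ring
    have : 0 ≤ C / D * (T - 2 * D * γ / δ) ^ 2 := by positivity
    linarith
  have e2 : 2 * K * (d - A) + γ * (8 * K / δ) = -(2 * K) := by rw [hA]; field_simp; ring
  rw [hsum]
  rw [hT2] at hamgm
  nlinarith

/-- A harmonic polynomial with boundary values at most `C p + ε`, where `p` is the Poisson integral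
of the indicator of `O`, is controlled by `2 C p` near a regular point `x₀`, up to terms vanishing at
`(x₀, 0)`. The constants do not depend on the ball. -/
theorem upper_bound (h : IsRootSystem R Rp κ) {C : ℝ} (hC : 0 < C) {x0 : Ed d}
    (hx0 : isRegular R x0) : ∃ ρ0 K A : ℝ, 0 < ρ0 ∧ 0 ≤ K ∧ 0 ≤ A ∧
    ∀ {O : Set (Ed d)}, MeasurableSet O → ∀ {u : Ed d × ℝ → ℝ}, PolySum u → GInv R u →
      Harm R Rp κ u → ∀ c ρ ε : ℝ, 0 < ρ → ρ < c →
      (∀ z, nsq (z - (0, c)) = ρ ^ 2 → u z ≤ C * pint O z + ε) →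
      ∀ z, nsq (z - (0, c)) ≤ ρ ^ 2 → ‖z.1 - x0‖ ≤ ρ0 → z.2 ≤ 1 / 2 →
        u z ≤ 2 * C * pint O z + K * (‖z.1 - x0‖ ^ 2 + A * z.2) + ε := by
  obtain ⟨δ0, hδ0, hδ⟩ : ∃ δ0 : ℝ, 0 < δ0 ∧ ∀ α ∈ Rp, δ0 ≤ |(⟪α, x0⟫ : ℝ)| := by
    rcases Rp.eq_empty_or_nonempty with he | hne
    · exact ⟨1, one_pos, by simp [he]⟩
    · obtain ⟨β, hβ, hm⟩ := Rp.exists_min_image (fun α => |(⟪α, x0⟫ : ℝ)|) hne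
      exact ⟨_, abs_pos.2 (hx0 β (h.pos_sub hβ)), hm⟩
  have hD := phi_int_pos (d := d)
  set D := ∫ t : Ed d, phi t with hDdef
  set γ := ∑ α ∈ Rp, κ α with hγ
  have hγ0 : 0 ≤ γ := Finset.sum_nonneg fun α hα => h.kappa_nonneg α (h.pos_sub hα)
  set δ := δ0 / 2 with hδd
  have hδp : 0 < δ := by positivity
  set ρ0 := min 1 (δ0 / 4) with hρ0
  have hρp : 0 < ρ0 := by rw [hρ0]; positivity
  obtain ⟨A, hA⟩ : ∃ A : ℝ, A = d + 1 + 4 * γ / δ := ⟨_, rfl⟩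
  obtain ⟨K, hK⟩ : ∃ K : ℝ, K = 2 * C * D * γ ^ 2 / δ ^ 2 + 1 + C * D / ρ0 ^ 2 + 4 * C * D :=
    ⟨_, rfl⟩
  have hA1 : 1 ≤ A := by
    have : 0 ≤ (d : ℝ) + 4 * γ / δ := by positivity
    linarith
  have hK1 : 0 ≤ 2 * C * D * γ ^ 2 / δ ^ 2 := by positivity
  have hK2 : 0 ≤ C * D / ρ0 ^ 2 := by positivity
  have hK3 : 0 < C * D := by positivity
  have hK0 : 0 < K := by linarith
  refine ⟨ρ0, K, A, hρp, hK0.le, by linarith,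
    fun {O} hO {u} hu hi hh c ρ ε hρ hρc hb => ?_⟩
  have hpos : ∀ {z : Ed d × ℝ}, nsq (z - (0, c)) ≤ ρ ^ 2 → 0 < z.2 := fun hz => pos_of_nsq hρ hρc hz
  have hp0 : ∀ {z : Ed d × ℝ}, nsq (z - (0, c)) ≤ ρ ^ 2 → 0 ≤ pint O z :=
    fun hz => pint_nonneg O (hpos hz)
  have hpD : ∀ {z : Ed d × ℝ}, nsq (z - (0, c)) ≤ ρ ^ 2 → pint O z ≤ D :=
    fun hz => pint_le hO (hpos hz)
  have hup : ∀ z, nsq (z - (0, c)) ≤ ρ ^ 2 → u z ≤ C * D + ε :=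
    Harm.max_principle h hu hi hh c ρ _ fun z hz => by
      have : C * pint O z ≤ C * D := by have := hpD hz.le; gcongr
      have := hb z hz
      linarith
  have hS1 : ∀ {z : Ed d × ℝ}, nsq (z - (0, c)) ≤ ρ ^ 2 →
      C * pint O z + K * (‖z.1 - x0‖ ^ 2 + A * (z.2 - z.2 * z.2)) ≤ ubar O C D K A x0 z := by
    intro z hz
    have h1 := hp0 hz
    have : C / D * (pint O z * pint O z) ≤ C * pint O z := by
      rw [div_mul_eq_mul_div, div_le_iff₀ hD]
      have := mul_le_mul_of_nonneg_left (hpD hz) (mul_nonneg hC.le h1)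
      linarith
    unfold ubar; linarith
  have key : ∀ z, nsq (z - (0, c)) ≤ ρ ^ 2 → ‖z.1 - x0‖ ≤ ρ0 → z.2 ≤ 1 / 2 →
      u z ≤ ubar O C D K A x0 z + ε := by
    by_contra hcon
    push Not at hcon
    obtain ⟨p, hp, hp1, hp2, hpl⟩ := hcon
    have hcn : Continuous fun z : Ed d × ℝ => nsq (z - (0, c)) :=
      continuous_nsq.comp (continuous_id.sub continuous_const)
    have hcx : Continuous fun z : Ed d × ℝ => ‖z.1 - x0‖ := by fun_prop
    set W : Set (Ed d × ℝ) := {z | nsq (z - (0, c)) ≤ ρ ^ 2} ∩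
      ({z | ‖z.1 - x0‖ ≤ ρ0} ∩ {z | z.2 ≤ 1 / 2}) with hW
    have hWc : IsCompact W := (isCompact_nsq ((0 : Ed d), c) ρ).inter_right
      ((isClosed_le hcx continuous_const).inter (isClosed_le continuous_snd continuous_const))
    have hpc : ContinuousOn (pint O) W :=
      (continuousOn_pint O).mono fun z hz => hpos hz.1
    have hSc : ContinuousOn (fun z => ubar O C D K A x0 z - u z) W := by
      refine ContinuousOn.sub ?_ hu.cd.continuous.continuousOn
      unfold ubar
      have : Continuous fun z : Ed d × ℝ => K * (‖z.1 - x0‖ ^ 2 + A * (z.2 - z.2 * z.2)) := by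
        fun_prop
      exact ((continuousOn_const.mul hpc).sub (continuousOn_const.mul (hpc.mul hpc))).add
        this.continuousOn
    obtain ⟨z, ⟨hz, hz1, hz2⟩, hmin⟩ := hWc.exists_isMinOn ⟨p, hp, hp1, hp2⟩ hSc
    simp only [Set.mem_ofPred_eq] at hz hz1 hz2
    have hmin' : ∀ y ∈ W, ubar O C D K A x0 z - u z ≤ ubar O C D K A x0 y - u y :=
      fun y hy => hmin hy
    have hneg : ubar O C D K A x0 z - u z < -ε := by
      have := hmin' p ⟨hp, hp1, hp2⟩; linarith
    have hzp := hpos hz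
    have hyy : 0 ≤ z.2 - z.2 * z.2 := by nlinarith
    have hS := hS1 hz
    have hCp : 0 ≤ C * pint O z := mul_nonneg hC.le (hp0 hz)
    have hi1 : nsq (z - (0, c)) < ρ ^ 2 := lt_of_le_of_ne hz fun he => by
      have h1 := hb z he
      have : 0 ≤ K * (‖z.1 - x0‖ ^ 2 + A * (z.2 - z.2 * z.2)) := by positivity
      linarith
    have hi2 : ‖z.1 - x0‖ < ρ0 := lt_of_le_of_ne hz1 fun he => by
      have h1 := hup z hz
      rw [he] at hS
      have h2 : C * D ≤ K * ρ0 ^ 2 := by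
        have : C * D = C * D / ρ0 ^ 2 * ρ0 ^ 2 := by field_simp
        rw [this]; gcongr; linarith
      have : 0 ≤ K * (A * (z.2 - z.2 * z.2)) := by positivity
      linarith
    have hi3 : z.2 < 1 / 2 := lt_of_le_of_ne hz2 fun he => by
      have h1 := hup z hz
      rw [he] at hS
      have h2 : 4 * (C * D) * 1 ≤ K * A := by gcongr; linarith
      have : 0 ≤ K * ‖z.1 - x0‖ ^ 2 := by positivity
      linarith
    have hloc : IsLocalMin (fun y => ubar O C D K A x0 y - u y) z := by
      filter_upwards [hcn.continuousAt.eventually_lt continuousAt_const hi1,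
        hcx.continuousAt.eventually_lt continuousAt_const hi2,
        continuous_snd.continuousAt.eventually_lt continuousAt_const hi3] with y h1 h2 h3
      exact hmin' y ⟨h1.le, h2.le, h3.le⟩
    have ht := touch_above h hu hi hh hloc _ _ fun v => hasD2_ubar O C D K A x0 hzp v
    refine absurd ht (not_le.2 (ubar_neg h hC hD hδp hK0 x0 hzp (hp0 hz) (hpD hz)
      (hz1.trans (min_le_left _ _)) (fun α hα => ?_) hA (by linarith) _ _ (fun v => rfl)
      fun v => rfl))
    have h1 := hδ α hα
    have hn : ‖α‖ ≤ 2 := by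
      have : ‖α‖ ^ 2 = 2 := by
        rw [← real_inner_self_eq_norm_sq]; exact h.norm_two α (h.pos_sub hα)
      nlinarith [norm_nonneg α]
    have h2 : |(⟪α, z.1 - x0⟫ : ℝ)| ≤ δ0 / 2 := by
      refine (abs_real_inner_le_norm _ _).trans ?_
      have := hz1.trans (min_le_right _ _)
      calc ‖α‖ * ‖z.1 - x0‖ ≤ 2 * (δ0 / 4) := by gcongr
        _ = _ := by ring
    rw [inner_sub_right] at h2
    have h3 := abs_sub_abs_le_abs_sub (⟪α, x0⟫ : ℝ) ⟪α, z.1⟫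
    rw [abs_sub_comm] at h3
    linarith
  intro z hz hz1 hz2
  have h1 := key z hz hz1 hz2
  have h2 : 0 ≤ C / D * (pint O z * pint O z) :=
    mul_nonneg (by positivity) (mul_self_nonneg _)
  have h3 : 0 ≤ K * (A * (z.2 * z.2)) := by
    have := mul_self_nonneg z.2
    positivity
  unfold ubar at h1
  linarith

/-! ### Construction of the majorant -/

theorem harm_snd : Harm R Rp κ (fun z : Ed d × ℝ => 2 * z.2) := by
  have hf : ∀ q v : Ed d × ℝ, fderiv ℝ (fun z : Ed d × ℝ => 2 * z.2) q v = 2 * v.2 := fun q v => by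
    have := ((ContinuousLinearMap.snd ℝ (Ed d) ℝ).hasFDerivAt (x := q)).const_mul (2 : ℝ)
    have e : (fun z : Ed d × ℝ => 2 * z.2) = fun z => 2 * ContinuousLinearMap.snd ℝ (Ed d) ℝ z := rfl
    rw [e, this.fderiv]; simp
  intro p _
  simp [LK, lapE, pd2, hf]

theorem ginv_snd : GInv R (fun z : Ed d × ℝ => 2 * z.2) := fun α _ z => by simp

theorem polySum_snd : PolySum (fun z : Ed d × ℝ => 2 * z.2) :=
  (PolySum.linear (ContinuousLinearMap.snd ℝ (Ed d) ℝ)).smul 2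

/-- The balls of centre `(0, n + 2)` and radius `n + 2 - 1/(n + 2)` exhaust the upper half-space. -/
theorem ball_exhaust {c ρ : ℝ} (hρ : 0 < ρ) (hρc : ρ < c) : ∀ᶠ n : ℕ in atTop,
    ∀ z : Ed d × ℝ, nsq (z - (0, c)) ≤ ρ ^ 2 →
      nsq (z - (0, (n : ℝ) + 2)) ≤ ((n : ℝ) + 2 - 1 / ((n : ℝ) + 2)) ^ 2 := by
  obtain ⟨m, hm⟩ := exists_nat_ge (c + 1 / (c - ρ))
  filter_upwards [eventually_ge_atTop m] with n hn z hz
  have hn' : (m : ℝ) ≤ n := by exact_mod_cast hn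
  have hcp : 0 < 1 / (c - ρ) := by have : 0 < c - ρ := by linarith
                                   positivity
  set N : ℝ := (n : ℝ) + 2 with hN
  have hN1 : c ≤ N := by linarith
  have hN2 : 1 / N ≤ c - ρ := by
    rw [one_div_le (by linarith) (by linarith)]; linarith
  have e : z - (0, N) = (z - (0, c)) + (0, c - N) := by ext <;> simp
  rw [e]
  refine (nsq_add_le hρ.le (sub_nonneg.2 hN1) hz (?_ : nsq _ ≤ (N - c) ^ 2)).trans ?_
  · simp only [nsq, norm_zero]; nlinarith
  · gcongr; linarith

/-- Approximating sequence: invariant harmonic polynomials trapped, on the boundary of exhausting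
balls, near a multiple of the Poisson integral of the indicator of `O`; the limit along an
ultrafilter, plus `2y`, is the required function. -/
theorem construct (h : IsRootSystem R Rp κ) {O : Set (Ed d)} (hO : IsOpen O)
    (hOi : ∀ α ∈ R, ∀ x, reflAt α x ∈ O ↔ x ∈ O) {a : ℝ} (ha : 0 < a) :
    ∃ H : Ed d × ℝ → ℝ, KHarmonicOn R Rp κ H (upperHS d) ∧ GInv R H ∧
      (∀ z, 0 < z.2 → 2 * z.2 ≤ H z) ∧
      (∀ (w : Ed d) (r : ℝ), 0 < r → ball w (a * r) ⊆ O → 2 ≤ H (w, r)) ∧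
      (∃ C : ℝ, ∀ x0, isRegular R x0 → ∃ ρ0 K A : ℝ, 0 < ρ0 ∧
        ∀ z, 0 < z.2 → ‖z.1 - x0‖ ≤ ρ0 → z.2 ≤ 1 / 2 →
          H z ≤ 2 * C * pint O z + K * (‖z.1 - x0‖ ^ 2 + A * z.2) + 2 * z.2) := by
  have hOm := hO.measurableSet
  obtain ⟨C, hC, hlow⟩ := lower_bound h ha
  have hD := phi_int_pos (d := d)
  set D := ∫ t : Ed d, phi t with hDdef
  have hN : ∀ n : ℕ, (2 : ℝ) ≤ (n : ℝ) + 2 := fun n => by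
    have : (0 : ℝ) ≤ n := Nat.cast_nonneg n
    linarith
  have hNi : ∀ n : ℕ, 0 < 1 / ((n : ℝ) + 2) := fun n => by positivity
  have hNi1 : ∀ n : ℕ, 1 / ((n : ℝ) + 2) ≤ 1 := fun n => by
    rw [div_le_one (by positivity)]; linarith [hN n]
  have hρ0 : ∀ n : ℕ, 0 < (n : ℝ) + 2 - 1 / ((n : ℝ) + 2) := fun n => by
    linarith [hN n, hNi1 n]
  have hρc : ∀ n : ℕ, (n : ℝ) + 2 - 1 / ((n : ℝ) + 2) < (n : ℝ) + 2 := fun n => by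
    linarith [hNi n]
  have hgi : GInv R (fun z => C * pint O z) := fun α hα z => by
    beta_reduce
    rw [pint_SV (h.norm_two α hα) (hOi α hα)]
  choose u hP hI hH hS using fun n : ℕ => approx_dirichlet h hgi (c := (n : ℝ) + 2)
    (ρ := (n : ℝ) + 2 - 1 / ((n : ℝ) + 2))
    (continuousOn_const.mul ((continuousOn_pint O).mono fun z hz =>
      pos_of_nsq (hρ0 n) (hρc n) (le_of_eq hz))) (hNi n)
  have hlo : ∀ (n : ℕ) z, nsq (z - (0, (n : ℝ) + 2)) ≤ ((n : ℝ) + 2 - 1 / ((n : ℝ) + 2)) ^ 2 →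
      -(1 / ((n : ℝ) + 2)) ≤ u n z := fun n z hz => by
    have hn := Harm.max_principle h ((hP n).smul (-1)) ((GInv.const (-1)).mul (hI n))
      ((hH n).smul (hP n).cd (-1)) _ _ (1 / ((n : ℝ) + 2)) (fun z hz => by
        have h1 := abs_le.1 (hS n z hz)
        have h2 := mul_nonneg hC.le (pint_nonneg O (pos_of_nsq (hρ0 n) (hρc n) (le_of_eq hz)))
        linarith) z hz
    linarith
  have hhi : ∀ (n : ℕ) z, nsq (z - (0, (n : ℝ) + 2)) ≤ ((n : ℝ) + 2 - 1 / ((n : ℝ) + 2)) ^ 2 →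
      u n z ≤ C * D + 1 / ((n : ℝ) + 2) := fun n z hz =>
    Harm.max_principle h (hP n) (hI n) (hH n) _ _ _ (fun z hz => by
      have h1 := abs_le.1 (hS n z hz)
      have h2 := mul_le_mul_of_nonneg_left
        (pint_le hOm (pos_of_nsq (hρ0 n) (hρc n) (le_of_eq hz))) hC.le
      linarith) z hz
  let U : Ultrafilter ℕ := hyperfilter ℕ
  have hU : (U : Filter ℕ) ≤ atTop := by rw [← Nat.cofinite_eq_atTop]; exact hyperfilter_le_cofinite
  let f : ℕ → Ed d × ℝ → ℝ := fun n z => u n z + 2 * z.2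
  have hfP : ∀ n, PolySum (f n) := fun n => (hP n).add polySum_snd
  have hfI : ∀ n, GInv R (f n) := fun n => (hI n).add ginv_snd
  have hfH : ∀ n, Harm R Rp κ (f n) := fun n => (hH n).add harm_snd (hP n).cd polySum_snd.cd
  have hbd : ∀ c ρ : ℝ, 0 < ρ → ρ < c → ∀ᶠ n in (U : Filter ℕ), ∀ z, nsq (z - (0, c)) ≤ ρ ^ 2 →
      |f n z| ≤ C * D + 1 + 4 * c := by
    intro c ρ hρ hρc'
    filter_upwards [hU (ball_exhaust (d := d) hρ hρc')] with n hn z hz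
    have h1 := hlo n z (hn z hz)
    have h2 := hhi n z (hn z hz)
    have h3 := pos_of_nsq hρ hρc' hz
    have h4 : z.2 - c ≤ ρ := by
      refine abs_le_of_sq_le_sq' ?_ hρ.le |>.2
      refine le_trans ?_ hz
      simp [nsq]
    have h5 := hNi1 n
    have h6 : 0 < C * D := by positivity
    simp only [f]
    rw [abs_le]; constructor <;> linarith
  have hev : ∀ z : Ed d × ℝ, 0 < z.2 → ∀ᶠ n : ℕ in (U : Filter ℕ),
      nsq (z - (0, (n : ℝ) + 2)) ≤ ((n : ℝ) + 2 - 1 / ((n : ℝ) + 2)) ^ 2 := by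
    intro z hz
    obtain ⟨c, r, hr, hrc, hzr⟩ := upper_cover hz
    filter_upwards [hU (ball_exhaust (d := d) hr hrc)] with n hn
    exact hn z hzr.le
  let H : Ed d × ℝ → ℝ := fun z => limUnder (U : Filter ℕ) fun n => f n z
  have hlim : ∀ z : Ed d × ℝ, 0 < z.2 → Tendsto (fun n => f n z) U (𝓝 (H z)) := by
    intro z hz
    refine tendsto_nhds_limUnder ?_
    obtain ⟨c, r, hr, hrc, hzr⟩ := upper_cover hz
    obtain ⟨L, -, hL⟩ := (isCompact_Icc (a := -(C * D + 1 + 4 * c)) (b := C * D + 1 + 4 * c)).ultrafilter_le_nhds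
      (U.map fun n => f n z) (by
        rw [le_principal_iff, Ultrafilter.coe_map, mem_map]
        filter_upwards [hbd c r hr hrc] with n hn
        exact abs_le.1 (hn z hzr.le))
    exact ⟨L, hL⟩
  have hHi : GInv R H := fun α hα z => by
    simp only [H]
    congr 1
    funext n
    exact hfI n α hα z
  have hinv : Tendsto (fun n : ℕ => 1 / ((n : ℝ) + 2)) U (𝓝 0) := by
    have : Tendsto (fun n : ℕ => 1 / ((n : ℝ) + 2)) atTop (𝓝 0) := by
      simp only [one_div]
      exact tendsto_inv_atTop_zero.comp
        (tendsto_atTop_add_const_right _ _ tendsto_natCast_atTop_atTop)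
    exact this.mono_left hU
  refine ⟨H, limit_harm h hfP hfI hfH (b := fun c => C * D + 1 + 4 * c) hbd hlim hHi, hHi,
    fun z hz => ?_, fun w r hr hball => ?_, C, fun x0 hx0 => ?_⟩
  · refine le_of_tendsto_of_tendsto (f := fun n : ℕ => 2 * z.2 - 1 / ((n : ℝ) + 2)) ?_ (hlim z hz) ?_
    · simpa using tendsto_const_nhds.sub hinv
    · filter_upwards [hev z hz] with n hn
      have := hlo n z hn
      simp only [f]; linarith
  · refine le_of_tendsto_of_tendsto (f := fun n : ℕ => 2 - 1 / ((n : ℝ) + 2)) ?_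
      (hlim (w, r) hr) ?_
    · simpa using tendsto_const_nhds.sub hinv
    · filter_upwards [hev (w, r) hr] with n hn
      have := hlow hOm (hP n) (hI n) (hH n) _ _ (1 / ((n : ℝ) + 2)) (hρ0 n) (hρc n)
        (fun z hz => by linarith [abs_le.1 (hS n z hz)]) w r hr hball hn
      simp only [f]; linarith
  · obtain ⟨ρ0, K, A, hρ, -, -, hup⟩ := upper_bound h hC hx0
    refine ⟨ρ0, K, A, hρ, fun z hz hz1 hz2 => ?_⟩
    refine le_of_tendsto_of_tendsto (g := fun n : ℕ => 2 * C * pint O z +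
      K * (‖z.1 - x0‖ ^ 2 + A * z.2) + 2 * z.2 + 1 / ((n : ℝ) + 2)) (hlim z hz) ?_ ?_
    · simpa using tendsto_const_nhds.add hinv
    · filter_upwards [hev z hz] with n hn
      have := hup hOm (hP n) (hI n) (hH n) _ _ (1 / ((n : ℝ) + 2)) (hρ0 n) (hρc n)
        (fun z hz => by linarith [abs_le.1 (hS n z hz)]) z hn hz1 hz2
      simp only [f]; linarith

end Aux

/-- **Lemma 4.6.** Given a `G`-invariant measurable `E ⊆ ℝ^d`, `a > 0`, and
`Ω = ⋃_{x⁰∈E} Γ_a^1(x⁰)`, there is a nonnegative `κ`-harmonic function `H` on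
`ℝ^{d+1}₊`, `G`-invariant in `x`, with `H ≥ 2` on `ℝ^{d+1}₊ ∩ ∂Ω` and with
non-tangential limit `0` at `(x,0)` for a.e. `x ∈ E`. -/
theorem exists_dunkl_harmonic_majorant
    {d : ℕ} (hd : 1 ≤ d) (R Rp : Finset (Ed d)) (κ : Ed d → ℝ)
    (hRS : IsRootSystem R Rp κ)
    (E : Set (Ed d)) (hEm : MeasurableSet E) (hEinv : GInvSet R E)
    (a : ℝ) (ha : 0 < a) :
    ∃ H : Ed d × ℝ → ℝ,
      KHarmonicOn R Rp κ H (upperHS d) ∧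
      (∀ p ∈ upperHS d, 0 ≤ H p) ∧
      (∀ σ ∈ dunklGroup R, ∀ p ∈ upperHS d, H (σ p.1, p.2) = H p) ∧
      (∀ p ∈ upperHS d ∩ frontier (⋃ x0 ∈ E, coneT a 1 x0), 2 ≤ H p) ∧
      (∀ᵐ x : Ed d, x ∈ E → ∀ b > (0 : ℝ),
        Tendsto H (𝓝[cone b x] (x, (0 : ℝ))) (𝓝 0)) := by
  have hmem : ∀ α ∈ R, ∀ x ∈ closure E, reflAt α x ∈ closure E := by
    intro α hα x hx
    have hc : Continuous (reflAt α) := by unfold reflAt; fun_prop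
    refine map_mem_closure hc hx fun y hy => ?_
    have := hEinv (rE α) (reflAt_mem_group hα)
    rw [← this]
    exact ⟨y, hy, rfl⟩
  have hOi : ∀ α ∈ R, ∀ x, reflAt α x ∈ (closure E)ᶜ ↔ x ∈ (closure E)ᶜ := by
    intro α hα x
    refine not_congr ⟨fun hx => ?_, hmem α hα x⟩
    have := hmem α hα _ hx
    rwa [refl_invol (hRS.norm_two α hα)] at this
  have hOo : IsOpen (closure E)ᶜ := isClosed_closure.isOpen_compl
  obtain ⟨H, hK, hI, hlo, h2, C, hup⟩ := construct hRS hOo hOi ha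
  refine ⟨H, hK, fun p hp => ?_, fun σ hσ p _ => hI.group hσ p, ?_, ?_⟩
  · have hp' : 0 < p.2 := hp
    have := hlo p hp'
    linarith
  · rintro p ⟨hp, hf⟩
    have hp' : 0 < p.2 := hp
    have hopen : IsOpen (⋃ x0 ∈ E, coneT a 1 x0) := by
      refine isOpen_biUnion fun x0 _ => ?_
      refine (isOpen_lt continuous_const continuous_snd).inter
        ((isOpen_lt continuous_snd continuous_const).inter
          (isOpen_lt (continuous_fst.dist continuous_const) (continuous_const.mul continuous_snd)))
    rw [hopen.frontier_eq] at hf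
    have hle : p.2 ≤ 1 := by
      have hsub : (⋃ x0 ∈ E, coneT a 1 x0) ⊆ {q : Ed d × ℝ | q.2 ≤ 1} := by
        refine Set.iUnion₂_subset fun x0 _ q hq => ?_
        exact hq.2.1.le
      exact closure_minimal hsub (isClosed_le continuous_snd continuous_const) hf.1
    -- On the top `y = 1` the bound comes from `2y`; elsewhere `p` misses every cone, so the ball of
    -- radius `a y` about `x` does not meet `closure E`.
    rcases hle.eq_or_lt with h1 | h1
    · have := hlo p hp'
      linarith
    · refine h2 p.1 p.2 hp' fun x hx hxE => ?_
      obtain ⟨y, hy, hyE⟩ := mem_closure_iff.1 hxE _ isOpen_ball hx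
      refine hf.2 (Set.mem_iUnion₂.2 ⟨y, hyE, hp', h1, ?_⟩)
      rw [dist_comm]; exact hy
  · filter_upwards [pint_fatou hOo.measurableSet, ae_regular hRS] with x hx hreg hxE b hb
    have hp := hx (fun hn => hn (subset_closure hxE)) b hb
    obtain ⟨ρ0, K, A, hρ, hle⟩ := hup x hreg
    have hpos : ∀ᶠ z in 𝓝[cone b x] (x, (0 : ℝ)), 0 < z.2 := by
      filter_upwards [self_mem_nhdsWithin] with z hz using hz.1
    have hc1 : Continuous fun z : Ed d × ℝ => ‖z.1 - x‖ := by fun_prop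
    have hn1 : ∀ᶠ z in 𝓝[cone b x] (x, (0 : ℝ)), ‖z.1 - x‖ < ρ0 :=
      eventually_nhdsWithin_of_eventually_nhds
        (hc1.continuousAt.eventually_lt continuousAt_const (by simpa using hρ))
    have hn2 : ∀ᶠ z : Ed d × ℝ in 𝓝[cone b x] (x, (0 : ℝ)), z.2 < 1 / 2 :=
      eventually_nhdsWithin_of_eventually_nhds
        (continuous_snd.continuousAt.eventually_lt continuousAt_const (by norm_num))
    have hc2 : Continuous fun z : Ed d × ℝ => K * (‖z.1 - x‖ ^ 2 + A * z.2) + 2 * z.2 := by fun_prop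
    have ht : Tendsto (fun z : Ed d × ℝ => 2 * C * pint (closure E)ᶜ z +
        (K * (‖z.1 - x‖ ^ 2 + A * z.2) + 2 * z.2)) (𝓝[cone b x] (x, (0 : ℝ))) (𝓝 0) := by
      have h3 := (hc2.tendsto (x, (0 : ℝ))).mono_left (nhdsWithin_le_nhds (s := cone b x))
      simpa using (hp.const_mul (2 * C)).add h3
    refine tendsto_of_tendsto_of_tendsto_of_le_of_le' tendsto_const_nhds ht ?_ ?_
    · filter_upwards [hpos] with z hz
      have := hlo z hz
      linarith
    · filter_upwards [hpos, hn1, hn2] with z hz hz1 hz2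
      have := hle z hz hz1.le hz2.le
      linarith

end
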